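/- Let k be a field, let Q be a connected finite acyclic Dynkin quiver with r vertices, let C be the adjacency matrix of the double quiver, let h be the Coxeter number of the underlying Dynkin diagram, and let v ∈ k^{Q_0} be a regular element, meaning that Σ_{i∈Q_0} v_i · dim_k(e_i N) ≠ 0 in k for every nonzero finite dimensional indecomposable representation N of Q over k. Then the quiver Heisenberg algebra ᵛΛ(Q), graded with arrows in degree 1 and z in degree 2, satisfies h_{ᵛΛ}(t)·(1 − Ct + t²·1)·(1 − t²) = (1 − t^{2h})·1 in the ring of r×r matrices over k[[t]]; equivalently h_{ᵛΛ}(t) = (1 − t^{2h})/((1 − Ct + t²)(1 − t²)). This holds in arbitrary characteristic. -/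

import Mathlib

/-!
STATEMENT 6: Hilbert series of the quiver Heisenberg algebra
`ᵛΛ(Q) = k[z]Q̄ / (ρ_i - v_i z e_i)` of a connected finite acyclic non-Dynkin
quiver: the graded pieces are finite dimensional and
`h_{ᵛΛ}(t) · (1 - C t + t²) · (1 - t²) = 1` over `k[[t]]`.

The algebra is presented as the quotient of the free algebra on generators
`e_i` (trivial paths, degree 0), `α`, `α*` (arrows of the double quiver,
degree 1) and a central variable `z` (degree 2) by the path-algebra
relations, the relations making `z` central, and the relations
`ρ_i = v_i z e_i`.
-/

/-- A finite quiver. -/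
structure FinQuiver where
  r : ℕ
  Arrow : Type
  [instFintypeArrow : Fintype Arrow]
  src : Arrow → Fin r
  tgt : Arrow → Fin r

attribute [instance] FinQuiver.instFintypeArrow

namespace FinQuiver

variable (Q : FinQuiver)

/-- The underlying graph of `Q` is connected. -/
def Connected : Prop :=
  ∀ i j : Fin Q.r, Relation.ReflTransGen
    (fun a b => ∃ e : Q.Arrow, (Q.src e = a ∧ Q.tgt e = b) ∨ (Q.src e = b ∧ Q.tgt e = a)) i j

/-- `Q` has no oriented cycles. -/
def Acyclic : Prop :=
  ∀ i : Fin Q.r, ¬ Relation.TransGen (fun a b => ∃ e : Q.Arrow, Q.src e = a ∧ Q.tgt e = b) i i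

/-- The Tits quadratic form of `Q` on `ℝ^{Q₀}`. -/
def titsForm (x : Fin Q.r → ℝ) : ℝ :=
  (∑ i, x i ^ 2) - ∑ e : Q.Arrow, x (Q.src e) * x (Q.tgt e)

/-- `Q` is Dynkin iff its Tits form is positive definite. -/
def IsDynkin : Prop := ∀ x : Fin Q.r → ℝ, x ≠ 0 → 0 < Q.titsForm x

/-- Adjacency matrix of `Q`. -/
def adjMatrix : Matrix (Fin Q.r) (Fin Q.r) ℕ := Matrix.of fun i j =>
  Fintype.card {e : Q.Arrow // Q.src e = i ∧ Q.tgt e = j}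

/-- Adjacency matrix `C` of the double quiver `Q̄`. -/
def doubleAdj : Matrix (Fin Q.r) (Fin Q.r) ℕ := Matrix.of fun i j =>
  Q.adjMatrix i j + Q.adjMatrix j i

end FinQuiver

/-- Generators for `k[z]Q̄`: trivial paths, arrows of the double quiver, and
the central variable `z`. -/
inductive QHGen (Q : FinQuiver) : Type
  | vert : Fin Q.r → QHGen Q
  | fwd : Q.Arrow → QHGen Q
  | bwd : Q.Arrow → QHGen Q
  | z : QHGen Q

/-- The mesh element `ρ_i = ∑_{src α = i} α α* - ∑_{tgt α = i} α* α`. -/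
noncomputable def qhMesh (k : Type) [Field k] (Q : FinQuiver) (i : Fin Q.r) :
    FreeAlgebra k (QHGen Q) :=
  (∑ e : Q.Arrow, if Q.src e = i then
      FreeAlgebra.ι k (QHGen.fwd e) * FreeAlgebra.ι k (QHGen.bwd e) else 0)
  - ∑ e : Q.Arrow, if Q.tgt e = i then
      FreeAlgebra.ι k (QHGen.bwd e) * FreeAlgebra.ι k (QHGen.fwd e) else 0

/-- Defining relations of the quiver Heisenberg algebra `ᵛΛ(Q)`:
path-algebra relations for `Q̄`, centrality of `z`, and `ρ_i = v_i z e_i`. -/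
inductive QHRel (k : Type) [Field k] (Q : FinQuiver) (v : Fin Q.r → k) :
    FreeAlgebra k (QHGen Q) → FreeAlgebra k (QHGen Q) → Prop
  | vert_idem (i : Fin Q.r) :
      QHRel k Q v (FreeAlgebra.ι k (QHGen.vert i) * FreeAlgebra.ι k (QHGen.vert i))
        (FreeAlgebra.ι k (QHGen.vert i))
  | vert_orth (i j : Fin Q.r) (h : i ≠ j) :
      QHRel k Q v (FreeAlgebra.ι k (QHGen.vert i) * FreeAlgebra.ι k (QHGen.vert j)) 0
  | vert_sum : QHRel k Q v (∑ i : Fin Q.r, FreeAlgebra.ι k (QHGen.vert i)) 1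
  | fwd_left (e : Q.Arrow) :
      QHRel k Q v (FreeAlgebra.ι k (QHGen.vert (Q.src e)) * FreeAlgebra.ι k (QHGen.fwd e))
        (FreeAlgebra.ι k (QHGen.fwd e))
  | fwd_right (e : Q.Arrow) :
      QHRel k Q v (FreeAlgebra.ι k (QHGen.fwd e) * FreeAlgebra.ι k (QHGen.vert (Q.tgt e)))
        (FreeAlgebra.ι k (QHGen.fwd e))
  | bwd_left (e : Q.Arrow) :
      QHRel k Q v (FreeAlgebra.ι k (QHGen.vert (Q.tgt e)) * FreeAlgebra.ι k (QHGen.bwd e))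
        (FreeAlgebra.ι k (QHGen.bwd e))
  | bwd_right (e : Q.Arrow) :
      QHRel k Q v (FreeAlgebra.ι k (QHGen.bwd e) * FreeAlgebra.ι k (QHGen.vert (Q.src e)))
        (FreeAlgebra.ι k (QHGen.bwd e))
  | central (g : QHGen Q) :
      QHRel k Q v (FreeAlgebra.ι k QHGen.z * FreeAlgebra.ι k g)
        (FreeAlgebra.ι k g * FreeAlgebra.ι k QHGen.z)
  | heisenberg (i : Fin Q.r) :
      QHRel k Q v (qhMesh k Q i)
        (v i • (FreeAlgebra.ι k QHGen.z * FreeAlgebra.ι k (QHGen.vert i)))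

/-- The quiver Heisenberg algebra `ᵛΛ(Q)`. -/
abbrev QHAlg (k : Type) [Field k] (Q : FinQuiver) (v : Fin Q.r → k) : Type :=
  RingQuot (QHRel k Q v)

/-- Image in `ᵛΛ(Q)` of a generator. -/
noncomputable def qhGen (k : Type) [Field k] (Q : FinQuiver) (v : Fin Q.r → k)
    (g : QHGen Q) : QHAlg k Q v :=
  RingQuot.mkAlgHom k (QHRel k Q v) (FreeAlgebra.ι k g)

/-- Degree of a generator: trivial paths 0, arrows 1, `z` 2. -/
def qhWt (Q : FinQuiver) : QHGen Q → ℕ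
  | .vert _ => 0
  | .fwd _ => 1
  | .bwd _ => 1
  | .z => 2

/-- The degree-`n` component `ᵛΛ(Q)_n`: span of images of weight-`n` monomials. -/
noncomputable def qhPiece (k : Type) [Field k] (Q : FinQuiver) (v : Fin Q.r → k)
    (n : ℕ) : Submodule k (QHAlg k Q v) :=
  Submodule.span k
    {x | ∃ l : List (QHGen Q), (l.map (qhWt Q)).sum = n ∧ x = (l.map (qhGen k Q v)).prod}

/-- The subspace `e_i ᵛΛ(Q)_n e_j`. -/
noncomputable def qhCorner (k : Type) [Field k] (Q : FinQuiver) (v : Fin Q.r → k)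
    (n : ℕ) (i j : Fin Q.r) : Submodule k (QHAlg k Q v) :=
  (qhPiece k Q v n).map
    ((LinearMap.mulLeft k (qhGen k Q v (QHGen.vert i))).comp
      (LinearMap.mulRight k (qhGen k Q v (QHGen.vert j))))

/-- The matrix Hilbert series `h_{ᵛΛ}(t)` over `k[[t]]`. -/
noncomputable def qhHilb (k : Type) [Field k] (Q : FinQuiver) (v : Fin Q.r → k) :
    Matrix (Fin Q.r) (Fin Q.r) (PowerSeries k) :=
  Matrix.of fun i j => PowerSeries.mk fun n => (Module.finrank k (qhCorner k Q v n i j) : k)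


namespace FinQuiver

/-- The integral Tits form of `Q`. -/
def titsFormZ (Q : FinQuiver) (x : Fin Q.r → ℤ) : ℤ :=
  (∑ i, x i ^ 2) - ∑ e : Q.Arrow, x (Q.src e) * x (Q.tgt e)

/-- `h` is the Coxeter number of (the underlying Dynkin graph of) `Q`:
the number of roots of the Tits form equals `r·h`. -/
def IsCoxeterNumber (Q : FinQuiver) (h : ℕ) : Prop :=
  {x : Fin Q.r → ℤ | Q.titsFormZ x = 1}.ncard = Q.r * h

end FinQuiver

/-- A representation of the quiver `Q` over `k`: a vector space at each vertex
and a linear map along each arrow. -/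
structure QuivRep (k : Type) [Field k] (Q : FinQuiver) where
  V : Fin Q.r → Type
  [instAcg : ∀ i, AddCommGroup (V i)]
  [instMod : ∀ i, Module k (V i)]
  act : ∀ e : Q.Arrow, V (Q.src e) →ₗ[k] V (Q.tgt e)

attribute [instance] QuivRep.instAcg QuivRep.instMod

/-- A subrepresentation: a collection of subspaces stable under all arrow maps. -/
structure SubQuivRep {k : Type} [Field k] {Q : FinQuiver} (N : QuivRep k Q) where
  U : ∀ i, Submodule k (N.V i)
  stable : ∀ e : Q.Arrow, (U (Q.src e)).map (N.act e) ≤ U (Q.tgt e)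

/-- `N` is indecomposable: nonzero, and not the internal direct sum of two
nonzero subrepresentations. -/
def QuivRep.Indecomposable {k : Type} [Field k] {Q : FinQuiver} (N : QuivRep k Q) : Prop :=
  (∃ i, Nontrivial (N.V i)) ∧
  ∀ U W : SubQuivRep N, (∀ i, IsCompl (U.U i) (W.U i)) →
    (∀ i, U.U i = ⊥) ∨ (∀ i, W.U i = ⊥)

/-- `v ∈ k^{Q₀}` is regular: `∑_i v_i · dim_k(e_i N) ≠ 0` for every nonzero
finite dimensional indecomposable representation `N` of `Q`. -/
def IsRegularParam (k : Type) [Field k] (Q : FinQuiver) (v : Fin Q.r → k) : Prop :=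
  ∀ N : QuivRep k Q, (∀ i, FiniteDimensional k (N.V i)) → N.Indecomposable →
    (∑ i, v i * (Module.finrank k (N.V i) : k)) ≠ 0

namespace QuiverHeisenberg

open scoped BigOperators

/-- Arrows of the double quiver. -/
abbrev DArrow (Q : FinQuiver) : Type := Q.Arrow ⊕ Q.Arrow

/-- Source of an arrow of the double quiver. -/
def dsrc (Q : FinQuiver) : DArrow Q → Fin Q.r := Sum.elim Q.src Q.tgt

/-- Target of an arrow of the double quiver. -/
def dtgt (Q : FinQuiver) : DArrow Q → Fin Q.r := Sum.elim Q.tgt Q.src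

/-- The reverse of an arrow of the double quiver. -/
def bar {Q : FinQuiver} : DArrow Q → DArrow Q := Sum.swap

/-- The sign of an arrow of the double quiver: `1` on arrows of `Q`, `-1` on reversed arrows. -/
def sgn (k : Type) [Field k] {Q : FinQuiver} : DArrow Q → k := Sum.elim (fun _ => 1) (fun _ => -1)

section

variable {Q : FinQuiver}

@[simp] lemma bar_bar (b : DArrow Q) : bar (bar b) = b := Sum.swap_swap b

@[simp] lemma dsrc_bar (b : DArrow Q) : dsrc Q (bar b) = dtgt Q b := by cases b <;> rfl

@[simp] lemma dtgt_bar (b : DArrow Q) : dtgt Q (bar b) = dsrc Q b := by cases b <;> rfl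

@[simp] lemma sgn_bar (k : Type) [Field k] (b : DArrow Q) : sgn k (bar b) = -sgn k b := by
  cases b <;> simp [sgn, bar]

@[simp] lemma sgn_mul_self (k : Type) [Field k] (b : DArrow Q) : sgn k b * sgn k b = 1 := by
  cases b <;> simp [sgn]

lemma sgn_ne_zero (k : Type) [Field k] (b : DArrow Q) : sgn k b ≠ 0 := by
  cases b <;> simp [sgn]

lemma sum_bar {M : Type*} [AddCommMonoid M] (f : DArrow Q → M) :
    ∑ b, f (bar b) = ∑ b, f b :=
  (Equiv.sumComm Q.Arrow Q.Arrow).sum_comp f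

end

variable {k : Type} [Field k] {Q : FinQuiver} {v : Fin Q.r → k}

/-- Elements of a `k`-algebra satisfying the defining relations of the quiver Heisenberg
algebra. A datum in `Module.End k X` is the same as a module structure on `X`. -/
structure Datum (v : Fin Q.r → k) (B : Type*) [Ring B] [Algebra k B] where
  E : Fin Q.r → B
  a : DArrow Q → B
  z : B
  E_mul : ∀ i j, E i * E j = if i = j then E i else 0
  E_sum : ∑ i, E i = 1
  E_a : ∀ b, E (dsrc Q b) * a b = a b
  a_E : ∀ b, a b * E (dtgt Q b) = a b
  z_E : ∀ i, z * E i = E i * z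
  z_a : ∀ b, z * a b = a b * z
  mesh : ∑ b, sgn k b • (a b * a (bar b)) = (∑ i, v i • E i) * z

namespace Datum

variable {B : Type*} [Ring B] [Algebra k B] (D : Datum v B)

lemma E_idem (i : Fin Q.r) : D.E i * D.E i = D.E i := by simp [D.E_mul]

lemma E_orth {i j : Fin Q.r} (h : i ≠ j) : D.E i * D.E j = 0 := by simp [D.E_mul, h]

/-- The element `∑ v_i e_i`. -/
noncomputable def V : B := ∑ i, v i • D.E i

lemma mesh' : ∑ b, sgn k b • (D.a b * D.a (bar b)) = D.V * D.z := D.mesh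

lemma E_a_ite (i : Fin Q.r) (b : DArrow Q) :
    D.E i * D.a b = if dsrc Q b = i then D.a b else 0 := by
  rw [← D.E_a b, ← mul_assoc, D.E_mul]
  by_cases h : i = dsrc Q b
  · simp [h]
  · simp [h, Ne.symm h]

lemma a_E_ite (b : DArrow Q) (i : Fin Q.r) :
    D.a b * D.E i = if dtgt Q b = i then D.a b else 0 := by
  conv_lhs => rw [← D.a_E b, mul_assoc, D.E_mul]
  split_ifs
  · rw [D.a_E]
  · simp

lemma V_mul_E (i : Fin Q.r) : D.V * D.E i = v i • D.E i := by
  simp [V, Finset.sum_mul, D.E_mul]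

lemma E_mul_V (i : Fin Q.r) : D.E i * D.V = v i • D.E i := by
  simp [V, Finset.mul_sum, D.E_mul]

lemma z_V : D.z * D.V = D.V * D.z := by
  simp [V, Finset.sum_mul, Finset.mul_sum, D.z_E]

/-- The image of a datum under an algebra homomorphism. -/
def map {B' : Type*} [Ring B'] [Algebra k B'] (f : B →ₐ[k] B') : Datum v B' where
  E i := f (D.E i)
  a b := f (D.a b)
  z := f D.z
  E_mul i j := by rw [← map_mul, D.E_mul]; split_ifs <;> simp
  E_sum := by rw [← map_sum, D.E_sum, map_one]
  E_a b := by rw [← map_mul, D.E_a]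
  a_E b := by rw [← map_mul, D.a_E]
  z_E i := by rw [← map_mul, D.z_E, map_mul]
  z_a b := by rw [← map_mul, D.z_a, map_mul]
  mesh := by simpa using congrArg f D.mesh

/-- Values of a datum on the generators. -/
def val : QHGen Q → B
  | .vert i => D.E i
  | .fwd e => D.a (.inl e)
  | .bwd e => D.a (.inr e)
  | .z => D.z

/-- Values of the arrow generators are indexed by the double quiver. -/
def _root_.QuiverHeisenberg.agen : DArrow Q → QHGen Q := Sum.elim .fwd .bwd

@[simp] lemma val_agen (b : DArrow Q) : D.val (agen b) = D.a b := by cases b <;> rfl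

lemma lift_rel ⦃x y : FreeAlgebra k (QHGen Q)⦄ (h : QHRel k Q v x y) :
    FreeAlgebra.lift k D.val x = FreeAlgebra.lift k D.val y := by
  cases h with
  | vert_idem i => simp [val, D.E_mul]
  | vert_orth i j h => simp [val, D.E_mul, h]
  | vert_sum => simp [val, D.E_sum]
  | fwd_left e => simp only [map_mul, FreeAlgebra.lift_ι_apply]; exact D.E_a (.inl e)
  | fwd_right e => simp only [map_mul, FreeAlgebra.lift_ι_apply]; exact D.a_E (.inl e)
  | bwd_left e => simp only [map_mul, FreeAlgebra.lift_ι_apply]; exact D.E_a (.inr e)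
  | bwd_right e => simp only [map_mul, FreeAlgebra.lift_ι_apply]; exact D.a_E (.inr e)
  | central g =>
    cases g with
    | vert i => simpa [val] using D.z_E i
    | fwd e => simpa [val] using D.z_a (.inl e)
    | bwd e => simpa [val] using D.z_a (.inr e)
    | z => simp
  | heisenberg i =>
    have h := congrArg (D.E i * ·) D.mesh'
    have h1 (e : Q.Arrow) : D.E i * D.a (.inl e) = if Q.src e = i then D.a (.inl e) else 0 :=
      D.E_a_ite i (.inl e)
    have h2 (e : Q.Arrow) : D.E i * D.a (.inr e) = if Q.tgt e = i then D.a (.inr e) else 0 :=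
      D.E_a_ite i (.inr e)
    simp only [← mul_assoc, E_mul_V, Fintype.sum_sum_type, sgn,
      Sum.elim_inl, Sum.elim_inr, bar, Sum.swap_inl, Sum.swap_inr, one_smul, neg_smul,
      Finset.sum_neg_distrib, ← sub_eq_add_neg, smul_mul_assoc] at h
    simp only [mul_sub, Finset.mul_sum, ← mul_assoc, h1, h2, ite_mul, zero_mul] at h
    simp only [qhMesh, map_sub, map_sum, apply_ite (FreeAlgebra.lift k D.val), map_mul, map_zero,
      FreeAlgebra.lift_ι_apply, map_smul, val, D.z_E]
    exact h

/-- The universal property of the quiver Heisenberg algebra. -/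
noncomputable def lift : QHAlg k Q v →ₐ[k] B :=
  RingQuot.liftAlgHom k ⟨FreeAlgebra.lift k D.val, D.lift_rel⟩

@[simp] lemma lift_gen (g : QHGen Q) : D.lift (qhGen k Q v g) = D.val g := by
  simp [lift, qhGen]

end Datum

lemma qhGen_eq {x y : FreeAlgebra k (QHGen Q)} (h : QHRel k Q v x y) :
    RingQuot.mkAlgHom k (QHRel k Q v) x = RingQuot.mkAlgHom k (QHRel k Q v) y :=
  RingQuot.mkAlgHom_rel k h

variable (v) in
/-- The tautological datum in the quiver Heisenberg algebra. -/
noncomputable def taut : Datum v (QHAlg k Q v) where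
  E i := qhGen k Q v (.vert i)
  a b := qhGen k Q v (agen b)
  z := qhGen k Q v .z
  E_mul i j := by
    split_ifs with h
    · subst h
      exact (map_mul _ _ _).symm.trans (qhGen_eq (QHRel.vert_idem (k := k) (v := v) i))
    · exact (map_mul _ _ _).symm.trans
        ((qhGen_eq (QHRel.vert_orth (k := k) (v := v) i j h)).trans (map_zero _))
  E_sum := (map_sum _ _ _).symm.trans
    ((qhGen_eq (QHRel.vert_sum (k := k) (v := v))).trans (map_one _))
  E_a b := by
    cases b with
    | inl e => exact (map_mul _ _ _).symm.trans (qhGen_eq (QHRel.fwd_left (k := k) (v := v) e))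
    | inr e => exact (map_mul _ _ _).symm.trans (qhGen_eq (QHRel.bwd_left (k := k) (v := v) e))
  a_E b := by
    cases b with
    | inl e => exact (map_mul _ _ _).symm.trans (qhGen_eq (QHRel.fwd_right (k := k) (v := v) e))
    | inr e => exact (map_mul _ _ _).symm.trans (qhGen_eq (QHRel.bwd_right (k := k) (v := v) e))
  z_E i := (map_mul _ _ _).symm.trans
    ((qhGen_eq (QHRel.central (k := k) (v := v) (.vert i))).trans (map_mul _ _ _))
  z_a b := (map_mul _ _ _).symm.trans
    ((qhGen_eq (QHRel.central (k := k) (v := v) (agen b))).trans (map_mul _ _ _))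
  mesh := by
    have h := fun i => qhGen_eq (QHRel.heisenberg (k := k) (v := v) i)
    have h' := Finset.sum_congr rfl fun i (_ : i ∈ Finset.univ) => h i
    simp only [qhMesh, map_sub, map_sum, apply_ite (RingQuot.mkAlgHom k (QHRel k Q v)), map_mul,
      map_zero, map_smul, Finset.sum_sub_distrib] at h'
    rw [Finset.sum_comm, Finset.sum_comm (s := Finset.univ (α := Fin Q.r))] at h'
    have hz := fun i => qhGen_eq (QHRel.central (k := k) (v := v) (.vert i))
    simp only [map_mul] at hz
    simp only [Finset.sum_ite_eq, Finset.mem_univ, if_true, hz] at h'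
    simp only [Fintype.sum_sum_type, sgn, Sum.elim_inl, Sum.elim_inr, agen, bar, Sum.swap_inl,
      Sum.swap_inr, one_smul, Finset.sum_mul, smul_mul_assoc]
    refine Eq.trans (congrArg₂ _ rfl ((Finset.sum_congr rfl fun e _ => neg_one_smul k _).trans
      (Finset.sum_neg_distrib _))) ?_
    rw [← sub_eq_add_neg]
    exact h'

namespace Datum

variable {B : Type*} [Ring B] [Algebra k B] (D : Datum v B)

@[simp] lemma lift_E (i : Fin Q.r) : D.lift ((taut v).E i) = D.E i := D.lift_gen _

@[simp] lemma lift_a (b : DArrow Q) : D.lift ((taut v).a b) = D.a b :=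
  (D.lift_gen (agen b)).trans (D.val_agen b)

@[simp] lemma lift_z : D.lift (taut v).z = D.z := D.lift_gen _

end Datum

variable (k v) in
/-- The image of a word in the generators. -/
noncomputable def word (l : List (QHGen Q)) : QHAlg k Q v := (l.map (qhGen k Q v)).prod

@[simp] lemma word_nil : word k v ([] : List (QHGen Q)) = 1 := rfl

@[simp] lemma word_cons (g : QHGen Q) (l : List (QHGen Q)) :
    word k v (g :: l) = qhGen k Q v g * word k v l := by simp [word]

lemma word_append (l l' : List (QHGen Q)) :
    word k v (l ++ l') = word k v l * word k v l' := by simp [word]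

variable (k v) in
lemma span_word : Submodule.span k (Set.range (word k v)) = ⊤ := by
  rw [eq_top_iff]
  rintro x -
  obtain ⟨y, rfl⟩ := RingQuot.mkAlgHom_surjective k (QHRel k Q v) x
  induction y using FreeAlgebra.induction with
  | grade0 c =>
    rw [AlgHom.commutes, Algebra.algebraMap_eq_smul_one]
    exact Submodule.smul_mem _ _ (Submodule.subset_span ⟨[], rfl⟩)
  | grade1 g => exact Submodule.subset_span ⟨[g], by simp [word, qhGen]⟩
  | mul a b ha hb =>
    rw [map_mul]
    have := Submodule.mul_mem_mul ha hb
    rw [Submodule.span_mul_span] at this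
    refine Submodule.span_mono ?_ this
    rintro _ ⟨_, ⟨l, rfl⟩, _, ⟨l', rfl⟩, rfl⟩
    exact ⟨l ++ l', word_append l l'⟩
  | add a b ha hb => rw [map_add]; exact Submodule.add_mem _ ha hb

/-- Induction principle: a subspace containing all words is everything. -/
lemma word_induction {p : QHAlg k Q v → Prop} (hw : ∀ l, p (word k v l))
    (h0 : p 0) (hadd : ∀ x y, p x → p y → p (x + y)) (hsmul : ∀ (c : k) x, p x → p (c • x)) (x) :
    p x := by
  have hx : x ∈ Submodule.span k (Set.range (word k v)) := by rw [span_word]; trivial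
  induction hx using Submodule.span_induction with
  | mem x h => obtain ⟨l, rfl⟩ := h; exact hw l
  | zero => exact h0
  | add x y _ _ h1 h2 => exact hadd x y h1 h2
  | smul c x _ h => exact hsmul c x h

/-- Induction principle: a subspace containing `1` and stable under left multiplication by the
generators is everything. -/
lemma left_induction {p : QHAlg k Q v → Prop} (h1 : p 1) (h0 : p 0)
    (hadd : ∀ x y, p x → p y → p (x + y)) (hsmul : ∀ (c : k) x, p x → p (c • x))
    (hE : ∀ i x, p x → p ((taut v).E i * x)) (ha : ∀ b x, p x → p ((taut v).a b * x))
    (hz : ∀ x, p x → p ((taut v).z * x)) (x) : p x := by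
  refine word_induction (fun l => ?_) h0 hadd hsmul x
  induction l with
  | nil => simpa using h1
  | cons g l ih =>
    rw [word_cons]
    cases g with
    | vert i => exact hE i _ ih
    | fwd e => exact ha (.inl e) _ ih
    | bwd e => exact ha (.inr e) _ ih
    | z => exact hz _ ih

lemma z_central (x : QHAlg k Q v) : (taut v).z * x = x * (taut v).z := by
  refine left_induction (p := fun x => (taut v).z * x = x * (taut v).z) (by simp) (by simp)
    (fun x y hx hy => by rw [mul_add, hx, hy, add_mul])
    (fun c x hx => by rw [mul_smul_comm, hx, smul_mul_assoc])
    (fun i x hx => ?_) (fun b x hx => ?_) (fun x hx => ?_) x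
  · rw [← mul_assoc, (taut v).z_E, mul_assoc, hx, mul_assoc]
  · rw [← mul_assoc, (taut v).z_a, mul_assoc, hx, mul_assoc]
  · rw [mul_assoc, ← hx]

end QuiverHeisenberg

namespace QuiverHeisenberg

variable {k : Type} [Field k] {Q : FinQuiver} {v : Fin Q.r → k}

section Apply

variable {X : Type*} [AddCommGroup X] [Module k X] (R : Datum v (Module.End k X))

lemma Datum.z_a_apply (b : DArrow Q) (x : X) : R.z (R.a b x) = R.a b (R.z x) :=
  LinearMap.congr_fun (R.z_a b) x

lemma Datum.z_E_apply (i : Fin Q.r) (x : X) : R.z (R.E i x) = R.E i (R.z x) :=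
  LinearMap.congr_fun (R.z_E i) x

lemma Datum.E_a_apply (b : DArrow Q) (x : X) : R.E (dsrc Q b) (R.a b x) = R.a b x :=
  LinearMap.congr_fun (R.E_a b) x

lemma Datum.a_E_apply (b : DArrow Q) (x : X) : R.a b (R.E (dtgt Q b) x) = R.a b x :=
  LinearMap.congr_fun (R.a_E b) x

lemma Datum.mesh_apply (x : X) :
    ∑ b, sgn k b • R.a b (R.a (bar b) x) = R.V (R.z x) := by
  simpa using LinearMap.congr_fun R.mesh' x

lemma Datum.E_sum_apply (x : X) : ∑ i, R.E i x = x := by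
  simpa using LinearMap.congr_fun R.E_sum x

lemma Datum.V_apply (x : X) : R.V x = ∑ i, v i • R.E i x := by
  simp [Datum.V]

lemma Datum.E_E_apply (i j : Fin Q.r) (x : X) : R.E i (R.E j x) = if i = j then R.E i x else 0 := by
  have := LinearMap.congr_fun (R.E_mul i j) x
  split_ifs with h <;> simpa [h] using this

end Apply

section Complex

variable {X Y : Type} [AddCommGroup X] [Module k X] [AddCommGroup Y] [Module k Y]

variable (k Q) in
/-- Families of linear maps indexed by the arrows of the double quiver and `z`. -/
abbrev Fam (X Y : Type) [AddCommGroup X] [Module k X] [AddCommGroup Y] [Module k Y] : Type :=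
  (DArrow Q → X →ₗ[k] Y) × (X →ₗ[k] Y)

variable (R : Datum v (Module.End k X)) (R' : Datum v (Module.End k Y))

/-- Compatibility with the vertex idempotents. -/
def IsS (F : X →ₗ[k] Y) : Prop := ∀ i x, R'.E i (F x) = F (R.E i x)

/-- Compatibility of a family with the vertex idempotents. -/
def IsK (g : Fam k Q X Y) : Prop :=
  (∀ b x, R'.E (dsrc Q b) (g.1 b x) = g.1 b x) ∧ (∀ b x, g.1 b (R.E (dtgt Q b) x) = g.1 b x) ∧
    IsS R R' g.2

/-- The first differential of the complex computing self-extensions. -/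
noncomputable def d0 : (X →ₗ[k] Y) →ₗ[k] Fam k Q X Y where
  toFun F := (fun b => R'.a b ∘ₗ F - F ∘ₗ R.a b, R'.z ∘ₗ F - F ∘ₗ R.z)
  map_add' F G := by
    ext <;> simp <;> abel
  map_smul' c F := by
    ext <;> simp [smul_sub]

/-- The second differential of the complex computing self-extensions. -/
noncomputable def d1 : Fam k Q X Y →ₗ[k] Fam k Q X Y where
  toFun g := (fun b => R'.z ∘ₗ g.1 b - g.1 b ∘ₗ R.z + g.2 ∘ₗ R.a b - R'.a b ∘ₗ g.2,
    R'.V ∘ₗ g.2 - ∑ b, sgn k b • (g.1 b ∘ₗ R.a (bar b) + R'.a b ∘ₗ g.1 (bar b)))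
  map_add' g g' := by
    refine Prod.ext (funext fun b => ?_) ?_
    · simp only [Prod.snd_add, Prod.fst_add, Pi.add_apply, LinearMap.comp_add, LinearMap.add_comp]
      abel
    · simp only [Prod.snd_add, Prod.fst_add, Pi.add_apply, LinearMap.comp_add, LinearMap.add_comp,
        smul_add, Finset.sum_add_distrib]
      abel
  map_smul' c g := by
    refine Prod.ext (funext fun b => ?_) ?_
    · simp [smul_sub, LinearMap.comp_smul, LinearMap.smul_comp]
    · simp [smul_sub, smul_add, Finset.smul_sum, smul_comm c, LinearMap.comp_smul,
        LinearMap.smul_comp, -Fintype.sum_sum_type]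

@[simp] lemma d0_fst (F : X →ₗ[k] Y) (b : DArrow Q) (x : X) :
    (d0 R R' F).1 b x = R'.a b (F x) - F (R.a b x) := rfl

@[simp] lemma d0_snd (F : X →ₗ[k] Y) (x : X) :
    (d0 R R' F).2 x = R'.z (F x) - F (R.z x) := rfl

@[simp] lemma d1_fst (g : Fam k Q X Y) (b : DArrow Q) (x : X) :
    (d1 R R' g).1 b x = R'.z (g.1 b x) - g.1 b (R.z x) + g.2 (R.a b x) - R'.a b (g.2 x) := rfl

@[simp] lemma d1_snd (g : Fam k Q X Y) (x : X) :
    (d1 R R' g).2 x = R'.V (g.2 x) -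
      ∑ b, sgn k b • (g.1 b (R.a (bar b) x) + R'.a b (g.1 (bar b) x)) := by
  simp [d1]

lemma Fam.ext' {g g' : Fam k Q X Y} (h1 : ∀ b x, g.1 b x = g'.1 b x) (h2 : ∀ x, g.2 x = g'.2 x) :
    g = g' :=
  Prod.ext (funext fun b => LinearMap.ext (h1 b)) (LinearMap.ext h2)

variable {R R'}

lemma IsS.V {F : X →ₗ[k] Y} (hF : IsS R R' F) (x : X) : R'.V (F x) = F (R.V x) := by
  simp [Datum.V_apply, hF _ _]

lemma d1_d0 {F : X →ₗ[k] Y} (hF : IsS R R' F) : d1 R R' (d0 R R' F) = 0 := by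
  refine Fam.ext' (fun b x => ?_) fun x => ?_
  · simp [R.z_a_apply, R'.z_a_apply]
    abel
  · have h1 := R.mesh_apply x
    have h2 := R'.mesh_apply (F x)
    simp only [d1_snd, d0_snd, d0_fst, map_sub, hF.V, smul_add, smul_sub, Finset.sum_add_distrib,
      Finset.sum_sub_distrib, h2]
    have h3 : F (R.V (R.z x)) = ∑ b, sgn k b • F (R.a b (R.a (bar b) x)) := by
      rw [← h1, map_sum]; simp
    simp [h3]

lemma IsK.d1 {g : Fam k Q X Y} (hg : IsK R R' g) : IsK R R' (d1 R R' g) := by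
  obtain ⟨h1, h2, h3⟩ := hg
  refine ⟨fun b x => ?_, fun b x => ?_, fun i x => ?_⟩
  · simp [R'.E_a_apply, h1, ← R'.z_E_apply, h3 _ _, R.E_a_apply]
  · simp [R.a_E_apply, h2, R.z_E_apply, ← h3 _ x, R'.a_E_apply]
  · have e1 (b) : R'.E i (g.1 b (R.a (bar b) x)) = g.1 b (R.a (bar b) (R.E i x)) := by
      rw [← h1, R'.E_E_apply]
      have := LinearMap.congr_fun (R.a_E_ite (bar b) i) x
      simp only [Module.End.mul_apply, dtgt_bar] at this
      rw [this]
      by_cases h : dsrc Q b = i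
      · subst h; simpa using h1 b _
      · simp [h, Ne.symm h]
    have e2 (b) : R'.E i (R'.a b (g.1 (bar b) x)) = R'.a b (g.1 (bar b) (R.E i x)) := by
      rw [← h2 (bar b) (R.E i x), R.E_E_apply]
      have := LinearMap.congr_fun (R'.E_a_ite i b) (g.1 (bar b) x)
      simp only [Module.End.mul_apply] at this
      rw [this, dtgt_bar]
      by_cases h : dsrc Q b = i
      · subst h; simpa using congrArg (R'.a b) (h2 (bar b) x).symm
      · simp [h]
    have e3 (y) : R'.E i (R'.V y) = R'.V (R'.E i y) := by
      rw [← Module.End.mul_apply, ← Module.End.mul_apply, R'.V_mul_E, R'.E_mul_V]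
    simp [e1, e2, e3, h3 _ _]

variable (R R')

/-- The projection onto `S`-linear maps. -/
noncomputable def projS : (X →ₗ[k] Y) →ₗ[k] (X →ₗ[k] Y) where
  toFun F := ∑ i, R'.E i ∘ₗ F ∘ₗ R.E i
  map_add' F G := by simp [LinearMap.comp_add, LinearMap.add_comp, Finset.sum_add_distrib]
  map_smul' c F := by simp [LinearMap.comp_smul, LinearMap.smul_comp, Finset.smul_sum]

@[simp] lemma projS_apply (F : X →ₗ[k] Y) (x : X) :
    projS R R' F x = ∑ i, R'.E i (F (R.E i x)) := by
  simp [projS]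

/-- The projection onto families compatible with the vertex idempotents. -/
noncomputable def projK : Fam k Q X Y →ₗ[k] Fam k Q X Y where
  toFun g := (fun b => R'.E (dsrc Q b) ∘ₗ g.1 b ∘ₗ R.E (dtgt Q b), projS R R' g.2)
  map_add' F G := by
    refine Prod.ext (funext fun b => ?_) ?_
    · simp [LinearMap.comp_add, LinearMap.add_comp]
    · simp
  map_smul' c F := by
    refine Prod.ext (funext fun b => ?_) ?_
    · simp [LinearMap.comp_smul, LinearMap.smul_comp]
    · simp

@[simp] lemma projK_fst (g : Fam k Q X Y) (b : DArrow Q) (x : X) :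
    (projK R R' g).1 b x = R'.E (dsrc Q b) (g.1 b (R.E (dtgt Q b) x)) := rfl

@[simp] lemma projK_snd (g : Fam k Q X Y) : (projK R R' g).2 = projS R R' g.2 := rfl

lemma isS_projS (F : X →ₗ[k] Y) : IsS R R' (projS R R' F) := by
  intro i x
  simp [R'.E_E_apply, R.E_E_apply, apply_ite F, apply_ite (R'.E _)]

lemma isK_projK (g : Fam k Q X Y) : IsK R R' (projK R R' g) := by
  refine ⟨fun b x => ?_, fun b x => ?_, isS_projS R R' g.2⟩ <;>
  simp [R'.E_E_apply, R.E_E_apply]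

variable {R R'}

lemma IsS.projS_eq {F : X →ₗ[k] Y} (hF : IsS R R' F) : projS R R' F = F := by
  ext x
  simp [hF _ _, R.E_E_apply, ← map_sum, R.E_sum_apply]

lemma IsK.projK_eq {g : Fam k Q X Y} (hg : IsK R R' g) : projK R R' g = g := by
  refine Prod.ext (funext fun b => LinearMap.ext fun x => ?_) hg.2.2.projS_eq
  simp [hg.1, hg.2.1]

end Complex

section Pairing

open LinearMap (trace)

variable {X Y : Type} [AddCommGroup X] [Module k X] [AddCommGroup Y] [Module k Y]

/-- The trace pairing between families `X → Y` and families `Y → X`. -/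
noncomputable def pair (g : Fam k Q X Y) (u : Fam k Q Y X) : k :=
  ∑ b, sgn k b * trace k Y (g.1 b ∘ₗ u.1 (bar b)) + trace k Y (g.2 ∘ₗ u.2)

lemma pair_zero_right (g : Fam k Q X Y) : pair g (0 : Fam k Q Y X) = 0 := by
  simp [pair]

variable [FiniteDimensional k X] [FiniteDimensional k Y]

lemma tr_comm (f : X →ₗ[k] Y) (g : Y →ₗ[k] X) :
    trace k Y (f ∘ₗ g) = trace k X (g ∘ₗ f) := LinearMap.trace_comp_comm' g f

lemma tr_cyc {W : Type} [AddCommGroup W] [Module k W] [FiniteDimensional k W]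
    (p : Y →ₗ[k] X) (q : W →ₗ[k] Y) (r : X →ₗ[k] W) :
    trace k X (p ∘ₗ (q ∘ₗ r)) = trace k Y (q ∘ₗ (r ∘ₗ p)) :=
  LinearMap.trace_comp_comm' (q ∘ₗ r) p

omit [FiniteDimensional k X] [FiniteDimensional k Y] in
lemma comp_sum' {ι W : Type} [AddCommGroup W] [Module k W] (s : Finset ι) (p : Y →ₗ[k] W)
    (q : ι → X →ₗ[k] Y) : p ∘ₗ ∑ i ∈ s, q i = ∑ i ∈ s, p ∘ₗ q i := by
  ext x; simp

lemma exists_trace_eq (l : (X →ₗ[k] Y) →ₗ[k] k) :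
    ∃ g : Y →ₗ[k] X, ∀ f, l f = trace k X (g ∘ₗ f) := by
  let T : (Y →ₗ[k] X) →ₗ[k] Module.Dual k (X →ₗ[k] Y) :=
    (LinearMap.compr₂ (LinearMap.llcomp k X Y X) (trace k X))
  have hT : Function.Injective T := by
    refine (injective_iff_map_eq_zero T).2 fun g hg => ?_
    ext y
    by_contra hne
    obtain ⟨ξ, hξ⟩ := Module.Projective.exists_dual_ne_zero k hne
    have h := LinearMap.congr_fun hg (ξ.smulRight y)
    have h' : g ∘ₗ ξ.smulRight y = ξ.smulRight (g y) := by ext; simp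
    have h2 : trace k X (g ∘ₗ ξ.smulRight y) = 0 := h
    rw [h', LinearMap.trace_smulRight] at h2
    exact hξ h2
  have hs : Function.Surjective T := by
    refine (LinearMap.injective_iff_surjective_of_finrank_eq_finrank ?_).1 hT
    rw [Subspace.dual_finrank_eq, Module.finrank_linearMap, Module.finrank_linearMap, mul_comm]
  obtain ⟨g, hg⟩ := hs l
  exact ⟨g, fun f => by rw [← hg]; rfl⟩

lemma exists_pair_eq (l : Fam k Q X Y →ₗ[k] k) :
    ∃ g : Fam k Q Y X, ∀ u, l u = pair g u := by
  classical
  choose g hg using fun b : DArrow Q => exists_trace_eq (l ∘ₗ LinearMap.inl k _ _ ∘ₗ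
    LinearMap.single k (fun _ : DArrow Q => X →ₗ[k] Y) b)
  obtain ⟨g0, hg0⟩ := exists_trace_eq (l ∘ₗ LinearMap.inr k (DArrow Q → X →ₗ[k] Y) _)
  refine ⟨(fun b => sgn k b • g (bar b), g0), fun u => ?_⟩
  have hu : u = ∑ b, LinearMap.inl k _ _ (LinearMap.single k (fun _ : DArrow Q => X →ₗ[k] Y) b
      (u.1 b)) + LinearMap.inr k _ _ u.2 := by
    rw [← map_sum]
    refine Prod.ext ?_ ?_
    · funext b
      simp [-Fintype.sum_sum_type, Prod.fst_sum, Finset.sum_apply, Pi.single_apply]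
    · simp
  conv_lhs => rw [hu, map_add, map_sum]
  have h0 : l (LinearMap.inr k _ _ u.2) = trace k X (g0 ∘ₗ u.2) := hg0 u.2
  have h1 (b) : l (LinearMap.inl k _ _ (LinearMap.single k (fun _ : DArrow Q => X →ₗ[k] Y) b
      (u.1 b))) = trace k X (g b ∘ₗ u.1 b) := hg b (u.1 b)
  rw [h0, Finset.sum_congr rfl fun b _ => h1 b, pair]
  congr 1
  rw [← sum_bar]
  refine Finset.sum_congr rfl fun b _ => ?_
  rw [LinearMap.smul_comp, map_smul, smul_eq_mul, ← mul_assoc, sgn_mul_self, one_mul]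

lemma eq_zero_of_pair_right (u : Fam k Q Y X) (h : ∀ g : Fam k Q X Y, pair g u = 0) : u = 0 := by
  by_contra hne
  obtain ⟨l, hl⟩ := Module.Projective.exists_dual_ne_zero k hne
  obtain ⟨g, hg⟩ := exists_pair_eq l
  exact hl ((hg u).trans (h g))

variable (R : Datum v (Module.End k X)) (R' : Datum v (Module.End k Y))

omit [FiniteDimensional k X] in
lemma pair_projK (g : Fam k Q X Y) (u : Fam k Q Y X) :
    pair (projK R R' g) u = pair g (projK R' R u) := by
  unfold pair
  congr 1
  · refine Finset.sum_congr rfl fun b _ => congrArg _ ?_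
    have e1 : (projK R R' g).1 b ∘ₗ u.1 (bar b) =
      R'.E (dsrc Q b) ∘ₗ (g.1 b ∘ₗ R.E (dtgt Q b) ∘ₗ u.1 (bar b)) := rfl
    have e2 : g.1 b ∘ₗ (projK R' R u).1 (bar b) =
      (g.1 b ∘ₗ R.E (dtgt Q b) ∘ₗ u.1 (bar b)) ∘ₗ R'.E (dsrc Q b) := by
      ext x; simp
    rw [e1, e2, LinearMap.trace_comp_comm']
  · have e1 : (projK R R' g).2 ∘ₗ u.2 =
      ∑ i, R'.E i ∘ₗ (g.2 ∘ₗ R.E i ∘ₗ u.2) := by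
      ext x; simp
    have e2 : g.2 ∘ₗ (projK R' R u).2 =
      ∑ i, (g.2 ∘ₗ R.E i ∘ₗ u.2) ∘ₗ R'.E i := by
      ext x; simp
    rw [e1, e2, map_sum, map_sum]
    exact Finset.sum_congr rfl fun i _ => LinearMap.trace_comp_comm' _ _

variable {R R'}

lemma pair_d1 {g : Fam k Q X Y} {g' : Fam k Q Y X} (hg : IsK R R' g) :
    pair g' (d1 R R' g) = pair g (d1 R' R g') := by
  have hL : pair g' (d1 R R' g) = ∑ b, sgn k b * (
      trace k X (g'.1 b ∘ₗ (R'.z ∘ₗ g.1 (bar b))) - trace k X (g'.1 b ∘ₗ (g.1 (bar b) ∘ₗ R.z)) +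
      (trace k X (g'.1 b ∘ₗ (g.2 ∘ₗ R.a (bar b))) - trace k X (g'.1 b ∘ₗ (R'.a (bar b) ∘ₗ g.2))))
      + (trace k X (g'.2 ∘ₗ (R'.V ∘ₗ g.2)) - ∑ b, sgn k b * (
        trace k X (g'.2 ∘ₗ (g.1 b ∘ₗ R.a (bar b))) +
        trace k X (g'.2 ∘ₗ (R'.a b ∘ₗ g.1 (bar b))))) := by
    simp only [pair, d1, LinearMap.coe_mk, AddHom.coe_mk, LinearMap.comp_add, LinearMap.comp_sub,
      map_add, map_sub, LinearMap.comp_smul, comp_sum', map_sum, map_smul, smul_eq_mul]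
    simp only [add_sub_assoc]
  have hR : pair g (d1 R' R g') = ∑ b, sgn k b * (
      trace k Y (g.1 b ∘ₗ (R.z ∘ₗ g'.1 (bar b))) - trace k Y (g.1 b ∘ₗ (g'.1 (bar b) ∘ₗ R'.z)) +
      (trace k Y (g.1 b ∘ₗ (g'.2 ∘ₗ R'.a (bar b))) - trace k Y (g.1 b ∘ₗ (R.a (bar b) ∘ₗ g'.2))))
      + (trace k Y (g.2 ∘ₗ (R.V ∘ₗ g'.2)) - ∑ b, sgn k b * (
        trace k Y (g.2 ∘ₗ (g'.1 b ∘ₗ R'.a (bar b))) +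
        trace k Y (g.2 ∘ₗ (R.a b ∘ₗ g'.1 (bar b))))) := by
    simp only [pair, d1, LinearMap.coe_mk, AddHom.coe_mk, LinearMap.comp_add, LinearMap.comp_sub,
      map_add, map_sub, LinearMap.comp_smul, comp_sum', map_sum, map_smul, smul_eq_mul]
    simp only [add_sub_assoc]
  have hV : trace k X (g'.2 ∘ₗ (R'.V ∘ₗ g.2)) = trace k Y (g.2 ∘ₗ (R.V ∘ₗ g'.2)) := by
    have : R'.V ∘ₗ g.2 = g.2 ∘ₗ R.V := LinearMap.ext fun x => hg.2.2.V x
    rw [this, ← LinearMap.comp_assoc, ← LinearMap.comp_assoc, LinearMap.trace_comp_comm',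
      ← LinearMap.comp_assoc, tr_comm, LinearMap.comp_assoc]
  have s1 : ∑ b, sgn k b * trace k X (g'.1 b ∘ₗ (R'.z ∘ₗ g.1 (bar b))) =
      - ∑ b, sgn k b * trace k Y (g.1 b ∘ₗ (g'.1 (bar b) ∘ₗ R'.z)) := by
    rw [← sum_bar, ← Finset.sum_neg_distrib]
    refine Finset.sum_congr rfl fun b _ => ?_
    rw [sgn_bar, bar_bar, tr_cyc, tr_cyc, neg_mul]
  have s2 : ∑ b, sgn k b * trace k X (g'.1 b ∘ₗ (g.1 (bar b) ∘ₗ R.z)) =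
      - ∑ b, sgn k b * trace k Y (g.1 b ∘ₗ (R.z ∘ₗ g'.1 (bar b))) := by
    rw [← sum_bar, ← Finset.sum_neg_distrib]
    refine Finset.sum_congr rfl fun b _ => ?_
    rw [sgn_bar, bar_bar, tr_cyc, neg_mul]
  have s3 : ∑ b, sgn k b * trace k X (g'.1 b ∘ₗ (g.2 ∘ₗ R.a (bar b))) =
      - ∑ b, sgn k b * trace k Y (g.2 ∘ₗ (R.a b ∘ₗ g'.1 (bar b))) := by
    rw [← sum_bar, ← Finset.sum_neg_distrib]
    refine Finset.sum_congr rfl fun b _ => ?_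
    rw [sgn_bar, bar_bar, tr_cyc, neg_mul]
  have s4 : ∑ b, sgn k b * trace k X (g'.1 b ∘ₗ (R'.a (bar b) ∘ₗ g.2)) =
      ∑ b, sgn k b * trace k Y (g.2 ∘ₗ (g'.1 b ∘ₗ R'.a (bar b))) := by
    refine Finset.sum_congr rfl fun b _ => ?_
    rw [tr_cyc, tr_cyc]
  have s5 : ∑ b, sgn k b * trace k X (g'.2 ∘ₗ (g.1 b ∘ₗ R.a (bar b))) =
      ∑ b, sgn k b * trace k Y (g.1 b ∘ₗ (R.a (bar b) ∘ₗ g'.2)) := by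
    refine Finset.sum_congr rfl fun b _ => ?_
    rw [tr_cyc]
  have s6 : ∑ b, sgn k b * trace k X (g'.2 ∘ₗ (R'.a b ∘ₗ g.1 (bar b))) =
      - ∑ b, sgn k b * trace k Y (g.1 b ∘ₗ (g'.2 ∘ₗ R'.a (bar b))) := by
    rw [← sum_bar, ← Finset.sum_neg_distrib]
    refine Finset.sum_congr rfl fun b _ => ?_
    rw [sgn_bar, bar_bar, tr_cyc, tr_cyc, neg_mul]
  rw [hL, hR]
  simp only [mul_add, mul_sub, Finset.sum_add_distrib, Finset.sum_sub_distrib]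
  linear_combination s1 - s2 + s3 - s4 + hV - s5 - s6

end Pairing

end QuiverHeisenberg

namespace QuiverHeisenberg

variable {k : Type} [Field k] {Q : FinQuiver} {v : Fin Q.r → k}

section Extension

variable {X Y : Type} [AddCommGroup X] [Module k X] [AddCommGroup Y] [Module k Y]
  {R : Datum v (Module.End k X)} {R' : Datum v (Module.End k Y)}

/-- The extension of modules defined by a cocycle. -/
noncomputable def extension (g : Fam k Q X Y) (hg : IsK R R' g) (hd : d1 R R' g = 0) :
    Datum v (Module.End k (Y × X)) where
  E i := LinearMap.prodMap (R'.E i) (R.E i)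
  a b := LinearMap.prodMap (R'.a b) (R.a b) + LinearMap.inl k Y X ∘ₗ g.1 b ∘ₗ LinearMap.snd k Y X
  z := LinearMap.prodMap R'.z R.z + LinearMap.inl k Y X ∘ₗ g.2 ∘ₗ LinearMap.snd k Y X
  E_mul i j := by
    refine LinearMap.ext fun p => ?_
    split_ifs with h <;> simp [R.E_E_apply, R'.E_E_apply, h]
  E_sum := by
    refine LinearMap.ext fun p => ?_
    simp only [LinearMap.sum_apply, LinearMap.prodMap_apply, Module.End.one_apply]
    exact Prod.ext (by simp [Prod.fst_sum, R'.E_sum_apply]) (by simp [Prod.snd_sum, R.E_sum_apply])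
  E_a b := by
    refine LinearMap.ext fun p => ?_
    simp [R.E_a_apply, R'.E_a_apply, hg.1]
  a_E b := by
    refine LinearMap.ext fun p => ?_
    simp [R.a_E_apply, R'.a_E_apply, hg.2.1]
  z_E i := by
    refine LinearMap.ext fun p => ?_
    simp [R.z_E_apply, R'.z_E_apply, hg.2.2 _ _]
  z_a b := by
    refine LinearMap.ext fun p => ?_
    have h := LinearMap.congr_fun (congrFun (congrArg Prod.fst hd) b) p.2
    simp only [d1_fst, Prod.fst_zero, Pi.zero_apply, LinearMap.zero_apply] at h
    refine Prod.ext ?_ ?_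
    · simp [R'.z_a_apply]
      rw [sub_eq_zero, sub_add_eq_add_sub, sub_eq_iff_eq_add] at h
      rw [add_assoc, h, add_assoc]
    · simp [R.z_a_apply]
  mesh := by
    have hV : (∑ i, v i • LinearMap.prodMap (R'.E i) (R.E i)) = LinearMap.prodMap R'.V R.V := by
      refine LinearMap.ext fun p => Prod.ext ?_ ?_ <;>
      simp [Datum.V, Prod.fst_sum, Prod.snd_sum]
    rw [hV]
    refine LinearMap.ext fun p => Prod.ext ?_ ?_
    · have h := LinearMap.congr_fun (congrArg Prod.snd hd) p.2
      simp only [d1_snd, Prod.snd_zero, LinearMap.zero_apply, sub_eq_zero, smul_add,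
        Finset.sum_add_distrib] at h
      simp only [LinearMap.sum_apply, Prod.fst_sum, LinearMap.smul_apply, Module.End.mul_apply,
        LinearMap.add_apply, LinearMap.prodMap_apply, LinearMap.comp_apply, LinearMap.snd_apply,
        LinearMap.inl_apply, Prod.fst_add, Prod.smul_fst, map_add, smul_add,
        Finset.sum_add_distrib, R'.mesh_apply, add_zero, h, map_zero]
      abel
    · simpa [Prod.snd_sum, -Fintype.sum_sum_type] using R.mesh_apply p.2

end Extension

variable (v) in
/-- The regular representation. -/
noncomputable def reg : Datum v (Module.End k (QHAlg k Q v)) := (taut v).map (Algebra.lmul k _)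

@[simp] lemma reg_E (i : Fin Q.r) (x : QHAlg k Q v) : (reg v).E i x = (taut v).E i * x := rfl
@[simp] lemma reg_a (b : DArrow Q) (x : QHAlg k Q v) : (reg v).a b x = (taut v).a b * x := rfl
@[simp] lemma reg_z (x : QHAlg k Q v) : (reg v).z x = (taut v).z * x := rfl
@[simp] lemma reg_V (x : QHAlg k Q v) : (reg v).V x = (taut v).V * x := by
  simp [Datum.V, Finset.sum_mul]

section Exactness

variable {Y : Type} [AddCommGroup Y] [Module k Y] {R' : Datum v (Module.End k Y)}

/-- Self-extension cocycles on the regular representation are coboundaries. -/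
lemma exists_d0_of_d1_eq_zero {g : Fam k Q (QHAlg k Q v) Y} (hg : IsK (reg v) R' g)
    (hd : d1 (reg v) R' g = 0) : ∃ F, IsS (reg v) R' F ∧ d0 (reg v) R' F = g := by
  set τ := (extension g hg hd).lift with hτ
  have hsnd (x y : QHAlg k Q v) : (τ x (0, y)).2 = x * y := by
    refine left_induction (p := fun x => ∀ y, (τ x (0, y)).2 = x * y) (by simp) (by simp) ?_ ?_ ?_
      ?_ ?_ x y
    · intro a b ha hb y; simp [ha, hb, add_mul]
    · intro c a ha y; simp [ha]
    · intro i x hx y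
      rw [map_mul, hτ, Datum.lift_E, ← hτ]; simp [extension, hx, mul_assoc]
    · intro i x hx y
      rw [map_mul, hτ, Datum.lift_a, ← hτ]; simp [extension, hx, mul_assoc]
    · intro x hx y
      rw [map_mul, hτ, Datum.lift_z, ← hτ]; simp [extension, hx, mul_assoc]
  let F : QHAlg k Q v →ₗ[k] Y :=
    { toFun := fun x => (τ x (0, 1)).1
      map_add' := fun x y => by simp
      map_smul' := fun c x => by simp }
  have hF (x) : F x = (τ x (0, 1)).1 := rfl
  refine ⟨-F, fun i x => ?_, Fam.ext' (fun b x => ?_) fun x => ?_⟩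
  · simp only [LinearMap.neg_apply, map_neg, hF, reg_E, map_mul]
    rw [hτ, Datum.lift_E, ← hτ]; simp [extension]
  · rw [d0_fst]
    simp only [LinearMap.neg_apply, map_neg, hF, reg_a, map_mul]
    rw [hτ, Datum.lift_a, ← hτ]; simp [extension, hsnd]
  · rw [d0_snd]
    simp only [LinearMap.neg_apply, map_neg, hF, reg_z, map_mul]
    rw [hτ, Datum.lift_z, ← hτ]; simp [extension, hsnd]

variable [FiniteDimensional k (QHAlg k Q v)] [FiniteDimensional k Y]

/-- Duality: a family orthogonal to all coboundaries is in the image of `d1`. -/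
lemma exists_d1_of_orthogonal {u : Fam k Q Y (QHAlg k Q v)} (hu : IsK R' (reg v) u)
    (ho : ∀ F, IsS (reg v) R' F → pair (d0 (reg v) R' F) u = 0) :
    ∃ g, IsK R' (reg v) g ∧ d1 R' (reg v) g = u := by
  by_contra hne
  have hu' : u ∉ LinearMap.range (d1 R' (reg v) ∘ₗ projK R' (reg v)) := by
    rintro ⟨g, hg⟩
    exact hne ⟨_, isK_projK _ _ g, hg⟩
  obtain ⟨l, hl, hl'⟩ := Submodule.exists_dual_map_eq_bot_of_notMem (R := k)
    (M := Fam k Q Y (QHAlg k Q v)) hu' inferInstance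
  obtain ⟨g', hg'⟩ := exists_pair_eq l
  have h0 : d1 (reg v) R' (projK (reg v) R' g') = 0 := by
    refine eq_zero_of_pair_right _ fun g => ?_
    rw [← (isK_projK (reg v) R' g').d1.projK_eq, ← pair_projK,
      pair_d1 (isK_projK (reg v) R' g'), pair_projK, (isK_projK R' (reg v) g).d1.projK_eq, ← hg']
    have : l (d1 R' (reg v) (projK R' (reg v) g)) ∈
        Submodule.map l (LinearMap.range (d1 R' (reg v) ∘ₗ projK R' (reg v))) :=
      Submodule.mem_map_of_mem ⟨g, rfl⟩
    rw [hl'] at this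
    simpa using this
  obtain ⟨F, hF, hF'⟩ := exists_d0_of_d1_eq_zero (isK_projK _ _ _) h0
  refine hl ?_
  rw [hg', ← hu.projK_eq, ← pair_projK, ← hF', ho F hF]

end Exactness

end QuiverHeisenberg

namespace QuiverHeisenberg

variable {k : Type} [Field k] {Q : FinQuiver} {v : Fin Q.r → k}

/-- A weighting of the double quiver for which the defining relations are homogeneous. -/
structure Wt (Q : FinQuiver) where
  w : DArrow Q → ℤ
  c : ℤ
  w_add_bar : ∀ b, w b + w (bar b) = c
  w_nonneg : ∀ b, 0 ≤ w b
  c_nonneg : 0 ≤ c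

namespace Wt

variable (W : Wt Q)

/-- Weights of the generators. -/
def gen : QHGen Q → ℤ
  | .vert _ => 0
  | .fwd e => W.w (.inl e)
  | .bwd e => W.w (.inr e)
  | .z => W.c

@[simp] lemma gen_agen (b : DArrow Q) : W.gen (agen b) = W.w b := by cases b <;> rfl

variable (v) in
/-- The datum defining the coaction of a grading. -/
noncomputable def coactDatum : Datum v (AddMonoidAlgebra (QHAlg k Q v) ℤ) where
  E i := .single 0 ((taut v).E i)
  a b := .single (W.w b) ((taut v).a b)
  z := .single W.c (taut v).z
  E_mul i j := by
    rw [AddMonoidAlgebra.single_mul_single, (taut v).E_mul]; split_ifs <;> simp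
  E_sum := by
    rw [AddMonoidAlgebra.one_def, ← (taut v).E_sum]
    exact (map_sum (AddMonoidAlgebra.singleAddHom (R := QHAlg k Q v) (0 : ℤ)) _ _).symm
  E_a b := by rw [AddMonoidAlgebra.single_mul_single, (taut v).E_a, zero_add]
  a_E b := by rw [AddMonoidAlgebra.single_mul_single, (taut v).a_E, add_zero]
  z_E i := by
    rw [AddMonoidAlgebra.single_mul_single, AddMonoidAlgebra.single_mul_single, (taut v).z_E,
      add_comm]
  z_a b := by
    rw [AddMonoidAlgebra.single_mul_single, AddMonoidAlgebra.single_mul_single, (taut v).z_a,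
      add_comm]
  mesh := by
    have h := (taut v).mesh
    simp only [AddMonoidAlgebra.single_mul_single, W.w_add_bar, Finset.sum_mul, smul_mul_assoc,
      zero_add] at h ⊢
    have h' := congrArg (AddMonoidAlgebra.lsingle (R := k) W.c) h
    simp only [map_sum, map_smul] at h'
    exact h'

variable (v) in
/-- The homogeneous component of degree `n`. -/
noncomputable def comp (n : ℤ) : QHAlg k Q v →ₗ[k] QHAlg k Q v :=
  Finsupp.lapply n ∘ₗ (AddMonoidAlgebra.coeffLinearEquiv k).toLinearMap ∘ₗ
    (W.coactDatum v).lift.toLinearMap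

lemma coact_word (l : List (QHGen Q)) :
    (W.coactDatum v).lift (word k v l) = .single (l.map W.gen).sum (word k v l) := by
  induction l with
  | nil => rw [word_nil, map_one]; rfl
  | cons g l ih =>
    have : (W.coactDatum v).val g = .single (W.gen g) (qhGen k Q v g) := by cases g <;> rfl
    rw [word_cons, map_mul, Datum.lift_gen, ih, this, AddMonoidAlgebra.single_mul_single,
      List.map_cons, List.sum_cons]

lemma comp_word (n : ℤ) (l : List (QHGen Q)) :
    W.comp v n (word k v l) = if (l.map W.gen).sum = n then word k v l else 0 := by
  have h : W.comp v n (word k v l) = ((W.coactDatum v).lift (word k v l)).coeff n := rfl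
  rw [h, coact_word, AddMonoidAlgebra.coeff_single, Finsupp.single_apply]

lemma comp_comp (m n : ℤ) (x : QHAlg k Q v) :
    W.comp v m (W.comp v n x) = if m = n then W.comp v n x else 0 := by
  refine word_induction
    (p := fun x => W.comp v m (W.comp v n x) = if m = n then W.comp v n x else 0)
    (fun l => ?_) (by simp) (fun x y hx hy => ?_) (fun c x hx => ?_) x
  · rw [comp_word]
    by_cases h : (l.map W.gen).sum = n
    · simp [h, comp_word, eq_comm]
    · simp [h]
  · rw [map_add, map_add, hx, hy]; split_ifs <;> simp
  · rw [map_smul, map_smul, hx]; split_ifs <;> simp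

lemma comp_gen_mul (g : QHGen Q) (n : ℤ) (x : QHAlg k Q v) :
    W.comp v (n + W.gen g) (qhGen k Q v g * x) = qhGen k Q v g * W.comp v n x := by
  refine word_induction (p := fun x => W.comp v (n + W.gen g) (qhGen k Q v g * x) =
    qhGen k Q v g * W.comp v n x)
    (fun l => ?_) (by simp) (fun x y hx hy => ?_) (fun c x hx => ?_) x
  · rw [← word_cons, comp_word, comp_word]
    simp [add_comm, eq_comm]
  · rw [mul_add, map_add, map_add, hx, hy, mul_add]
  · rw [mul_smul_comm, map_smul, map_smul, hx, mul_smul_comm]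

lemma comp_mul_gen (g : QHGen Q) (n : ℤ) (x : QHAlg k Q v) :
    W.comp v (n + W.gen g) (x * qhGen k Q v g) = W.comp v n x * qhGen k Q v g := by
  refine word_induction (p := fun x => W.comp v (n + W.gen g) (x * qhGen k Q v g) =
    W.comp v n x * qhGen k Q v g)
    (fun l => ?_) (by simp) (fun x y hx hy => ?_) (fun c x hx => ?_) x
  · have h : word k v l * qhGen k Q v g = word k v (l ++ [g]) := by simp [word]
    rw [h, comp_word, comp_word]
    simp [h]
  · rw [add_mul, map_add, map_add, hx, hy, add_mul]
  · rw [smul_mul_assoc, map_smul, map_smul, hx, smul_mul_assoc]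

lemma comp_E_mul (i : Fin Q.r) (n : ℤ) (x : QHAlg k Q v) :
    W.comp v n ((taut v).E i * x) = (taut v).E i * W.comp v n x :=
  (congrArg (fun m => W.comp v m _) (add_zero n).symm).trans (W.comp_gen_mul (.vert i) n x)

lemma comp_mul_E (i : Fin Q.r) (n : ℤ) (x : QHAlg k Q v) :
    W.comp v n (x * (taut v).E i) = W.comp v n x * (taut v).E i :=
  (congrArg (fun m => W.comp v m _) (add_zero n).symm).trans (W.comp_mul_gen (.vert i) n x)

lemma comp_a_mul (b : DArrow Q) (n : ℤ) (x : QHAlg k Q v) :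
    W.comp v (n + W.w b) ((taut v).a b * x) = (taut v).a b * W.comp v n x := by
  have h := W.comp_gen_mul (agen b) n x
  rw [gen_agen] at h
  exact h

lemma comp_z_mul (n : ℤ) (x : QHAlg k Q v) :
    W.comp v (n + W.c) ((taut v).z * x) = (taut v).z * W.comp v n x :=
  W.comp_gen_mul .z n x

/-- Every element is the sum of its homogeneous components. -/
lemma exists_sum_comp (x : QHAlg k Q v) :
    ∃ s : Finset ℤ, ∀ t, s ⊆ t → ∑ n ∈ t, W.comp v n x = x := by
  refine word_induction (p := fun x => ∃ s : Finset ℤ, ∀ t, s ⊆ t → ∑ n ∈ t, W.comp v n x = x)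
    (fun l => ?_) ⟨∅, by simp⟩ (fun x y hx hy => ?_) (fun c x hx => ?_) x
  · refine ⟨{(l.map W.gen).sum}, fun t ht => ?_⟩
    simp [comp_word, Finset.singleton_subset_iff.1 ht]
  · obtain ⟨s, hs⟩ := hx
    obtain ⟨s', hs'⟩ := hy
    refine ⟨s ∪ s', fun t ht => ?_⟩
    simp only [map_add, Finset.sum_add_distrib]
    rw [hs t (Finset.union_subset_left ht), hs' t (Finset.union_subset_right ht)]
  · obtain ⟨s, hs⟩ := hx
    exact ⟨s, fun t ht => by simp only [map_smul, ← Finset.smul_sum, hs t ht]⟩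

lemma ext_comp {x y : QHAlg k Q v} (h : ∀ n, W.comp v n x = W.comp v n y) : x = y := by
  classical
  obtain ⟨s, hs⟩ := W.exists_sum_comp x
  obtain ⟨s', hs'⟩ := W.exists_sum_comp y
  rw [← hs (s ∪ s') Finset.subset_union_left, ← hs' (s ∪ s') Finset.subset_union_right]
  exact Finset.sum_congr rfl fun n _ => h n

lemma comp_one (n : ℤ) : W.comp v n 1 = if n = 0 then 1 else 0 := by
  simpa [eq_comm] using W.comp_word (v := v) n []

lemma comp_E (i : Fin Q.r) (n : ℤ) :
    W.comp v n ((taut v).E i) = if n = 0 then (taut v).E i else 0 := by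
  have := W.comp_mul_E (v := v) i n 1
  rw [one_mul, comp_one] at this
  rw [this]; split_ifs <;> simp

lemma gen_nonneg (g : QHGen Q) : 0 ≤ W.gen g := by
  cases g with
  | vert i => exact le_rfl
  | fwd e => exact W.w_nonneg _
  | bwd e => exact W.w_nonneg _
  | z => exact W.c_nonneg

lemma comp_of_neg {n : ℤ} (hn : n < 0) (x : QHAlg k Q v) : W.comp v n x = 0 := by
  refine word_induction (p := fun x => W.comp v n x = 0) (fun l => ?_) (by simp)
    (fun x y hx hy => by simp [hx, hy]) (fun c x hx => by simp [hx]) x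
  rw [comp_word, if_neg]
  rintro rfl
  refine hn.not_ge (List.sum_nonneg fun m hm => ?_)
  obtain ⟨g, -, rfl⟩ := List.mem_map.1 hm
  exact W.gen_nonneg g

end Wt

end QuiverHeisenberg

namespace QuiverHeisenberg

variable {k : Type} [Field k] {Q : FinQuiver} {v : Fin Q.r → k}

section Functoriality

variable {X Y Z : Type} [AddCommGroup X] [Module k X] [AddCommGroup Y] [Module k Y]
  [AddCommGroup Z] [Module k Z]

/-- Compatibility of a linear map with the arrows and `z`. -/
structure IsHom (R : Datum v (Module.End k X)) (R' : Datum v (Module.End k Y)) (p : X →ₗ[k] Y) :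
    Prop where
  E : IsS R R' p
  a : ∀ b x, R'.a b (p x) = p (R.a b x)
  z : ∀ x, R'.z (p x) = p (R.z x)

/-- Precomposition of a family with a linear map. -/
def Fam.pre (g : Fam k Q Y Z) (p : X →ₗ[k] Y) : Fam k Q X Z := (fun b => g.1 b ∘ₗ p, g.2 ∘ₗ p)

/-- Postcomposition of a family with a linear map. -/
def Fam.post (p : Y →ₗ[k] Z) (g : Fam k Q X Y) : Fam k Q X Z := (fun b => p ∘ₗ g.1 b, p ∘ₗ g.2)

variable {R : Datum v (Module.End k X)} {R' : Datum v (Module.End k Y)}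
  {R'' : Datum v (Module.End k Z)}

@[simp] lemma Fam.pre_fst (g : Fam k Q Y Z) (p : X →ₗ[k] Y) (b : DArrow Q) (x : X) :
    (g.pre p).1 b x = g.1 b (p x) := rfl

@[simp] lemma Fam.pre_snd (g : Fam k Q Y Z) (p : X →ₗ[k] Y) (x : X) :
    (g.pre p).2 x = g.2 (p x) := rfl

lemma d1_pre (g : Fam k Q Y Z) {p : X →ₗ[k] Y} (hp : IsHom R R' p) :
    d1 R R'' (g.pre p) = (d1 R' R'' g).pre p := by
  refine Fam.ext' (fun b x => ?_) fun x => ?_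
  · simp [hp.a, hp.z]
  · simp [hp.a, -Fintype.sum_sum_type]

lemma d0_pre (F : Y →ₗ[k] Z) {p : X →ₗ[k] Y} (hp : IsHom R R' p) :
    d0 R R'' (F ∘ₗ p) = (d0 R' R'' F).pre p := by
  refine Fam.ext' (fun b x => ?_) fun x => ?_ <;> simp [hp.a, hp.z]

lemma d0_post (F : X →ₗ[k] Y) {p : Y →ₗ[k] Z} (hp : IsHom R' R'' p) :
    d0 R R'' (p ∘ₗ F) = (d0 R R' F).post p := by
  refine Fam.ext' (fun b x => ?_) fun x => ?_ <;> simp [hp.a, hp.z, Fam.post]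

lemma IsK.pre {g : Fam k Q Y Z} (hg : IsK R' R'' g) {p : X →ₗ[k] Y} (hp : IsS R R' p) :
    IsK R R'' (g.pre p) := by
  refine ⟨fun b x => ?_, fun b x => ?_, fun i x => ?_⟩
  · simp [hg.1]
  · simp [← hp _ _, hg.2.1]
  · simp [← hp _ _, hg.2.2 _ _]

lemma pair_post [FiniteDimensional k X] [FiniteDimensional k Y] [FiniteDimensional k Z]
    (g : Fam k Q X Y) (p : Y →ₗ[k] Z) (u : Fam k Q Z X) :
    pair (g.post p) u = pair g (u.pre p) := by
  unfold pair Fam.pre Fam.post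
  congr 1
  · refine Finset.sum_congr rfl fun b _ => congrArg _ ?_
    exact LinearMap.trace_comp_comm' (g.1 b ∘ₗ u.1 (bar b)) p
  · exact LinearMap.trace_comp_comm' (g.2 ∘ₗ u.2) p

/-- The quotient of a representation by a subrepresentation. -/
noncomputable def Datum.quot (R : Datum v (Module.End k X)) (p : Submodule k X)
    (hE : ∀ i, p ≤ p.comap (R.E i)) (ha : ∀ b, p ≤ p.comap (R.a b)) (hz : p ≤ p.comap R.z) :
    Datum v (Module.End k (X ⧸ p)) where
  E i := p.mapQ p (R.E i) (hE i)
  a b := p.mapQ p (R.a b) (ha b)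
  z := p.mapQ p R.z hz
  E_mul i j := by
    refine Submodule.linearMap_qext _ (LinearMap.ext fun x => ?_)
    have := R.E_E_apply i j x
    split_ifs at this ⊢ <;> simp [this]
  E_sum := by
    refine Submodule.linearMap_qext _ (LinearMap.ext fun x => ?_)
    simp only [LinearMap.comp_apply, LinearMap.sum_apply, Submodule.mkQ_apply,
      Submodule.mapQ_apply, Module.End.one_apply]
    conv_rhs => rw [← R.E_sum_apply x]
    exact (map_sum p.mkQ _ _).symm
  E_a b := Submodule.linearMap_qext _ (LinearMap.ext fun x => by simp [R.E_a_apply])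
  a_E b := Submodule.linearMap_qext _ (LinearMap.ext fun x => by simp [R.a_E_apply])
  z_E b := Submodule.linearMap_qext _ (LinearMap.ext fun x => by simp [R.z_E_apply])
  z_a b := Submodule.linearMap_qext _ (LinearMap.ext fun x => by simp [R.z_a_apply])
  mesh := by
    refine Submodule.linearMap_qext _ (LinearMap.ext fun x => ?_)
    have h := congrArg p.mkQ (R.mesh_apply x)
    rw [R.V_apply] at h
    simp only [map_sum, map_smul] at h
    simpa [-Fintype.sum_sum_type] using h

lemma Datum.isHom_mkQ (R : Datum v (Module.End k X)) (p : Submodule k X)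
    (hE : ∀ i, p ≤ p.comap (R.E i)) (ha : ∀ b, p ≤ p.comap (R.a b)) (hz : p ≤ p.comap R.z) :
    IsHom R (R.quot p hE ha hz) p.mkQ :=
  ⟨fun _ _ => rfl, fun _ _ => rfl, fun _ => rfl⟩

lemma projS_comp {p : Y →ₗ[k] Z} (hp : IsS R' R'' p) (F : X →ₗ[k] Y) :
    p ∘ₗ projS R R' F = projS R R'' (p ∘ₗ F) := by
  ext x; simp [hp _ _]

end Functoriality

section Simple

variable (v) in
/-- The sum of the vertex simple modules. -/
noncomputable def simples : Datum v (Module.End k (Fin Q.r → k)) where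
  E i := LinearMap.single k (fun _ => k) i ∘ₗ LinearMap.proj i
  a _ := 0
  z := 0
  E_mul i j := by
    refine LinearMap.ext fun x => funext fun l => ?_
    by_cases h : i = j
    · subst h; simp
    · simp [h, Pi.single_apply]
  E_sum := by
    refine LinearMap.ext fun x => funext fun l => ?_
    simp
  E_a _ := by simp
  a_E _ := by simp
  z_E _ := by simp
  z_a _ := by simp
  mesh := by simp

lemma simples_E (i : Fin Q.r) (s : Fin Q.r → k) : (simples v).E i s = Pi.single i (s i) := rfl
@[simp] lemma simples_a (b : DArrow Q) (s : Fin Q.r → k) : (simples v).a b s = 0 := rfl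
@[simp] lemma simples_z (s : Fin Q.r → k) : (simples v).z s = 0 := rfl

variable (k v) in
/-- The terms of degree `1` and `2` of the total complex. -/
abbrev Tot : Type := (DArrow Q → QHAlg k Q v) × QHAlg k Q v

/-- The first differential of the total complex. -/
noncomputable def δ0 : QHAlg k Q v →ₗ[k] Tot k v where
  toFun f := (fun b => (taut v).a b * f, (taut v).z * f)
  map_add' f g := by ext <;> simp [mul_add]
  map_smul' c f := by ext <;> simp

/-- The second differential of the total complex. -/
noncomputable def δ1 : Tot k v →ₗ[k] Tot k v where
  toFun x := (fun b => (taut v).z * x.1 b - (taut v).a b * x.2,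
    (taut v).V * x.2 - ∑ b, sgn k b • ((taut v).a b * x.1 (bar b)))
  map_add' x y := by
    refine Prod.ext (funext fun b => ?_) ?_
    · simp only [Prod.fst_add, Pi.add_apply, Prod.snd_add, mul_add]; abel
    · simp only [Prod.fst_add, Pi.add_apply, Prod.snd_add, mul_add, smul_add,
        Finset.sum_add_distrib]; abel
  map_smul' c x := by
    refine Prod.ext (funext fun b => ?_) ?_
    · simp [smul_sub]
    · simp [smul_sub, Finset.smul_sum, smul_comm c, -Fintype.sum_sum_type]

/-- The third differential of the total complex. -/
noncomputable def δ2 : Tot k v →ₗ[k] QHAlg k Q v where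
  toFun u := (taut v).z * u.2 + ∑ b, sgn k b • ((taut v).a b * u.1 (bar b))
  map_add' x y := by
    simp only [Prod.fst_add, Pi.add_apply, Prod.snd_add, mul_add, smul_add,
        Finset.sum_add_distrib]; abel
  map_smul' c x := by
    simp [smul_add, Finset.smul_sum, smul_comm c, -Fintype.sum_sum_type]

@[simp] lemma δ0_fst (f : QHAlg k Q v) (b : DArrow Q) : (δ0 f).1 b = (taut v).a b * f := rfl
@[simp] lemma δ0_snd (f : QHAlg k Q v) : (δ0 f).2 = (taut v).z * f := rfl
@[simp] lemma δ1_fst (x : Tot k v) (b : DArrow Q) :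
    (δ1 x).1 b = (taut v).z * x.1 b - (taut v).a b * x.2 := rfl
@[simp] lemma δ1_snd (x : Tot k v) :
    (δ1 x).2 = (taut v).V * x.2 - ∑ b, sgn k b • ((taut v).a b * x.1 (bar b)) := rfl
lemma δ2_apply (u : Tot k v) :
    δ2 u = (taut v).z * u.2 + ∑ b, sgn k b • ((taut v).a b * u.1 (bar b)) := rfl

lemma mesh_mul (x : QHAlg k Q v) :
    ∑ b, sgn k b • ((taut v).a b * ((taut v).a (bar b) * x)) = (taut v).V * ((taut v).z * x) := by
  rw [← mul_assoc, ← (taut v).mesh', Finset.sum_mul]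
  exact Finset.sum_congr rfl fun b _ => by rw [smul_mul_assoc, mul_assoc]

lemma δ1_δ0 (f : QHAlg k Q v) : δ1 (δ0 f) = 0 := by
  refine Prod.ext (funext fun b => ?_) ?_
  · simp [← mul_assoc, (taut v).z_a]
  · simp only [δ1_snd, δ0_snd, δ0_fst, mesh_mul, sub_self, Prod.snd_zero]

lemma δ2_δ1 (x : Tot k v) : δ2 (δ1 x) = 0 := by
  have h2 (b) : (taut v).z * ((taut v).a b * x.1 (bar b)) =
      (taut v).a b * ((taut v).z * x.1 (bar b)) := by
    rw [← mul_assoc, (taut v).z_a, mul_assoc]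
  simp only [δ2_apply, δ1_snd, δ1_fst, mul_sub, smul_sub, Finset.sum_sub_distrib, mesh_mul,
    Finset.mul_sum, mul_smul_comm, h2]
  rw [← mul_assoc, (taut v).z_V, mul_assoc]
  abel

/-- The vertex condition on elements of the total complex. -/
def IsT (x : Tot k v) : Prop := ∀ b, (taut v).E (dsrc Q b) * x.1 b = x.1 b

/-- The family on the simple modules associated with an element of the total complex. -/
noncomputable def toFam (x : Tot k v) : Fam k Q (Fin Q.r → k) (QHAlg k Q v) :=
  (fun b => (LinearMap.proj (dtgt Q b)).smulRight (x.1 b),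
    ∑ i, (LinearMap.proj i).smulRight ((taut v).E i * x.2))

/-- The element of the total complex associated with a family on the simple modules. -/
noncomputable def ofFam (g : Fam k Q (Fin Q.r → k) (QHAlg k Q v)) : Tot k v :=
  (fun b => g.1 b (Pi.single (dtgt Q b) 1), g.2 1)

@[simp] lemma toFam_fst (x : Tot k v) (b : DArrow Q) (s : Fin Q.r → k) :
    (toFam x).1 b s = s (dtgt Q b) • x.1 b := rfl

@[simp] lemma toFam_snd (x : Tot k v) (s : Fin Q.r → k) :
    (toFam x).2 s = ∑ i, s i • ((taut v).E i * x.2) := by simp [toFam]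

lemma ofFam_toFam (x : Tot k v) : ofFam (toFam x) = x := by
  refine Prod.ext (funext fun b => ?_) ?_
  · simp [ofFam]
  · simp [ofFam, ← Finset.sum_mul, (taut v).E_sum]

lemma isK_toFam {x : Tot k v} (hx : IsT x) : IsK (simples v) (reg v) (toFam x) := by
  refine ⟨fun b s => ?_, fun b s => ?_, fun i s => ?_⟩
  · simp [hx b]
  · simp [simples_E]
  · simp [simples_E, ← mul_assoc, (taut v).E_mul, Pi.single_apply, ite_smul]

lemma E_fam_snd {g : Fam k Q (Fin Q.r → k) (QHAlg k Q v)} (hg : IsK (simples v) (reg v) g)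
    (i : Fin Q.r) : (taut v).E i * g.2 1 = g.2 (Pi.single i 1) := by
  simpa [simples_E] using hg.2.2 i 1

lemma fam_fst {g : Fam k Q (Fin Q.r → k) (QHAlg k Q v)} (hg : IsK (simples v) (reg v) g)
    (b : DArrow Q) (s : Fin Q.r → k) : g.1 b s = s (dtgt Q b) • g.1 b (Pi.single (dtgt Q b) 1) := by
  rw [← hg.2.1, simples_E, ← map_smul, ← Pi.single_smul]; simp

lemma toFam_ofFam {g : Fam k Q (Fin Q.r → k) (QHAlg k Q v)} (hg : IsK (simples v) (reg v) g) :
    toFam (ofFam g) = g := by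
  refine Fam.ext' (fun b s => ?_) fun s => ?_
  · rw [toFam_fst, fam_fst hg]; rfl
  · have : (ofFam g).2 = g.2 1 := rfl
    simp only [toFam_snd, this, E_fam_snd hg, ← map_smul, ← map_sum]
    congr 1
    ext i
    simp [Pi.single_apply]

lemma ofFam_d1 {g : Fam k Q (Fin Q.r → k) (QHAlg k Q v)} (hg : IsK (simples v) (reg v) g) :
    ofFam (d1 (simples v) (reg v) g) = δ1 (ofFam g) := by
  refine Prod.ext (funext fun b => ?_) ?_
  · simp only [ofFam, d1_fst, δ1_fst, simples_a, simples_z, map_zero, reg_a, reg_z]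
    rw [← E_fam_snd hg, ← mul_assoc, (taut v).a_E]; simp
  · simp only [ofFam, d1_snd, δ1_snd, simples_a, map_zero, reg_a, reg_V, zero_add]
    congr 1
    refine Finset.sum_congr rfl fun b _ => ?_
    rw [fam_fst hg]; simp

variable [FiniteDimensional k (QHAlg k Q v)]

/-- Exactness of the total complex at the second step. -/
lemma exists_δ1_eq {u : Tot k v} (hu : IsT u) (h : δ2 u = 0) : ∃ x, IsT x ∧ δ1 x = u := by
  obtain ⟨g, hg, hgu⟩ := exists_d1_of_orthogonal (isK_toFam hu) fun F hF => by
    set φ : QHAlg k Q v →ₗ[k] k := (∑ i, LinearMap.proj i) ∘ₗ F with hφ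
    have hFi (y) (i) : F y i = φ ((taut v).E i * y) := by
      have := hF i y
      rw [reg_E] at this
      simp [hφ, ← this, simples_E]
    have e1 (b) : (d0 (reg v) (simples v) F).1 b ∘ₗ (toFam u).1 (bar b) =
        (LinearMap.proj (dsrc Q b)).smulRight (-F ((taut v).a b * u.1 (bar b))) := by
      ext; simp
    have e2 : (d0 (reg v) (simples v) F).2 ∘ₗ (toFam u).2 =
        ∑ i, (LinearMap.proj i).smulRight (-F ((taut v).z * ((taut v).E i * u.2))) := by
      refine LinearMap.ext fun s => ?_
      simp
    have e3 (i) : (taut v).E i * ((taut v).z * ((taut v).E i * u.2)) =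
        (taut v).z * ((taut v).E i * u.2) := by
      rw [← mul_assoc, ← (taut v).z_E, mul_assoc, ← mul_assoc ((taut v).E i), (taut v).E_idem]
    have e4 (b) : (taut v).E (dsrc Q b) * ((taut v).a b * u.1 (bar b)) =
        (taut v).a b * u.1 (bar b) := by rw [← mul_assoc, (taut v).E_a]
    simp only [pair, e1, e2, map_sum, LinearMap.trace_smulRight, LinearMap.proj_apply,
      Pi.neg_apply, hFi, e3, e4]
    have h' := congrArg φ h
    simp only [δ2_apply, map_add, map_sum, map_smul, map_zero, smul_eq_mul] at h'
    have e5 : ∑ i, φ ((taut v).z * ((taut v).E i * u.2)) = φ ((taut v).z * u.2) := by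
      rw [← map_sum, ← Finset.mul_sum, ← Finset.sum_mul, (taut v).E_sum, one_mul]
    simp only [mul_neg, Finset.sum_neg_distrib, e5]
    linear_combination -h'
  refine ⟨ofFam g, fun b => ?_, by rw [← ofFam_d1 hg, hgu, ofFam_toFam]⟩
  simpa [ofFam] using hg.1 b _

/-- Exactness of the total complex at the first step, given enough socle elements. -/
lemma exists_δ0_eq {w : Fin Q.r → QHAlg k Q v} (hE : ∀ i, (taut v).E i * w i = w i)
    (ha : ∀ b i, (taut v).a b * w i = 0) (hz : ∀ i, (taut v).z * w i = 0) (hw : ∀ i, w i ≠ 0)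
    {x : Tot k v} (hx : IsT x) (h : δ1 x = 0) : ∃ f, δ0 f = x := by
  choose φ hφ using fun i => Module.Projective.exists_dual_ne_zero k (hw i)
  let Φ : QHAlg k Q v →ₗ[k] (Fin Q.r → k) :=
    LinearMap.pi fun i => (φ i (w i))⁻¹ • φ i ∘ₗ LinearMap.mulLeft k ((taut v).E i)
  have hΦ (y i) : Φ y i = (φ i (w i))⁻¹ * φ i ((taut v).E i * y) := rfl
  have hΦS : IsS (reg v) (simples v) Φ := by
    intro i y
    ext j
    rw [simples_E, hΦ, reg_E, hΦ, ← mul_assoc, (taut v).E_mul, Pi.single_apply]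
    split_ifs with h
    · rw [h]
    · simp
  let ι : (Fin Q.r → k) →ₗ[k] QHAlg k Q v := ∑ i, (LinearMap.proj i).smulRight (w i)
  have hι (s) : ι s = ∑ i, s i • w i := by simp [ι]
  have hEw (i j) : (taut v).E i * w j = if i = j then w i else 0 := by
    rw [← hE j, ← mul_assoc, (taut v).E_mul]
    split_ifs with h
    · subst h; exact hE i
    · simp
  have hιH : IsHom (simples v) (reg v) ι := by
    refine ⟨fun i s => ?_, fun b s => ?_, fun s => ?_⟩
    · simp [hι, hEw, simples_E, Pi.single_apply, ite_smul]
    · simp [hι, ha]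
    · simp [hι, hz]
  have hΦι : Φ ∘ₗ ι = LinearMap.id := by
    refine LinearMap.ext fun s => funext fun i => ?_
    rw [LinearMap.comp_apply, hΦ, ← reg_E, hιH.E, simples_E, hι]
    simp [Pi.single_apply, ite_smul]
    rw [mul_comm, mul_assoc, mul_inv_cancel₀ (hφ i), mul_one]
  have hgK := isK_toFam hx
  set g := toFam x with hg
  have hd : d1 (simples v) (reg v) g = 0 := by
    rw [← toFam_ofFam hgK.d1, ofFam_d1 hgK, hg, ofFam_toFam, h]
    refine Fam.ext' (fun b s => ?_) fun s => ?_ <;> simp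
  have hĝK : IsK (reg v) (reg v) (g.pre Φ) := hgK.pre hΦS
  set u := d1 (reg v) (reg v) (g.pre Φ) with hu
  have hgι : (g.pre Φ).pre ι = g := by
    refine Fam.ext' (fun b s => ?_) fun s => ?_
    · exact congrArg (g.1 b) (LinearMap.congr_fun hΦι s)
    · exact congrArg g.2 (LinearMap.congr_fun hΦι s)
  have huι : u.pre ι = 0 := by
    rw [hu, ← d1_pre (R := simples v) (R' := reg v) (R'' := reg v) _ hιH, hgι, hd]
  set p := LinearMap.range ι with hp
  have hpE (i) : p ≤ p.comap ((reg v).E i) := by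
    rintro _ ⟨s, rfl⟩; exact ⟨_, (hιH.E i s).symm⟩
  have hpa (b) : p ≤ p.comap ((reg v).a b) := by
    rintro _ ⟨s, rfl⟩; exact ⟨_, (hιH.a b s).symm⟩
  have hpz : p ≤ p.comap (reg v).z := by
    rintro _ ⟨s, rfl⟩; exact ⟨_, (hιH.z s).symm⟩
  set RY := (reg v).quot p hpE hpa hpz with hRY
  have hπ : IsHom (reg v) RY p.mkQ := (reg v).isHom_mkQ p hpE hpa hpz
  have hker1 (b) : p ≤ LinearMap.ker (u.1 b) := by
    rintro _ ⟨s, rfl⟩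
    exact LinearMap.congr_fun (congrFun (congrArg Prod.fst huι) b) s
  have hker2 : p ≤ LinearMap.ker u.2 := by
    rintro _ ⟨s, rfl⟩
    exact LinearMap.congr_fun (congrArg Prod.snd huι) s
  let ū : Fam k Q (QHAlg k Q v ⧸ p) (QHAlg k Q v) :=
    (fun b => p.liftQ (u.1 b) (hker1 b), p.liftQ u.2 hker2)
  have hūu : ū.pre p.mkQ = u := Fam.ext' (fun b x => rfl) fun x => rfl
  have huK : IsK (reg v) (reg v) u := hĝK.d1
  have hūK : IsK RY (reg v) ū := by
    refine ⟨fun b y => ?_, fun b y => ?_, fun i y => ?_⟩ <;>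
    obtain ⟨y, rfl⟩ := p.mkQ_surjective y
    · exact huK.1 b y
    · exact huK.2.1 b y
    · exact huK.2.2 i y
  obtain ⟨g'', hg''K, hg''⟩ := exists_d1_of_orthogonal hūK fun F hF => by
    obtain ⟨σ, hσ⟩ := p.mkQ.exists_rightInverse_of_surjective p.range_mkQ
    have hFF : p.mkQ ∘ₗ projS (reg v) (reg v) (σ ∘ₗ F) = F := by
      rw [projS_comp hπ.E, ← LinearMap.comp_assoc, hσ, LinearMap.id_comp, hF.projS_eq]
    rw [← hFF, d0_post (R' := reg v) _ hπ, pair_post, hūu, hu, pair_d1 hĝK,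
      d1_d0 (isS_projS _ _ _), pair_zero_right]
  have hK : IsK (reg v) (reg v) (g.pre Φ - g''.pre p.mkQ) := by
    have h2 := hg''K.pre hπ.E
    refine ⟨fun b y => ?_, fun b y => ?_, fun i y => ?_⟩
    · exact (map_sub _ _ _).trans (congrArg₂ (· - ·) (hĝK.1 b y) (h2.1 b y))
    · exact congrArg₂ (· - ·) (hĝK.2.1 b y) (h2.2.1 b y)
    · exact (map_sub _ _ _).trans (congrArg₂ (· - ·) (hĝK.2.2 i y) (h2.2.2 i y))
  obtain ⟨F, hF, hF'⟩ := exists_d0_of_d1_eq_zero hK <| by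
    refine (LinearMap.map_sub (d1 (reg v) (reg v)) (g.pre Φ) (g''.pre p.mkQ)).trans ?_
    rw [d1_pre (R' := RY) g'' hπ, hg'', hūu, ← hu, sub_self]
  have hfin : d0 (simples v) (reg v) (F ∘ₗ ι) = g := by
    have h0 : (g''.pre p.mkQ).pre ι = 0 := by
      have hι0 (s) : p.mkQ (ι s) = 0 := (Submodule.Quotient.mk_eq_zero p).2 ⟨s, rfl⟩
      refine Fam.ext' (fun b s => ?_) fun s => ?_ <;> simp only [Fam.pre_fst, Fam.pre_snd, hι0] <;>
      simp
    rw [d0_pre (R' := reg v) F hιH, hF']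
    exact Eq.trans (congrArg₂ (· - ·) hgι h0) (sub_zero g)
  refine ⟨F (ι 1), ?_⟩
  rw [← ofFam_toFam x, ← hg, ← hfin]
  have hFι : IsS (simples v) (reg v) (F ∘ₗ ι) := fun i s => by
    rw [LinearMap.comp_apply, hF, hιH.E]; rfl
  refine Prod.ext (funext fun b => ?_) ?_
  · have := hFι (dtgt Q b) 1
    rw [simples_E] at this
    simp only [ofFam, d0_fst, simples_a, map_zero, sub_zero, δ0_fst, reg_a]
    rw [show (Pi.single (dtgt Q b) 1 : Fin Q.r → k) =
        Pi.single (dtgt Q b) ((1 : Fin Q.r → k) (dtgt Q b))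
      from rfl, ← this, reg_E, ← mul_assoc, (taut v).a_E]
    rfl
  · simp [ofFam]

end Simple

end QuiverHeisenberg

namespace QuiverHeisenberg

variable {k : Type} [Field k] {Q : FinQuiver} {v : Fin Q.r → k}

lemma finrank_map_add_finrank_inf_ker {M M' : Type*} [AddCommGroup M] [Module k M]
    [AddCommGroup M'] [Module k M'] [FiniteDimensional k M] (f : M →ₗ[k] M')
    (U : Submodule k M) :
    Module.finrank k (U.map f) + Module.finrank k (U ⊓ LinearMap.ker f : Submodule k M) =
      Module.finrank k U := by
  rw [← LinearMap.finrank_range_add_finrank_ker (f.domRestrict U), LinearMap.range_domRestrict]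
  congr 1
  rw [LinearMap.ker_domRestrict, ← LinearMap.finrank_range_of_inj
    (f := U.subtype ∘ₗ (Submodule.comap U.subtype (LinearMap.ker f)).subtype)
    (U.subtype_injective.comp (Submodule.subtype_injective _)), LinearMap.range_comp,
    Submodule.range_subtype, Submodule.map_comap_subtype]

lemma finrank_prod_submodule {M M' : Type*} [AddCommGroup M] [Module k M]
    [AddCommGroup M'] [Module k M'] [FiniteDimensional k M] [FiniteDimensional k M']
    (U : Submodule k M) (U' : Submodule k M') :
    Module.finrank k (U.prod U') = Module.finrank k U + Module.finrank k U' := by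
  rw [← Module.finrank_prod]
  exact LinearEquiv.finrank_eq
    { toFun := fun x => (⟨x.1.1, x.2.1⟩, ⟨x.1.2, x.2.2⟩)
      invFun := fun x => ⟨(x.1.1, x.2.1), x.1.2, x.2.2⟩
      map_add' := fun _ _ => rfl
      map_smul' := fun _ _ => rfl }

lemma finrank_pi_submodule {ι M : Type*} [Fintype ι] [AddCommGroup M] [Module k M]
    [FiniteDimensional k M] (U : ι → Submodule k M) :
    Module.finrank k (Submodule.pi Set.univ U) = ∑ b, Module.finrank k (U b) := by
  rw [← Module.finrank_pi_fintype]
  exact LinearEquiv.finrank_eq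
    { toFun := fun x b => ⟨x.1 b, x.2 b trivial⟩
      invFun := fun x => ⟨fun b => (x b).1, fun b _ => (x b).2⟩
      map_add' := fun _ _ => rfl
      map_smul' := fun _ _ => rfl }

section Augmentation

variable (k v) in
/-- The datum defining the augmentation. -/
noncomputable def augDatum : Datum v (Fin Q.r → k) where
  E i := Pi.single i 1
  a _ := 0
  z := 0
  E_mul i j := by
    ext l; simp only [Pi.mul_apply, Pi.single_apply]; split_ifs <;> simp_all
  E_sum := by ext l; simp [Finset.sum_apply, Pi.single_apply]
  E_a _ := by simp
  a_E _ := by simp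
  z_E _ := by simp
  z_a _ := by simp
  mesh := by simp

lemma aug_δ2 (u : Tot k v) : (augDatum k v).lift (δ2 u) = 0 := by
  simp only [δ2_apply, map_add, map_mul, map_sum, map_smul, Datum.lift_z, Datum.lift_a]
  simp [augDatum]

lemma aug_E (i : Fin Q.r) : (augDatum k v).lift ((taut v).E i) = Pi.single i 1 := by
  rw [Datum.lift_E]; rfl

lemma E_ne_zero (i : Fin Q.r) : (taut v).E i ≠ 0 := by
  intro h
  have := congrFun (aug_E (k := k) (v := v) i) i
  rw [h, map_zero] at this
  simp at this

/-- The radical is generated by the arrows and `z`. -/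
lemma exists_δ2 (x : QHAlg k Q v) :
    ∃ u, IsT u ∧ x = δ2 u + ∑ i, (augDatum k v).lift x i • (taut v).E i := by
  classical
  refine left_induction (p := fun x => ∃ u, IsT u ∧ x = δ2 u +
    ∑ i, (augDatum k v).lift x i • (taut v).E i) ?_ ?_ ?_ ?_ ?_ ?_ ?_ x
  · exact ⟨0, fun b => by simp, by simp [(taut v).E_sum]⟩
  · exact ⟨0, fun b => by simp, by simp⟩
  · rintro x y ⟨u, hu, hx⟩ ⟨u', hu', hy⟩
    refine ⟨u + u', fun b => ?_, ?_⟩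
    · simp [mul_add, hu b, hu' b]
    · conv_lhs => rw [hx, hy]
      simp only [map_add, Pi.add_apply, add_smul, Finset.sum_add_distrib]
      abel
  · rintro c x ⟨u, hu, hx⟩
    refine ⟨c • u, fun b => ?_, ?_⟩
    · simp [hu b]
    · conv_lhs => rw [hx]
      simp [Finset.smul_sum, mul_smul]
  · rintro i x ⟨u, hu, hx⟩
    refine ⟨(fun b => if dtgt Q b = i then u.1 b else 0, (taut v).E i * u.2), fun b => ?_, ?_⟩
    · dsimp only; split_ifs <;> simp [hu b]
    · conv_lhs => rw [hx]
      rw [mul_add]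
      congr 1
      · simp only [δ2_apply, mul_add, Finset.mul_sum, mul_smul_comm]
        congr 1
        · rw [← mul_assoc, ← mul_assoc, (taut v).z_E]
        · refine Finset.sum_congr rfl fun b _ => ?_
          rw [← mul_assoc, (taut v).E_a_ite, dtgt_bar]
          split_ifs <;> simp
      · rw [map_mul, aug_E]
        simp [Finset.mul_sum, (taut v).E_mul, Pi.single_apply, smul_ite]
  · rintro b x -
    refine ⟨(Pi.single (bar b) (sgn k b • ((taut v).E (dtgt Q b) * x)), 0), fun b' => ?_, ?_⟩
    · by_cases h : b' = bar b
      · subst h; simp [← mul_assoc, (taut v).E_idem]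
      · simp [h]
    · rw [map_mul, Datum.lift_a, δ2_apply, Finset.sum_eq_single b]
      · simp [augDatum, smul_smul, ← mul_assoc, (taut v).a_E]
      · intro b' _ hb'
        have : bar b' ≠ bar b := fun h => hb' (by rw [← bar_bar b', h, bar_bar])
        simp [this]
      · simp
  · rintro x -
    refine ⟨(0, x), fun b => by simp, ?_⟩
    rw [map_mul, Datum.lift_z, δ2_apply]
    simp [augDatum]

end Augmentation

namespace Wt

variable (W : Wt Q)

variable (v) in
/-- The homogeneous components of the Peirce corners. -/
def corner (n : ℤ) (i j : Fin Q.r) : Submodule k (QHAlg k Q v) where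
  carrier := {x | W.comp v n x = x ∧ (taut v).E i * x = x ∧ x * (taut v).E j = x}
  add_mem' := by
    rintro x y ⟨h1, h2, h3⟩ ⟨h4, h5, h6⟩
    exact ⟨by rw [map_add, h1, h4], by rw [mul_add, h2, h5], by rw [add_mul, h3, h6]⟩
  zero_mem' := by simp
  smul_mem' := by
    rintro c x ⟨h1, h2, h3⟩
    exact ⟨by rw [map_smul, h1], by rw [mul_smul_comm, h2], by rw [smul_mul_assoc, h3]⟩

variable (v) in
/-- Projection onto a homogeneous component of a corner. -/
noncomputable def cp (n : ℤ) (i j : Fin Q.r) : QHAlg k Q v →ₗ[k] QHAlg k Q v :=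
  LinearMap.mulLeft k ((taut v).E i) ∘ₗ LinearMap.mulRight k ((taut v).E j) ∘ₗ W.comp v n

lemma cp_apply (n : ℤ) (i j : Fin Q.r) (x : QHAlg k Q v) :
    W.cp v n i j x = (taut v).E i * (W.comp v n x * (taut v).E j) := rfl

lemma cp_mem (n : ℤ) (i j : Fin Q.r) (x : QHAlg k Q v) : W.cp v n i j x ∈ W.corner v n i j := by
  refine ⟨?_, ?_, ?_⟩
  · rw [cp_apply, comp_E_mul, comp_mul_E, comp_comp, if_pos rfl]
  · rw [cp_apply, ← mul_assoc, (taut v).E_idem]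
  · rw [cp_apply, mul_assoc, mul_assoc, (taut v).E_idem]

lemma cp_of_mem {n : ℤ} {i j : Fin Q.r} {x : QHAlg k Q v} (hx : x ∈ W.corner v n i j) :
    W.cp v n i j x = x := by
  rw [cp_apply, hx.1, hx.2.2, hx.2.1]

lemma cp_a (n : ℤ) (b : DArrow Q) (j : Fin Q.r) (x : QHAlg k Q v) :
    W.cp v (n + W.w b) (dsrc Q b) j ((taut v).a b * x) =
      (taut v).a b * W.cp v n (dtgt Q b) j x := by
  rw [cp_apply, cp_apply, comp_a_mul, mul_assoc, ← mul_assoc, (taut v).E_a,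
    ← mul_assoc _ ((taut v).E _),
    (taut v).a_E]

lemma cp_a_of_ne (n : ℤ) {b : DArrow Q} {i : Fin Q.r} (h : dsrc Q b ≠ i) (j : Fin Q.r)
    (x : QHAlg k Q v) : W.cp v n i j ((taut v).a b * x) = 0 := by
  rw [cp_apply, ← mul_assoc, ← comp_E_mul, ← mul_assoc, (taut v).E_a_ite, if_neg h]; simp

lemma a_cp_of_ne (n : ℤ) {b : DArrow Q} {i : Fin Q.r} (h : dtgt Q b ≠ i) (j : Fin Q.r)
    (x : QHAlg k Q v) : (taut v).a b * W.cp v n i j x = 0 := by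
  rw [cp_apply, ← mul_assoc, (taut v).a_E_ite, if_neg h, zero_mul]

lemma cp_z (n : ℤ) (i j : Fin Q.r) (x : QHAlg k Q v) :
    W.cp v (n + W.c) i j ((taut v).z * x) = (taut v).z * W.cp v n i j x := by
  rw [cp_apply, cp_apply, comp_z_mul, mul_assoc, ← mul_assoc, ← (taut v).z_E, mul_assoc]

lemma comp_V (n : ℤ) (x : QHAlg k Q v) :
    W.comp v n ((taut v).V * x) = (taut v).V * W.comp v n x := by
  simp [Datum.V, Finset.sum_mul, comp_E_mul]

lemma cp_V (n : ℤ) (i j : Fin Q.r) (x : QHAlg k Q v) :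
    W.cp v n i j ((taut v).V * x) = (taut v).V * W.cp v n i j x := by
  rw [cp_apply, cp_apply, comp_V, ← mul_assoc (taut v).V, (taut v).V_mul_E, mul_assoc,
    ← mul_assoc ((taut v).E i), (taut v).E_mul_V]

lemma cp_E (n : ℤ) (i j l : Fin Q.r) :
    W.cp v n i j ((taut v).E l) = if n = 0 ∧ i = j ∧ i = l then (taut v).E i else 0 := by
  rw [cp_apply, comp_E]
  by_cases h : n = 0
  · by_cases h' : i = l
    · subst h'
      by_cases h'' : i = j <;> simp [h, h'', (taut v).E_mul]
    · rw [← mul_assoc, if_pos h, (taut v).E_orth h']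
      simp [h']
  · simp [h]

/-- Projection on the total complex. -/
noncomputable def prT (n m : ℤ) (i j : Fin Q.r) (x : Tot k v) : Tot k v :=
  (fun b => if dtgt Q b = i then W.cp v (n + W.w b) (dsrc Q b) j (x.1 b) else 0,
    W.cp v m i j x.2)

variable (v) in
/-- Homogeneous components of the total complex. -/
noncomputable def UT (n m : ℤ) (i j : Fin Q.r) : Submodule k (Tot k v) :=
  (Submodule.pi Set.univ fun b =>
    if dtgt Q b = i then W.corner v (n + W.w b) (dsrc Q b) j else ⊥).prod (W.corner v m i j)

lemma prT_mem (n m : ℤ) (i j : Fin Q.r) (x : Tot k v) : W.prT n m i j x ∈ W.UT v n m i j := by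
  refine ⟨fun b _ => ?_, W.cp_mem _ _ _ _⟩
  dsimp only [prT]
  split_ifs
  · exact W.cp_mem _ _ _ _
  · exact zero_mem _

lemma prT_of_mem {n m : ℤ} {i j : Fin Q.r} {x : Tot k v} (hx : x ∈ W.UT v n m i j) :
    W.prT n m i j x = x := by
  refine Prod.ext (funext fun b => ?_) (W.cp_of_mem hx.2)
  have := hx.1 b trivial
  dsimp only [prT]
  dsimp only at this
  split_ifs at this ⊢
  · exact W.cp_of_mem this
  · simpa using this.symm

lemma isT_of_mem {n m : ℤ} {i j : Fin Q.r} {x : Tot k v} (hx : x ∈ W.UT v n m i j) : IsT x := by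
  intro b
  have := hx.1 b trivial
  dsimp only at this
  split_ifs at this
  · exact this.2.1
  · simp [(Submodule.mem_bot k).1 this]

lemma δ0_cp (n : ℤ) (i j : Fin Q.r) (x : QHAlg k Q v) :
    δ0 (W.cp v n i j x) = W.prT n (n + W.c) i j (δ0 x) := by
  refine Prod.ext (funext fun b => ?_) (W.cp_z _ _ _ _).symm
  dsimp only [prT, δ0_fst]
  split_ifs with h
  · subst h; exact (W.cp_a _ _ _ _).symm
  · exact W.a_cp_of_ne _ h _ _

lemma δ1_prT (n : ℤ) (i j : Fin Q.r) (x : Tot k v) :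
    δ1 (W.prT n (n + W.c) i j x) = W.prT (n + W.c) (n + W.c) i j (δ1 x) := by
  refine Prod.ext (funext fun b => ?_) ?_
  · dsimp only [prT, δ1_fst]
    split_ifs with h
    · subst h; rw [map_sub, cp_a, add_right_comm, cp_z]
    · rw [a_cp_of_ne _ _ h]; simp
  · simp only [prT, δ1_snd, map_sub, cp_V, map_sum, map_smul]
    congr 1
    refine Finset.sum_congr rfl fun b _ => ?_
    rw [dtgt_bar, dsrc_bar]
    split_ifs with h
    · subst h
      rw [← cp_a, add_assoc, add_comm (W.w _), W.w_add_bar]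
    · rw [W.cp_a_of_ne _ h]; simp

lemma cp_δ2 (n : ℤ) (i j : Fin Q.r) (x : Tot k v) :
    W.cp v (n + W.c) i j (δ2 x) = δ2 (W.prT n n i j x) := by
  simp only [prT, δ2_apply, map_add, cp_z, map_sum, map_smul]
  congr 1
  refine Finset.sum_congr rfl fun b _ => ?_
  rw [dtgt_bar, dsrc_bar]
  split_ifs with h
  · subst h
    rw [← cp_a, add_assoc, add_comm (W.w _), W.w_add_bar]
  · rw [W.cp_a_of_ne _ h]; simp

variable (v) in
/-- Homogeneous components of the socle. -/
noncomputable def soc (n : ℤ) (i j : Fin Q.r) : Submodule k (QHAlg k Q v) :=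
  W.corner v n i j ⊓ LinearMap.ker δ0

variable (v) in
/-- Dimensions of the homogeneous components of the corners. -/
noncomputable def hd (n : ℤ) (i j : Fin Q.r) : ℕ := Module.finrank k (W.corner v n i j)

variable (v) in
/-- Dimensions of the homogeneous components of the socle. -/
noncomputable def sd (n : ℤ) (i j : Fin Q.r) : ℕ := Module.finrank k (W.soc v n i j)

variable [FiniteDimensional k (QHAlg k Q v)]

lemma finrank_UT (n m : ℤ) (i j : Fin Q.r) : Module.finrank k (W.UT v n m i j) =
    (∑ b, if dtgt Q b = i then W.hd v (n + W.w b) (dsrc Q b) j else 0) + W.hd v m i j := by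
  rw [UT, finrank_prod_submodule, finrank_pi_submodule, hd]
  congr 1
  refine Finset.sum_congr rfl fun b _ => ?_
  by_cases h : dtgt Q b = i
  · rw [if_pos h, if_pos h, hd]
  · rw [if_neg h, if_neg h, finrank_bot]

lemma finrank_map_δ2 (n : ℤ) (i j : Fin Q.r) :
    Module.finrank k ((W.UT v n n i j).map δ2) + (if n + W.c = 0 ∧ i = j then 1 else 0) =
      W.hd v (n + W.c) i j := by
  have hle : (W.UT v n n i j).map δ2 ≤ W.corner v (n + W.c) i j := by
    rintro _ ⟨u, hu, rfl⟩
    rw [← W.prT_of_mem hu, ← cp_δ2]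
    exact W.cp_mem _ _ _ _
  have hdec (x) (hx : x ∈ W.corner v (n + W.c) i j) : ∃ u ∈ W.UT v n n i j, x = δ2 u +
      ∑ l, (augDatum k v).lift x l • if n + W.c = 0 ∧ i = j ∧ i = l then (taut v).E i else 0 := by
    obtain ⟨u, -, hxu⟩ := exists_δ2 x
    refine ⟨W.prT n n i j u, W.prT_mem _ _ _ _ _, ?_⟩
    conv_lhs => rw [← W.cp_of_mem hx, hxu, map_add, cp_δ2, map_sum]
    simp only [map_smul, cp_E]
  split_ifs with h
  · obtain ⟨h1, rfl⟩ := h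
    have hE : (taut v).E i ∈ W.corner v (n + W.c) i i :=
      ⟨by simp [h1, comp_E], (taut v).E_idem i, (taut v).E_idem i⟩
    have hsup : (W.UT v n n i i).map δ2 ⊔ Submodule.span k {(taut v).E i} =
        W.corner v (n + W.c) i i := by
      refine le_antisymm (sup_le hle ((Submodule.span_singleton_le_iff_mem _ _).2 hE)) ?_
      intro x hx
      obtain ⟨u, hu, hxu⟩ := hdec x hx
      rw [hxu]
      refine Submodule.add_mem_sup ⟨u, hu, rfl⟩ (Submodule.sum_mem _ fun l _ => ?_)
      refine Submodule.smul_mem _ _ ?_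
      split_ifs
      · exact Submodule.mem_span_singleton_self _
      · exact zero_mem _
    have hinf : (W.UT v n n i i).map δ2 ⊓ Submodule.span k {(taut v).E i} = ⊥ := by
      rw [eq_bot_iff]
      rintro _ ⟨⟨u, -, rfl⟩, hu⟩
      obtain ⟨c, hc⟩ := Submodule.mem_span_singleton.1 hu
      have h3 := congrFun (congrArg (augDatum k v).lift hc) i
      rw [aug_δ2, map_smul, aug_E] at h3
      have hc0 : c = 0 := by simpa using h3
      rw [Submodule.mem_bot, ← hc, hc0, zero_smul]
    have := Submodule.finrank_sup_add_finrank_inf_eq ((W.UT v n n i i).map δ2)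
      (Submodule.span k {(taut v).E i})
    rw [hsup, hinf, finrank_bot, finrank_span_singleton (E_ne_zero i)] at this
    rw [hd, ← this, add_zero]
  · rw [add_zero, hd]
    refine congrArg (fun U : Submodule k (QHAlg k Q v) => Module.finrank k U)
      (le_antisymm hle fun x hx => ?_)
    obtain ⟨u, hu, hxu⟩ := hdec x hx
    refine ⟨u, hu, ?_⟩
    rw [hxu, Finset.sum_eq_zero, add_zero]
    intro l _
    rw [if_neg (fun h' => h ⟨h'.1, h'.2.1⟩), smul_zero]

lemma map_δ1 (n : ℤ) (i j : Fin Q.r) : (W.UT v n (n + W.c) i j).map δ1 =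
    W.UT v (n + W.c) (n + W.c) i j ⊓ LinearMap.ker δ2 := by
  refine le_antisymm ?_ ?_
  · rintro _ ⟨x, hx, rfl⟩
    refine ⟨?_, δ2_δ1 x⟩
    rw [← W.prT_of_mem hx, δ1_prT]
    exact W.prT_mem _ _ _ _ _
  · rintro u ⟨hu, hu2⟩
    obtain ⟨x, -, rfl⟩ := exists_δ1_eq (W.isT_of_mem hu) hu2
    exact ⟨_, W.prT_mem _ _ _ _ x, by rw [δ1_prT, W.prT_of_mem hu]⟩

omit [FiniteDimensional k (QHAlg k Q v)] in
lemma map_δ0_le (n : ℤ) (i j : Fin Q.r) : (W.corner v n i j).map δ0 ≤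
    W.UT v n (n + W.c) i j ⊓ LinearMap.ker δ1 := by
  rintro _ ⟨x, hx, rfl⟩
  refine ⟨?_, δ1_δ0 x⟩
  rw [← W.cp_of_mem hx, δ0_cp]
  exact W.prT_mem _ _ _ _ _

omit [FiniteDimensional k (QHAlg k Q v)] in
lemma map_δ0 (hex : ∀ x : Tot k v, IsT x → δ1 x = 0 → ∃ f, δ0 f = x) (n : ℤ) (i j : Fin Q.r) :
    (W.corner v n i j).map δ0 = W.UT v n (n + W.c) i j ⊓ LinearMap.ker δ1 := by
  refine le_antisymm (W.map_δ0_le n i j) ?_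
  rintro u ⟨hu, hu2⟩
  obtain ⟨x, rfl⟩ := hex u (W.isT_of_mem hu) hu2
  exact ⟨_, W.cp_mem _ _ _ x, by rw [δ0_cp, W.prT_of_mem hu]⟩

lemma euler_aux (n : ℤ) (i j : Fin Q.r) :
    W.hd v n i j + (∑ b, if dtgt Q b = i then W.hd v (n + W.c + W.w b) (dsrc Q b) j else 0) +
      (if n + W.c + W.c = 0 ∧ i = j then 1 else 0) +
      Module.finrank k (W.UT v n (n + W.c) i j ⊓ LinearMap.ker δ1 : Submodule k (Tot k v)) =
    W.sd v n i j + (∑ b, if dtgt Q b = i then W.hd v (n + W.w b) (dsrc Q b) j else 0) +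
      W.hd v (n + W.c + W.c) i j + Module.finrank k ((W.corner v n i j).map δ0) := by
  have h0 := finrank_map_add_finrank_inf_ker δ0 (W.corner v n i j)
  have h1 := finrank_map_add_finrank_inf_ker δ1 (W.UT v n (n + W.c) i j)
  have h2 := finrank_map_add_finrank_inf_ker δ2 (W.UT v (n + W.c) (n + W.c) i j)
  have h3 := W.finrank_map_δ2 (v := v) (n + W.c) i j
  rw [finrank_UT, W.map_δ1] at h1
  rw [finrank_UT] at h2
  rw [sd, soc]
  change _ = W.hd v n i j at h0
  omega

/-- The Euler characteristic of the total complex. -/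
lemma euler (hex : ∀ x : Tot k v, IsT x → δ1 x = 0 → ∃ f, δ0 f = x) (n : ℤ) (i j : Fin Q.r) :
    W.hd v n i j + (∑ b, if dtgt Q b = i then W.hd v (n + W.c + W.w b) (dsrc Q b) j else 0) +
      (if n + W.c + W.c = 0 ∧ i = j then 1 else 0) =
    W.sd v n i j + (∑ b, if dtgt Q b = i then W.hd v (n + W.w b) (dsrc Q b) j else 0) +
      W.hd v (n + W.c + W.c) i j := by
  have := W.euler_aux (v := v) n i j
  rw [W.map_δ0 hex] at this
  omega

end Wt

variable [FiniteDimensional k (QHAlg k Q v)]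

/-- The trivial weighting. -/
def Wt.zero (Q : FinQuiver) : Wt Q := ⟨0, 0, by simp, by simp, le_rfl⟩

/-- Exactness of the total complex at the first step. -/
lemma exact_δ0 (x : Tot k v) (hx : IsT x) (h : δ1 x = 0) : ∃ f, δ0 f = x := by
  have key (i : Fin Q.r) : ∃ w : QHAlg k Q v, w ∈ (Wt.zero Q).soc v 0 i i ∧ w ≠ 0 := by
    have h1 := (Wt.zero Q).euler_aux (v := v) 0 i i
    have h2 := Submodule.finrank_mono ((Wt.zero Q).map_δ0_le (v := v) 0 i i)
    have h3 : 1 ≤ (Wt.zero Q).sd v 0 i i := by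
      simp [Wt.zero, -Fintype.sum_sum_type] at h1 h2 ⊢
      omega
    refine (Submodule.ne_bot_iff _).1 fun h0 => ?_
    rw [Wt.sd, h0, finrank_bot] at h3
    omega
  choose w hw hw0 using key
  refine exists_δ0_eq (w := w) (fun i => (hw i).1.2.1) (fun b i => ?_) (fun i => ?_) hw0 hx h
  · exact congrFun (congrArg Prod.fst (hw i).2) b
  · exact congrArg Prod.snd (hw i).2

end QuiverHeisenberg

namespace QuiverHeisenberg

variable {k : Type} [Field k] {Q : FinQuiver} {v : Fin Q.r → k}

section Tits

variable {X : Type} [AddCommGroup X] [Module k X]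

/-- The Peirce corner of the endomorphism algebra. -/
def endCorner (P P' : Module.End k X) : Submodule k (Module.End k X) where
  carrier := {g | P * g = g ∧ g * P' = g}
  add_mem' := by
    rintro x y ⟨h1, h2⟩ ⟨h3, h4⟩
    exact ⟨by rw [mul_add, h1, h3], by rw [add_mul, h2, h4]⟩
  zero_mem' := by simp
  smul_mem' := by
    rintro c x ⟨h1, h2⟩
    exact ⟨by rw [mul_smul_comm, h1], by rw [smul_mul_assoc, h2]⟩

variable [FiniteDimensional k X]

lemma finrank_endCorner {P P' : Module.End k X} (hP : P * P = P) (hP' : P' * P' = P') :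
    Module.finrank k (endCorner P P') =
      Module.finrank k (LinearMap.range P) * Module.finrank k (LinearMap.range P') := by
  rw [mul_comm, ← Module.finrank_linearMap]
  refine LinearEquiv.finrank_eq
    { toFun := fun g => (g.1.domRestrict (LinearMap.range P')).codRestrict (LinearMap.range P)
        fun x => ⟨g.1 x, LinearMap.congr_fun g.2.1 x⟩
      invFun := fun h => ⟨(LinearMap.range P).subtype ∘ₗ h ∘ₗ P'.rangeRestrict, ?_, ?_⟩
      map_add' := fun _ _ => rfl
      map_smul' := fun _ _ => rfl
      left_inv := ?_
      right_inv := ?_ }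
  · ext x
    obtain ⟨y, hy⟩ := (h (P'.rangeRestrict x)).2
    change P (h (P'.rangeRestrict x)).1 = (h (P'.rangeRestrict x)).1
    rw [← hy]
    exact LinearMap.congr_fun hP y
  · ext x
    change (h (P'.rangeRestrict (P' x))).1 = (h (P'.rangeRestrict x)).1
    congr 2
    exact Subtype.ext (LinearMap.congr_fun hP' x)
  · intro g
    ext x
    exact LinearMap.congr_fun g.2.2 x
  · intro h
    ext ⟨x, y, rfl⟩
    change (h (P'.rangeRestrict (P' y))).1 = (h _).1
    congr 2
    exact Subtype.ext (LinearMap.congr_fun hP' y)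

variable (R : Datum v (Module.End k X))

lemma Datum.sum_finrank_range :
    ∑ i, Module.finrank k (LinearMap.range (R.E i)) = Module.finrank k X := by
  rw [← Module.finrank_pi_fintype]
  refine (LinearEquiv.finrank_eq
    { toFun := fun x i => (R.E i).rangeRestrict x
      invFun := fun f => ∑ i, (f i).1
      map_add' := fun _ _ => by ext; simp
      map_smul' := fun _ _ => by ext; simp
      left_inv := fun x => R.E_sum_apply x
      right_inv := fun f => ?_ }).symm
  ext i
  have hf (j) : R.E i (f j).1 = if i = j then (f j).1 else 0 := by
    obtain ⟨y, hy⟩ := (f j).2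
    rw [← hy, R.E_E_apply]
    split_ifs with h
    · rw [h]
    · rfl
  change R.E i (∑ j, (f j).1) = _
  rw [map_sum]
  simp [hf]

/-- Dimension vector. -/
noncomputable def Datum.dim (i : Fin Q.r) : ℕ := Module.finrank k (LinearMap.range (R.E i))

/-- Endomorphisms of the underlying graded vector space. -/
def gradedEnd : Submodule k (Fin Q.r → Module.End k X) :=
  Submodule.pi Set.univ fun i => endCorner (R.E i) (R.E i)

/-- Representation space of the double quiver. -/
def repSpace : Submodule k (DArrow Q → Module.End k X) :=
  Submodule.pi Set.univ fun b => endCorner (R.E (dsrc Q b)) (R.E (dtgt Q b))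

lemma finrank_gradedEnd : Module.finrank k (gradedEnd R) = ∑ i, R.dim i * R.dim i := by
  rw [gradedEnd, finrank_pi_submodule]
  exact Finset.sum_congr rfl fun i _ => finrank_endCorner (R.E_idem i) (R.E_idem i)

lemma finrank_repSpace : Module.finrank k (repSpace R) =
    2 * ∑ e, R.dim (Q.src e) * R.dim (Q.tgt e) := by
  rw [repSpace, finrank_pi_submodule]
  have (b : DArrow Q) := finrank_endCorner (R.E_idem (dsrc Q b)) (R.E_idem (dtgt Q b))
  simp only [this]
  rw [Fintype.sum_sum_type, two_mul]
  congr 1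
  exact Finset.sum_congr rfl fun e _ => mul_comm _ _

/-- The infinitesimal action. -/
def infAct : gradedEnd R →ₗ[k] repSpace R where
  toFun f := ⟨fun b => R.a b * f.1 (dtgt Q b) - f.1 (dsrc Q b) * R.a b, fun b _ => by
    have h1 := (f.2 (dsrc Q b) trivial).1
    have h2 := (f.2 (dtgt Q b) trivial).2
    constructor
    · rw [mul_sub, ← mul_assoc, R.E_a, ← mul_assoc, h1]
    · rw [sub_mul, mul_assoc, h2, mul_assoc, R.a_E]⟩
  map_add' f g := by
    refine Subtype.ext (funext fun b => ?_)
    simp [mul_add, add_mul]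
    abel
  map_smul' c f := by
    refine Subtype.ext (funext fun b => ?_)
    simp [smul_sub]

/-- The symplectic form. -/
noncomputable def sympl : LinearMap.BilinForm k (repSpace R) :=
  LinearMap.mk₂ k (fun g g' => ∑ b, sgn k b * LinearMap.trace k X (g.1 b * g'.1 (bar b)))
    (fun g₁ g₂ g' => by simp [add_mul, mul_add, Finset.sum_add_distrib, -Fintype.sum_sum_type])
    (fun c g g' => by simp [Finset.mul_sum, mul_left_comm, -Fintype.sum_sum_type])
    (fun g₁ g₂ g' => by simp [mul_add, Finset.sum_add_distrib, -Fintype.sum_sum_type])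
    (fun c g g' => by simp [Finset.mul_sum, mul_left_comm, -Fintype.sum_sum_type])

omit [FiniteDimensional k X] in
lemma sympl_apply (g g' : repSpace R) : sympl R g g' =
    ∑ b, sgn k b * LinearMap.trace k X (g.1 b * g'.1 (bar b)) := rfl

omit [FiniteDimensional k X] in
lemma sympl_swap (g g' : repSpace R) : sympl R g g' = - sympl R g' g := by
  rw [sympl_apply, sympl_apply, ← sum_bar, ← Finset.sum_neg_distrib]
  refine Finset.sum_congr rfl fun b _ => ?_
  rw [bar_bar, sgn_bar, LinearMap.trace_mul_comm]
  ring

lemma eq_zero_of_trace_mul {g : Module.End k X} (h : ∀ x, LinearMap.trace k X (g * x) = 0) :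
    g = 0 := by
  ext y
  by_contra hne
  obtain ⟨ξ, hξ⟩ := Module.Projective.exists_dual_ne_zero k hne
  have h2 := h (ξ.smulRight y)
  have h' : g * ξ.smulRight y = ξ.smulRight (g y) := by ext; simp
  rw [h', LinearMap.trace_smulRight] at h2
  exact hξ h2

lemma sympl_nondeg : (sympl R).Nondegenerate := by
  classical
  have key (g : repSpace R) (h : ∀ g', sympl R g g' = 0) : g = 0 := by
    refine Subtype.ext (funext fun b => ?_)
    have hg := g.2 b trivial
    have h1 (x : Module.End k X) : LinearMap.trace k X (g.1 b * x) = 0 := by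
      have := h ⟨Pi.single (bar b) (R.E (dtgt Q b) * x * R.E (dsrc Q b)), ?_⟩
      · rw [sympl_apply, Finset.sum_eq_single b] at this
        · have h2 := (mul_eq_zero.1 this).resolve_left (sgn_ne_zero k b)
          rw [← h2]
          simp only [Pi.single_eq_same]
          rw [← mul_assoc, ← mul_assoc, hg.2, LinearMap.trace_mul_comm k _ (R.E _), ← mul_assoc,
            hg.1]
        · intro b' _ hb'
          have : bar b' ≠ bar b := fun h => hb' (by rw [← bar_bar b', h, bar_bar])
          simp [this]
        · simp
      · intro b' _
        by_cases hb : b' = bar b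
        · subst hb
          simp only [Pi.single_eq_same, dsrc_bar, dtgt_bar]
          constructor
          · rw [← mul_assoc, ← mul_assoc, R.E_idem]
          · rw [mul_assoc, R.E_idem]
        · simp only [Pi.single_eq_of_ne hb]
          exact zero_mem _
    exact eq_zero_of_trace_mul h1
  refine ⟨key, fun g h => key g fun g' => ?_⟩
  rw [sympl_swap, h, neg_zero]

omit [FiniteDimensional k X] in
lemma sympl_infAct (hz : R.z = 0) (f g : gradedEnd R) : sympl R (infAct R f) (infAct R g) = 0 := by
  have hf (b : DArrow Q) : (∑ i, f.1 i) * R.a b = f.1 (dsrc Q b) * R.a b := by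
    rw [Finset.sum_mul, Finset.sum_eq_single (dsrc Q b)]
    · intro i _ hi
      rw [← (f.2 i trivial).2, mul_assoc, R.E_a_ite, if_neg hi.symm, mul_zero]
    · simp
  have hf' (b : DArrow Q) : R.a b * (∑ i, f.1 i) = R.a b * f.1 (dtgt Q b) := by
    rw [Finset.mul_sum, Finset.sum_eq_single (dtgt Q b)]
    · intro i _ hi
      rw [← (f.2 i trivial).1, ← mul_assoc, R.a_E_ite, if_neg hi.symm, zero_mul]
    · simp
  have hg (b : DArrow Q) : (∑ i, g.1 i) * R.a b = g.1 (dsrc Q b) * R.a b := by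
    rw [Finset.sum_mul, Finset.sum_eq_single (dsrc Q b)]
    · intro i _ hi
      rw [← (g.2 i trivial).2, mul_assoc, R.E_a_ite, if_neg hi.symm, mul_zero]
    · simp
  have hg' (b : DArrow Q) : R.a b * (∑ i, g.1 i) = R.a b * g.1 (dtgt Q b) := by
    rw [Finset.mul_sum, Finset.sum_eq_single (dtgt Q b)]
    · intro i _ hi
      rw [← (g.2 i trivial).1, ← mul_assoc, R.a_E_ite, if_neg hi.symm, zero_mul]
    · simp
  have hm : ∑ b, sgn k b • (R.a b * R.a (bar b)) = 0 := by rw [R.mesh', hz, mul_zero]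
  set F := ∑ i, f.1 i
  set G := ∑ i, g.1 i
  have h1 : sympl R (infAct R f) (infAct R g) = ∑ b, sgn k b * LinearMap.trace k X
      ((R.a b * F - F * R.a b) * (R.a (bar b) * G - G * R.a (bar b))) := by
    refine Finset.sum_congr rfl fun b _ => ?_
    rw [hf, hf', hg, hg']
    rfl
  have h2 (b : DArrow Q) : LinearMap.trace k X
      ((R.a b * F - F * R.a b) * (R.a (bar b) * G - G * R.a (bar b))) =
      (LinearMap.trace k X (F * (R.a (bar b) * G * R.a b)) +
        LinearMap.trace k X (F * (R.a b * G * R.a (bar b)))) -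
      (LinearMap.trace k X (F * G * (R.a (bar b) * R.a b)) +
        LinearMap.trace k X (F * (R.a b * R.a (bar b)) * G)) := by
    rw [sub_mul, mul_sub, mul_sub, map_sub, map_sub, map_sub]
    have e1 : LinearMap.trace k X (R.a b * F * (R.a (bar b) * G)) =
        LinearMap.trace k X (F * (R.a (bar b) * G * R.a b)) := by
      rw [mul_assoc, LinearMap.trace_mul_comm]
      simp only [mul_assoc]
    have e2 : LinearMap.trace k X (R.a b * F * (G * R.a (bar b))) =
        LinearMap.trace k X (F * G * (R.a (bar b) * R.a b)) := by
      rw [mul_assoc, LinearMap.trace_mul_comm]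
      simp only [mul_assoc]
    rw [e1, e2]
    simp only [mul_assoc]
    ring
  rw [h1, Finset.sum_congr rfl fun b _ => congrArg (sgn k b * ·) (h2 b)]
  simp only [mul_sub, mul_add, Finset.sum_sub_distrib, Finset.sum_add_distrib]
  have h3 : ∑ b : DArrow Q, sgn k b * LinearMap.trace k X (F * (R.a (bar b) * G * R.a b)) =
      - ∑ b : DArrow Q, sgn k b * LinearMap.trace k X (F * (R.a b * G * R.a (bar b))) := by
    rw [← sum_bar, ← Finset.sum_neg_distrib]
    simp
  have h4 : ∑ b : DArrow Q, sgn k b * LinearMap.trace k X (F * (R.a b * R.a (bar b)) * G) = 0 := by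
    have := congrArg (fun x => LinearMap.trace k X (F * x * G)) hm
    simpa [Finset.mul_sum, Finset.sum_mul, -Fintype.sum_sum_type] using this
  have h5 : ∑ b : DArrow Q, sgn k b * LinearMap.trace k X (F * G * (R.a (bar b) * R.a b)) = 0 := by
    have := congrArg (fun x => LinearMap.trace k X (F * G * x)) hm
    rw [← sum_bar] at this
    simpa [Finset.mul_sum, Finset.sum_mul, -Fintype.sum_sum_type] using this
  rw [h3, h4, h5]
  ring

/-- An isotropic subspace has at most half the dimension. -/
lemma finrank_range_infAct (hz : R.z = 0) : 2 * Module.finrank k (LinearMap.range (infAct R)) ≤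
    Module.finrank k (repSpace R) := by
  have h := LinearMap.BilinForm.finrank_orthogonal (sympl_nondeg R) (LinearMap.range (infAct R))
  have h' : LinearMap.range (infAct R) ≤ (sympl R).orthogonal (LinearMap.range (infAct R)) := by
    rintro _ ⟨f, rfl⟩ _ ⟨g, rfl⟩
    exact sympl_infAct R hz g f
  have h1 := Submodule.finrank_mono h'
  have h2 := Submodule.finrank_le (LinearMap.range (infAct R))
  omega

/-- For a cyclic module killed by `z` the Tits form is bounded by the dimension. -/
lemma tits_le (hz : R.z = 0) (x₀ : X)
    (hgen : ∀ f : Module.End k X, (∀ i, R.E i * f = f * R.E i) → (∀ b, R.a b * f = f * R.a b) →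
      f x₀ = 0 → f = 0) :
    ∑ i, R.dim i * R.dim i ≤ ∑ e, R.dim (Q.src e) * R.dim (Q.tgt e) + ∑ i, R.dim i := by
  have h1 := LinearMap.finrank_range_add_finrank_ker (infAct R)
  have h2 := finrank_range_infAct R hz
  rw [finrank_repSpace] at h2
  rw [finrank_gradedEnd] at h1
  suffices h : Module.finrank k (LinearMap.ker (infAct R)) ≤ Module.finrank k X by
    have h3 : ∑ i, R.dim i = Module.finrank k X := R.sum_finrank_range
    omega
  let ev : LinearMap.ker (infAct R) →ₗ[k] X :=
    { toFun := fun f => (∑ i, f.1.1 i) x₀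
      map_add' := fun f g => by simp [Finset.sum_add_distrib]
      map_smul' := fun c f => by simp [Finset.smul_sum] }
  refine LinearMap.finrank_le_finrank_of_injective (f := ev) fun f g hfg => ?_
  have hE (f : gradedEnd R) (i) : R.E i * ∑ j, f.1 j = f.1 i := by
    rw [Finset.mul_sum, Finset.sum_eq_single i]
    · exact (f.2 i trivial).1
    · intro j _ hj
      rw [← (f.2 j trivial).1, ← mul_assoc, R.E_orth hj.symm, zero_mul]
    · simp
  have hE' (f : gradedEnd R) (i) : (∑ j, f.1 j) * R.E i = f.1 i := by
    rw [Finset.sum_mul, Finset.sum_eq_single i]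
    · exact (f.2 i trivial).2
    · intro j _ hj
      rw [← (f.2 j trivial).2, mul_assoc, R.E_orth hj, mul_zero]
    · simp
  have ha (f : LinearMap.ker (infAct R)) (b) :
      R.a b * ∑ j, f.1.1 j = (∑ j, f.1.1 j) * R.a b := by
    have h3 : R.a b * f.1.1 (dtgt Q b) - f.1.1 (dsrc Q b) * R.a b = 0 :=
      congrFun (congrArg Subtype.val f.2) b
    rw [← R.a_E, mul_assoc, hE, R.a_E, sub_eq_zero.1 h3, ← hE', mul_assoc, R.E_a]
  have h0 : ∑ j, f.1.1 j - ∑ j, g.1.1 j = 0 := by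
    refine hgen _ (fun i => ?_) (fun b => ?_) ?_
    · rw [mul_sub, hE, hE, sub_mul, hE', hE']
    · rw [mul_sub, ha, ha, sub_mul]
    · rw [LinearMap.sub_apply, sub_eq_zero]
      exact hfg
  refine Subtype.ext (Subtype.ext (funext fun i => ?_))
  rw [← hE, sub_eq_zero.1 h0, hE]

end Tits

end QuiverHeisenberg

namespace QuiverHeisenberg

variable {k : Type} [Field k] {Q : FinQuiver} {v : Fin Q.r → k}

/-- A positive definite Tits form is coercive. -/
lemma exists_coercive (hD : Q.IsDynkin) :
    ∃ ε > 0, ∀ x : Fin Q.r → ℝ, ε * ‖x‖ ^ 2 ≤ Q.titsForm x := by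
  have hcont : Continuous Q.titsForm := by unfold FinQuiver.titsForm; fun_prop
  have hsm (c : ℝ) (x : Fin Q.r → ℝ) : Q.titsForm (c • x) = c ^ 2 * Q.titsForm x := by
    simp only [FinQuiver.titsForm, Pi.smul_apply, smul_eq_mul, mul_sub, Finset.mul_sum]
    congr 1 <;> exact Finset.sum_congr rfl fun _ _ => by ring
  rcases (Metric.sphere (0 : Fin Q.r → ℝ) 1).eq_empty_or_nonempty with h | h
  · refine ⟨1, one_pos, fun x => ?_⟩
    have hx : x = 0 := by
      by_contra hx
      have : ‖x‖⁻¹ • x ∈ Metric.sphere (0 : Fin Q.r → ℝ) 1 := by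
        simp [norm_smul, hx]
      rw [h] at this
      exact this
    simp [hx, FinQuiver.titsForm]
  · obtain ⟨y, hy, hmin⟩ := (isCompact_sphere (0 : Fin Q.r → ℝ) 1).exists_isMinOn h
      hcont.continuousOn
    refine ⟨Q.titsForm y, hD y ?_, fun x => ?_⟩
    · rintro rfl
      simp at hy
    · by_cases hx : x = 0
      · simp [hx, FinQuiver.titsForm]
      · have hx' : ‖x‖ ≠ 0 := by simpa using hx
        have h1 : Q.titsForm y ≤ Q.titsForm (‖x‖⁻¹ • x) := hmin (by simp [norm_smul, hx])
        rw [hsm, inv_pow] at h1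
        have h2 : 0 < ‖x‖ ^ 2 := by positivity
        calc Q.titsForm y * ‖x‖ ^ 2 ≤ (‖x‖ ^ 2)⁻¹ * Q.titsForm x * ‖x‖ ^ 2 := by gcongr
          _ = _ := by field_simp

lemma exists_bound (hD : Q.IsDynkin) : ∃ N : ℕ, ∀ x : Fin Q.r → ℕ,
    ∑ i, x i * x i ≤ ∑ e, x (Q.src e) * x (Q.tgt e) + ∑ i, x i → ∑ i, x i ≤ N := by
  obtain ⟨ε, hε, h⟩ := exists_coercive hD
  refine ⟨⌈Q.r * (Q.r / ε)⌉₊, fun x hx => ?_⟩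
  set y : Fin Q.r → ℝ := fun i => x i with hy
  have h1 : Q.titsForm y ≤ ∑ i, y i := by
    have : (∑ i, y i * y i) ≤ ∑ e, y (Q.src e) * y (Q.tgt e) + ∑ i, y i := by
      simp only [hy]; exact_mod_cast hx
    simp only [FinQuiver.titsForm, pow_two]
    linarith
  have h2 : ∑ i, y i ≤ Q.r * ‖y‖ := by
    calc ∑ i, y i ≤ ∑ _i : Fin Q.r, ‖y‖ :=
          Finset.sum_le_sum fun i _ => (le_abs_self _).trans (norm_le_pi_norm y i)
      _ = _ := by simp
  have h3 := h y
  have h4 : ‖y‖ ≤ Q.r / ε := by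
    rw [le_div_iff₀ hε]
    by_cases h0 : ‖y‖ = 0
    · simp [h0]
    · have : 0 < ‖y‖ := lt_of_le_of_ne (norm_nonneg _) (Ne.symm h0)
      nlinarith
  have h5 : ((∑ i, x i : ℕ) : ℝ) ≤ Q.r * (Q.r / ε) := by
    push_cast
    exact h2.trans (by gcongr)
  exact_mod_cast h5.trans (Nat.le_ceil _)

/-- The standard grading. -/
def Wt.std (Q : FinQuiver) : Wt Q :=
  ⟨fun _ => 1, 2, fun _ => rfl, fun _ => by norm_num, by norm_num⟩

section Filtration

local notation "gr" => Wt.comp v (Wt.std Q)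

lemma gr_a (b : DArrow Q) (n : ℤ) (x : QHAlg k Q v) :
    gr n ((taut v).a b * x) = (taut v).a b * gr (n - 1) x := by
  have := (Wt.std Q).comp_a_mul b (n - 1) x
  rwa [show (n - 1) + (Wt.std Q).w b = n from sub_add_cancel _ _] at this

lemma gr_z (n : ℤ) (x : QHAlg k Q v) :
    gr n ((taut v).z * x) = (taut v).z * gr (n - 2) x := by
  have := (Wt.std Q).comp_z_mul (n - 2) x
  rwa [show (n - 2) + (Wt.std Q).c = n from sub_add_cancel _ _] at this

lemma gr_δ2 (n : ℤ) (u : Tot k v) :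
    gr n (δ2 u) = δ2 (fun b => gr (n - 1) (u.1 b), gr (n - 2) u.2) := by
  simp [δ2_apply, gr_z, gr_a, -Fintype.sum_sum_type]

lemma finiteDimensional_gr (n : ℤ) : FiniteDimensional k (LinearMap.range (gr n)) := by
  suffices h : ∀ (N : ℕ) (n : ℤ), n < N → FiniteDimensional k (LinearMap.range (gr n)) from
    h (n.toNat + 1) n (by push_cast; have := Int.self_le_toNat n; omega)
  intro N
  induction N with
  | zero =>
    intro n hn
    have : gr n = 0 := LinearMap.ext fun x => Wt.comp_of_neg _ (by exact_mod_cast hn) x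
    rw [this, LinearMap.range_zero]
    infer_instance
  | succ N ih =>
    intro n hn
    push_cast at hn
    have h1 := ih (n - 1) (by omega)
    have h2 := ih (n - 2) (by omega)
    let f : ((DArrow Q → LinearMap.range (gr (n - 1))) × LinearMap.range (gr (n - 2))) ×
        (Fin Q.r → k) →ₗ[k] QHAlg k Q v :=
      { toFun := fun x => δ2 (fun b => (x.1.1 b).1, x.1.2.1) + ∑ i, x.2 i • (taut v).E i
        map_add' := fun x y => by
          simp [δ2_apply, mul_add, add_smul, Finset.sum_add_distrib, -Fintype.sum_sum_type]
          abel
        map_smul' := fun c x => by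
          simp [δ2_apply, Finset.smul_sum, smul_smul, mul_comm, -Fintype.sum_sum_type] }
    refine Submodule.finiteDimensional_of_le (S₂ := LinearMap.range f) ?_
    rintro _ ⟨x, rfl⟩
    obtain ⟨u, -, hx⟩ := exists_δ2 x
    refine ⟨((fun b => ⟨_, u.1 b, rfl⟩, ⟨_, u.2, rfl⟩),
      fun i => if n = 0 then (augDatum k v).lift x i else 0), ?_⟩
    conv_rhs => rw [hx, map_add, gr_δ2, map_sum]
    refine congrArg (δ2 _ + ·) (Finset.sum_congr rfl fun i _ => ?_)
    rw [map_smul, Wt.comp_E]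
    split_ifs <;> simp

variable (k v) in
/-- The ideal generated by `z`. -/
noncomputable def zId : Submodule k (QHAlg k Q v) :=
  LinearMap.range (LinearMap.mulLeft k (taut v).z)

lemma a_mem_zId (b : DArrow Q) {x : QHAlg k Q v} (hx : x ∈ zId k v) :
    (taut v).a b * x ∈ zId k v := by
  obtain ⟨y, rfl⟩ := hx
  exact ⟨(taut v).a b * y, by simp [← mul_assoc, (taut v).z_a]⟩

lemma E_mem_zId (i : Fin Q.r) {x : QHAlg k Q v} (hx : x ∈ zId k v) :
    (taut v).E i * x ∈ zId k v := by
  obtain ⟨y, rfl⟩ := hx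
  exact ⟨(taut v).E i * y, by simp [← mul_assoc, (taut v).z_E]⟩

lemma z_mem_zId (x : QHAlg k Q v) : (taut v).z * x ∈ zId k v := ⟨x, rfl⟩

variable (k v) in
/-- The ideal generated by `z` and the components of degree at least `n`. -/
noncomputable def filt (n : ℕ) : Submodule k (QHAlg k Q v) where
  carrier := {x | ∀ m : ℤ, m < n → gr m x ∈ zId k v}
  add_mem' hx hy m hm := by rw [map_add]; exact add_mem (hx m hm) (hy m hm)
  zero_mem' m _ := by rw [map_zero]; exact zero_mem _
  smul_mem' c x hx m hm := by rw [map_smul]; exact Submodule.smul_mem _ _ (hx m hm)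

variable (k v) in
/-- The sum of the components of degree less than `n`. -/
noncomputable def low (n : ℕ) : Submodule k (QHAlg k Q v) :=
  ⨆ m : Fin n, LinearMap.range (gr (m : ℕ))

instance (n : ℕ) : FiniteDimensional k (low k v n) := by
  have (m : Fin n) := finiteDimensional_gr (v := v) (k := k) ((m : ℕ) : ℤ)
  exact Submodule.finiteDimensional_iSup _

lemma gr_sub_low (n : ℕ) (x : QHAlg k Q v) {m : ℤ} (hm : m < n) :
    gr m (x - ∑ l : Fin n, gr ((l : ℕ) : ℤ) x) = 0 := by
  rcases lt_or_ge m 0 with h | h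
  · exact Wt.comp_of_neg _ h _
  · lift m to ℕ using h
    rw [map_sub, map_sum, Finset.sum_eq_single ⟨m, by exact_mod_cast hm⟩]
    · simp [Wt.comp_comp]
    · intro l _ hl
      rw [Wt.comp_comp, if_neg]
      intro h
      exact hl (Fin.ext (by exact_mod_cast h.symm))
    · simp

lemma sum_mem_low (n : ℕ) (x : QHAlg k Q v) : ∑ l : Fin n, gr ((l : ℕ) : ℤ) x ∈ low k v n :=
  Submodule.sum_mem _ fun l _ => Submodule.mem_iSup_of_mem l ⟨x, rfl⟩

instance (n : ℕ) : FiniteDimensional k (QHAlg k Q v ⧸ filt k v n) := by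
  refine Module.Finite.of_surjective ((filt k v n).mkQ ∘ₗ (low k v n).subtype) fun y => ?_
  obtain ⟨x, rfl⟩ := (filt k v n).mkQ_surjective y
  refine ⟨⟨_, sum_mem_low n x⟩, ?_⟩
  symm
  refine (Submodule.Quotient.eq _).2 fun m hm => ?_
  rw [Submodule.subtype_apply, gr_sub_low n x hm]
  exact zero_mem _

variable (k v) in
/-- The quotient representation. -/
noncomputable def filtRep (n : ℕ) : Datum v (Module.End k (QHAlg k Q v ⧸ filt k v n)) :=
  (reg v).quot (filt k v n)
    (fun i x hx m hm => by
      rw [reg_E, Wt.comp_E_mul]; exact E_mem_zId i (hx m hm))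
    (fun b x hx m hm => by
      rw [reg_a, gr_a]; exact a_mem_zId b (hx _ (by omega)))
    (fun x hx m hm => by
      rw [reg_z, gr_z]; exact z_mem_zId _)

lemma filtRep_z (n : ℕ) : (filtRep k v n).z = 0 := by
  refine Submodule.linearMap_qext _ (LinearMap.ext fun x => ?_)
  refine (Submodule.Quotient.mk_eq_zero _).2 fun m hm => ?_
  rw [reg_z, gr_z]
  exact z_mem_zId _

lemma exists_finrank_le (hD : Q.IsDynkin) : ∃ N : ℕ, ∀ n,
    Module.finrank k (QHAlg k Q v ⧸ filt k v n) ≤ N := by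
  obtain ⟨N, hN⟩ := exists_bound hD
  refine ⟨N, fun n => ?_⟩
  rw [← (filtRep k v n).sum_finrank_range]
  refine hN _ (tits_le (filtRep k v n) (filtRep_z n) ((filt k v n).mkQ 1) fun f hE ha h1 => ?_)
  refine Submodule.linearMap_qext _ (LinearMap.ext fun x => ?_)
  refine left_induction (p := fun x => f ((filt k v n).mkQ x) = 0) h1 (by simp)
    (fun x y hx hy => by rw [map_add, map_add, hx, hy, add_zero])
    (fun c x hx => by rw [map_smul, map_smul, hx, smul_zero])
    (fun i x hx => ?_) (fun b x hx => ?_) (fun x hx => ?_) x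
  · have := LinearMap.congr_fun (hE i) ((filt k v n).mkQ x)
    simp only [Module.End.mul_apply, hx, map_zero] at this
    exact this.symm
  · have := LinearMap.congr_fun (ha b) ((filt k v n).mkQ x)
    simp only [Module.End.mul_apply, hx, map_zero] at this
    exact this.symm
  · have : (filt k v n).mkQ ((taut v).z * x) = 0 :=
      LinearMap.congr_fun (filtRep_z n) ((filt k v n).mkQ x)
    rw [this, map_zero]

lemma exists_gr_mem (hD : Q.IsDynkin) : ∃ n : ℕ, ∀ x : QHAlg k Q v, gr n x ∈ zId k v := by
  by_contra! hne
  obtain ⟨N, hN⟩ := exists_finrank_le (k := k) (v := v) hD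
  have key (n : ℕ) : n ≤ Module.finrank k (QHAlg k Q v ⧸ filt k v n) := by
    induction n with
    | zero => exact Nat.zero_le _
    | succ n ih =>
      obtain ⟨y, hy⟩ := hne n
      have hle : filt k v (n + 1) ≤ filt k v n := fun x hx m hm => hx m (by push_cast; omega)
      have h1 := LinearMap.finrank_range_add_finrank_ker (Submodule.factor hle)
      rw [LinearMap.range_eq_top.2 (Submodule.factor_surjective hle), finrank_top] at h1
      have h2 : Module.finrank k (LinearMap.ker (Submodule.factor hle)) ≠ 0 := by
        intro h0
        rw [Submodule.finrank_eq_zero] at h0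
        have h3 : (filt k v (n + 1)).mkQ (gr n y) ∈ LinearMap.ker (Submodule.factor hle) := by
          refine (Submodule.Quotient.mk_eq_zero _).2 fun m hm => ?_
          rw [LinearMap.id_apply, Wt.comp_comp, if_neg hm.ne]
          exact zero_mem _
        rw [h0, Submodule.mem_bot] at h3
        have h4 := (Submodule.Quotient.mk_eq_zero _).1 h3 n (by push_cast; omega)
        rw [Wt.comp_comp, if_pos rfl] at h4
        exact hy h4
      omega
  have := (key (N + 1)).trans (hN (N + 1))
  omega

lemma exists_gr_mem' (hD : Q.IsDynkin) :
    ∃ n : ℕ, ∀ m : ℤ, n ≤ m → ∀ x : QHAlg k Q v, gr m x ∈ zId k v := by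
  obtain ⟨n, hn⟩ := exists_gr_mem (k := k) (v := v) hD
  refine ⟨n, fun m hm => ?_⟩
  induction m, hm using Int.leInduction with
  | base => exact hn
  | succ m hm ih =>
    intro x
    obtain ⟨u, -, hx⟩ := exists_δ2 x
    rw [hx, map_add, gr_δ2, δ2_apply, map_sum]
    refine add_mem (add_mem (z_mem_zId _) (Submodule.sum_mem _ fun b _ =>
      Submodule.smul_mem _ _ (a_mem_zId _ ?_))) (Submodule.sum_mem _ fun i _ => ?_)
    · dsimp only
      rw [add_sub_cancel_right]
      exact ih _
    · rw [map_smul, Wt.comp_E, if_neg (by omega), smul_zero]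
      exact zero_mem _

/-- The algebra is finite dimensional modulo `z`. -/
lemma exists_low (hD : Q.IsDynkin) : ∃ n : ℕ, ∀ x : QHAlg k Q v,
    x - ∑ l : Fin n, gr ((l : ℕ) : ℤ) x ∈ zId k v := by
  obtain ⟨n, hn⟩ := exists_gr_mem' (k := k) (v := v) hD
  refine ⟨n, fun x => ?_⟩
  set y := x - ∑ l : Fin n, gr ((l : ℕ) : ℤ) x with hy
  obtain ⟨s, hs⟩ := (Wt.std Q).exists_sum_comp y
  rw [← hs s subset_rfl]
  refine Submodule.sum_mem _ fun m _ => ?_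
  rcases lt_or_ge m n with h | h
  · rw [hy, gr_sub_low n x h]; exact zero_mem _
  · exact hn m h y

end Filtration

end QuiverHeisenberg

namespace QuiverHeisenberg

variable {k : Type} [Field k] {Q : FinQuiver} {v : Fin Q.r → k}

section Regular

variable {X : Type} [AddCommGroup X] [Module k X] (R : Datum v (Module.End k X))

/-- Idempotent endomorphisms of the restriction to the reversed arrows. -/
structure IsIdem (p : Module.End k X) : Prop where
  idem : p * p = p
  E : ∀ i, R.E i * p = p * R.E i
  a : ∀ e, R.a (.inr e) * p = p * R.a (.inr e)

variable {R} {p : Module.End k X}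

lemma IsIdem.idem_E (hp : IsIdem R p) (i : Fin Q.r) : IsIdempotentElem (p * R.E i) := by
  change p * R.E i * (p * R.E i) = _
  rw [mul_assoc, ← mul_assoc (R.E i), hp.E, mul_assoc, R.E_idem, ← mul_assoc, hp.idem]

/-- The representation of `Q` on the image of an idempotent. -/
def IsIdem.rep (hp : IsIdem R p) : QuivRep k Q where
  V i := LinearMap.range (p * R.E i)
  act e := (R.a (.inr e)).restrict (by
    rintro _ ⟨x, rfl⟩
    refine ⟨R.a (.inr e) x, ?_⟩
    have h1 : R.E (Q.tgt e) (R.a (.inr e) x) = R.a (.inr e) x := R.E_a_apply (.inr e) x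
    have h2 : R.a (.inr e) (R.E (Q.src e) x) = R.a (.inr e) x := R.a_E_apply (.inr e) x
    have h3 := LinearMap.congr_fun (hp.a e) (R.E (Q.src e) x)
    simp only [Module.End.mul_apply] at h3 ⊢
    rw [h1, h3, h2])

lemma trace_mul_V [FiniteDimensional k X] (hz : R.z = 1) (hp : IsIdem R p) :
    LinearMap.trace k X (p * R.V) = 0 := by
  have h := R.mesh'
  rw [hz, mul_one] at h
  rw [← h, Fintype.sum_sum_type]
  simp only [sgn, bar, Sum.elim_inl, Sum.elim_inr, Sum.swap_inl, Sum.swap_inr, one_smul, neg_smul,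
    mul_add, Finset.mul_sum, mul_neg, map_add, map_sum, map_neg]
  rw [← Finset.sum_add_distrib]
  refine Finset.sum_eq_zero fun e _ => ?_
  rw [← mul_assoc p (R.a (.inr e)), ← hp.a, mul_assoc (R.a (.inr e)),
    LinearMap.trace_mul_comm k (R.a (.inr e)), mul_assoc]
  ring

lemma sum_mul_finrank [FiniteDimensional k X] (hz : R.z = 1) (hp : IsIdem R p) :
    ∑ i, v i * (Module.finrank k (LinearMap.range (p * R.E i)) : k) = 0 := by
  rw [← trace_mul_V hz hp, Datum.V, Finset.mul_sum, map_sum]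
  refine Finset.sum_congr rfl fun i _ => ?_
  rw [mul_smul_comm, map_smul, smul_eq_mul]
  congr 1
  exact ((LinearMap.isProj_range_iff_isIdempotentElem _).2 (hp.idem_E i)).trace.symm

section Split

variable (hp : IsIdem R p) (U W : SubQuivRep hp.rep) (h : ∀ i, IsCompl (U.U i) (W.U i))

/-- Components of the idempotent attached to a decomposition. -/
noncomputable def splitComp (i : Fin Q.r) : Module.End k X :=
  (LinearMap.range (p * R.E i)).subtype ∘ₗ
    (U.U i).projection (W.U i) (h i) ∘ₗ (p * R.E i).rangeRestrict

/-- The idempotent attached to a decomposition. -/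
noncomputable def split : Module.End k X := ∑ i, splitComp hp U W h i

lemma E_splitComp (i j : Fin Q.r) :
    R.E i * splitComp hp U W h j = if i = j then splitComp hp U W h j else 0 := by
  ext x
  obtain ⟨y, hy⟩ := ((U.U j).projection (W.U j) (h j) ((p * R.E j).rangeRestrict x)).2
  have hy' : splitComp hp U W h j x = (p * R.E j) y := hy.symm
  have : (R.E i * (p * R.E j)) = if i = j then p * R.E j else 0 := by
    rw [← mul_assoc, hp.E, mul_assoc, R.E_mul]
    split_ifs with hij
    · rw [hij]
    · rw [mul_zero]
  rw [Module.End.mul_apply, hy', ← Module.End.mul_apply, this]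
  split_ifs
  · exact hy
  · rfl

lemma splitComp_E (i j : Fin Q.r) :
    splitComp hp U W h j * R.E i = if i = j then splitComp hp U W h j else 0 := by
  ext x
  have h1 : (p * R.E j).rangeRestrict (R.E i x) =
      if i = j then (p * R.E j).rangeRestrict x else 0 := by
    refine Subtype.ext ?_
    change (p * R.E j * R.E i) x = _
    rw [mul_assoc, R.E_mul]
    split_ifs with h1 h2 h2
    · rfl
    · exact absurd h1.symm h2
    · exact absurd h2.symm h1
    · simp
  change ((U.U j).projection (W.U j) (h j) ((p * R.E j).rangeRestrict (R.E i x))).1 = _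
  rw [h1]
  split_ifs
  · rfl
  · exact congrArg Subtype.val (map_zero ((U.U j).projection (W.U j) (h j)))

lemma E_split (i : Fin Q.r) : R.E i * split hp U W h = splitComp hp U W h i := by
  simp [split, Finset.mul_sum, E_splitComp]

lemma split_E (i : Fin Q.r) : split hp U W h * R.E i = splitComp hp U W h i := by
  simp [split, Finset.sum_mul, splitComp_E]

lemma splitComp_coe (i : Fin Q.r) (x : LinearMap.range (p * R.E i)) :
    splitComp hp U W h i x.1 = ((U.U i).projection (W.U i) (h i) x).1 := by
  have : (p * R.E i).rangeRestrict x.1 = x := by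
    refine Subtype.ext ?_
    obtain ⟨y, hy⟩ := x.2
    change (p * R.E i) x.1 = x.1
    rw [← hy]
    exact LinearMap.congr_fun (hp.idem_E i) y
  change ((U.U i).projection (W.U i) (h i) ((p * R.E i).rangeRestrict x.1)).1 = _
  rw [this]

lemma splitComp_mul_self (i : Fin Q.r) :
    splitComp hp U W h i * splitComp hp U W h i = splitComp hp U W h i := by
  ext x
  change splitComp hp U W h i ((U.U i).projection (W.U i) (h i) _).1 =
    ((U.U i).projection (W.U i) (h i) _).1
  refine (splitComp_coe hp U W h i _).trans ?_
  congr 1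
  exact (Submodule.projection_apply_of_mem_left (h i)
    (Submodule.projection_apply_mem (h i) _))

lemma p_mul_splitComp (i : Fin Q.r) : p * splitComp hp U W h i = splitComp hp U W h i := by
  ext x
  obtain ⟨y, hy⟩ := ((U.U i).projection (W.U i) (h i) ((p * R.E i).rangeRestrict x)).2
  have hy' : splitComp hp U W h i x = (p * R.E i) y := hy.symm
  rw [Module.End.mul_apply, hy', ← Module.End.mul_apply, ← mul_assoc, hp.idem]

lemma act_projection (e : Q.Arrow) (x : hp.rep.V (Q.src e)) :
    hp.rep.act e ((U.U (Q.src e)).projection (W.U (Q.src e)) (h (Q.src e)) x) =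
      (U.U (Q.tgt e)).projection (W.U (Q.tgt e)) (h (Q.tgt e)) (hp.rep.act e x) := by
  have h1 : hp.rep.act e ((U.U (Q.src e)).projection (W.U (Q.src e)) (h (Q.src e)) x) ∈
      U.U (Q.tgt e) :=
    U.stable e ⟨_, Submodule.projection_apply_mem (h _) x, rfl⟩
  have h2 : hp.rep.act e (x - (U.U (Q.src e)).projection (W.U (Q.src e)) (h (Q.src e)) x) ∈
      W.U (Q.tgt e) := by
    refine W.stable e ⟨_, ?_, rfl⟩
    refine (Submodule.projection_apply_eq_zero_iff (h (Q.src e))).1 ?_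
    rw [map_sub, sub_eq_zero, Submodule.projection_apply_of_mem_left (h _)
      (Submodule.projection_apply_mem (h _) x)]
  have h3 := (Submodule.projection_apply_eq_zero_iff (h (Q.tgt e))).2 h2
  rw [map_sub, map_sub, Submodule.projection_apply_of_mem_left (h _) h1,
    sub_eq_zero] at h3
  exact h3.symm

lemma a_splitComp (e : Q.Arrow) : R.a (.inr e) * splitComp hp U W h (Q.src e) =
    splitComp hp U W h (Q.tgt e) * R.a (.inr e) := by
  ext x
  have h1 := congrArg Subtype.val (act_projection hp U W h e ((p * R.E (Q.src e)).rangeRestrict x))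
  refine h1.trans ?_
  change ((U.U (Q.tgt e)).projection (W.U (Q.tgt e)) (h (Q.tgt e)) _).1 =
    ((U.U (Q.tgt e)).projection (W.U (Q.tgt e)) (h (Q.tgt e)) _).1
  congr 2
  refine Subtype.ext ?_
  change (R.a (.inr e) * (p * R.E (Q.src e))) x = (p * R.E (Q.tgt e) * R.a (.inr e)) x
  have e1 : R.E (Q.tgt e) * R.a (.inr e) = R.a (.inr e) := R.E_a (.inr e)
  have e2 : R.a (.inr e) * R.E (Q.src e) = R.a (.inr e) := R.a_E (.inr e)
  rw [← mul_assoc, hp.a, mul_assoc, e2, mul_assoc, e1]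

lemma isIdem_split : IsIdem R (split hp U W h) where
  idem := by
    conv_lhs => rw [split, Finset.sum_mul]
    refine Finset.sum_congr rfl fun i _ => ?_
    have : splitComp hp U W h i = splitComp hp U W h i * R.E i := by rw [splitComp_E, if_pos rfl]
    calc splitComp hp U W h i * split hp U W h
        = splitComp hp U W h i * (R.E i * split hp U W h) := by rw [← mul_assoc, ← this]
      _ = splitComp hp U W h i := by rw [E_split, splitComp_mul_self]
  E i := by rw [E_split, split_E]
  a e := by
    have e1 : R.E (Q.tgt e) * R.a (.inr e) = R.a (.inr e) := R.E_a (.inr e)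
    have e2 : R.a (.inr e) * R.E (Q.src e) = R.a (.inr e) := R.a_E (.inr e)
    calc R.a (.inr e) * split hp U W h = R.a (.inr e) * (R.E (Q.src e) * split hp U W h) := by
          rw [← mul_assoc, e2]
      _ = split hp U W h * (R.E (Q.tgt e) * R.a (.inr e)) := by
          rw [E_split, a_splitComp, ← split_E, mul_assoc]
      _ = _ := by rw [e1]

lemma p_mul_split : p * split hp U W h = split hp U W h := by
  simp [split, Finset.mul_sum, p_mul_splitComp]

lemma split_coe (i : Fin Q.r) (x : LinearMap.range (p * R.E i)) :
    split hp U W h x.1 = ((U.U i).projection (W.U i) (h i) x).1 := by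
  rw [← splitComp_coe, ← split_E, Module.End.mul_apply]
  congr 1
  obtain ⟨y, hy⟩ := x.2
  rw [← hy, ← Module.End.mul_apply, ← mul_assoc, hp.E, mul_assoc, R.E_idem]

end Split

/-- A minimal idempotent has indecomposable image. -/
lemma IsIdem.indecomposable [FiniteDimensional k X] (hp : IsIdem R p) (h0 : p ≠ 0)
    (hmin : ∀ q, IsIdem R q → q ≠ 0 →
      Module.finrank k (LinearMap.range p) ≤ Module.finrank k (LinearMap.range q)) :
    hp.rep.Indecomposable := by
  constructor
  · by_contra! hn
    refine h0 ?_
    rw [← mul_one p, ← R.E_sum, Finset.mul_sum]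
    refine Finset.sum_eq_zero fun i _ => LinearMap.ext fun x => ?_
    have := hn i
    exact congrArg Subtype.val (Subsingleton.elim (α := hp.rep.V i) ((p * R.E i).rangeRestrict x) 0)
  · intro U W h
    by_contra! hne
    obtain ⟨⟨i, hi⟩, ⟨j, hj⟩⟩ := hne
    obtain ⟨u, hu, hu0⟩ := (Submodule.ne_bot_iff _).1 hi
    obtain ⟨w, hw, hw0⟩ := (Submodule.ne_bot_iff _).1 hj
    have hq := isIdem_split hp U W h
    have hqu := split_coe hp U W h i u
    have hqw := split_coe hp U W h j w
    rw [Submodule.projection_apply_of_mem_left (h i) hu] at hqu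
    rw [(Submodule.projection_apply_eq_zero_iff (h j)).2 hw] at hqw
    have hq0 : split hp U W h ≠ 0 := by
      intro hz
      rw [hz] at hqu
      exact hu0 (Subtype.ext hqu.symm)
    have hle : LinearMap.range (split hp U W h) ≤ LinearMap.range p := by
      rintro _ ⟨x, rfl⟩
      exact ⟨split hp U W h x, LinearMap.congr_fun (p_mul_split hp U W h) x⟩
    have heq := Submodule.eq_of_le_of_finrank_le hle (hmin _ hq hq0)
    have hwr : w.1 ∈ LinearMap.range (split hp U W h) := by
      rw [heq]
      obtain ⟨y, hy⟩ := w.2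
      exact ⟨R.E j y, hy⟩
    obtain ⟨y, hy⟩ := hwr
    refine hw0 (Subtype.ext ?_)
    have h2 : split hp U W h w.1 = w.1 := by
      rw [← hy]
      exact LinearMap.congr_fun hq.idem y
    rw [← h2, hqw]

/-- For regular parameters there are no modules on which `z` acts as the identity. -/
lemma subsingleton_of_z_eq_one [FiniteDimensional k X] (hv : IsRegularParam k Q v)
    (R : Datum v (Module.End k X)) (hz : R.z = 1) : Subsingleton X := by
  classical
  by_contra hX
  rw [not_subsingleton_iff_nontrivial] at hX
  have hex : ∃ n, ∃ p, IsIdem R p ∧ p ≠ 0 ∧ Module.finrank k (LinearMap.range p) = n :=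
    ⟨_, 1, ⟨by simp, by simp, by simp⟩, one_ne_zero, rfl⟩
  obtain ⟨p, hp, hp0, hpn⟩ := Nat.find_spec hex
  refine hv hp.rep (fun i => ?_) (hp.indecomposable hp0 fun q hq hq0 => ?_) (sum_mul_finrank hz hp)
  · change FiniteDimensional k (LinearMap.range (p * R.E i))
    infer_instance
  · rw [hpn]
    exact Nat.find_min' hex ⟨q, hq, hq0, rfl⟩

end Regular

end QuiverHeisenberg

namespace QuiverHeisenberg

variable {k : Type} [Field k] {Q : FinQuiver} {v : Fin Q.r → k}

section Finiteness

local notation "gr" => Wt.comp v (Wt.std Q)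

variable (k v) in
/-- The ideal generated by `z - 1`. -/
noncomputable def zSubOneId : Submodule k (QHAlg k Q v) :=
  LinearMap.range (LinearMap.mulLeft k ((taut v).z - 1))

lemma mem_zSubOneId {x : QHAlg k Q v} :
    x ∈ zSubOneId k v ↔ ∃ y, (taut v).z * y - y = x := by
  simp [zSubOneId, sub_mul]

lemma gr_mem_low_sup {n : ℕ} (hn : ∀ x : QHAlg k Q v,
    x - ∑ l : Fin n, gr ((l : ℕ) : ℤ) x ∈ zId k v) (m : ℤ) (x : QHAlg k Q v) :
    gr m x ∈ low k v n ⊔ zSubOneId k v := by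
  suffices h : ∀ (N : ℕ) (m : ℤ), m < N → ∀ x, gr m x ∈ low k v n ⊔ zSubOneId k v from
    h (m.toNat + 1) m (by push_cast; have := Int.self_le_toNat m; omega) x
  intro N
  induction N with
  | zero =>
    intro m hm x
    rw [Wt.comp_of_neg _ (by exact_mod_cast hm) x]
    exact zero_mem _
  | succ N ih =>
    intro m hm x
    push_cast at hm
    rcases lt_or_ge m 0 with h0 | h0
    · rw [Wt.comp_of_neg _ h0 x]
      exact zero_mem _
    rcases lt_or_ge m n with h1 | h1
    · lift m to ℕ using h0
      exact Submodule.mem_sup_left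
        (Submodule.mem_iSup_of_mem (⟨m, by exact_mod_cast h1⟩ : Fin n) ⟨x, rfl⟩)
    · obtain ⟨w, hw⟩ := hn (gr m x)
      have h2 : ∑ l : Fin n, gr ((l : ℕ) : ℤ) (gr m x) = 0 :=
        Finset.sum_eq_zero fun l _ => by
          rw [Wt.comp_comp, if_neg (by have := l.2; omega)]
      rw [h2, sub_zero] at hw
      have h3 : gr m x = (taut v).z * gr (m - 2) w := by
        rw [← gr_z]
        change gr m x = gr m (LinearMap.mulLeft k (taut v).z w)
        rw [hw, Wt.comp_comp, if_pos rfl]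
      rw [h3, ← sub_add_cancel ((taut v).z * gr (m - 2) w) (gr (m - 2) w)]
      exact add_mem (Submodule.mem_sup_right (mem_zSubOneId.2 ⟨_, rfl⟩)) (ih _ (by omega) _)

lemma low_sup_zSubOneId {n : ℕ} (hn : ∀ x : QHAlg k Q v,
    x - ∑ l : Fin n, gr ((l : ℕ) : ℤ) x ∈ zId k v) : low k v n ⊔ zSubOneId k v = ⊤ := by
  refine eq_top_iff.2 fun x _ => ?_
  obtain ⟨s, hs⟩ := (Wt.std Q).exists_sum_comp x
  rw [← hs s subset_rfl]
  exact Submodule.sum_mem _ fun m _ => gr_mem_low_sup hn m x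

lemma one_mem_zSubOneId (hD : Q.IsDynkin) (hv : IsRegularParam k Q v) :
    (1 : QHAlg k Q v) ∈ zSubOneId k v := by
  obtain ⟨n, hn⟩ := exists_low (k := k) (v := v) hD
  have : FiniteDimensional k (QHAlg k Q v ⧸ zSubOneId k v) := by
    refine Module.Finite.of_surjective ((zSubOneId k v).mkQ ∘ₗ (low k v n).subtype) fun y => ?_
    obtain ⟨x, rfl⟩ := (zSubOneId k v).mkQ_surjective y
    have hx : x ∈ low k v n ⊔ zSubOneId k v := by rw [low_sup_zSubOneId hn]; trivial
    obtain ⟨a, ha, b, hb, rfl⟩ := Submodule.mem_sup.1 hx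
    refine ⟨⟨a, ha⟩, ?_⟩
    symm
    refine (Submodule.Quotient.eq _).2 ?_
    simpa using hb
  have key := subsingleton_of_z_eq_one hv ((reg v).quot (zSubOneId k v)
    (fun i x hx => by
      obtain ⟨y, rfl⟩ := mem_zSubOneId.1 hx
      exact mem_zSubOneId.2 ⟨(taut v).E i * y, by
        simp [mul_sub, ← mul_assoc, (taut v).z_E]⟩)
    (fun b x hx => by
      obtain ⟨y, rfl⟩ := mem_zSubOneId.1 hx
      exact mem_zSubOneId.2 ⟨(taut v).a b * y, by
        simp [mul_sub, ← mul_assoc, (taut v).z_a]⟩)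
    (fun x hx => by
      obtain ⟨y, rfl⟩ := mem_zSubOneId.1 hx
      exact mem_zSubOneId.2 ⟨(taut v).z * y, by simp [mul_sub]⟩)) (by
    refine Submodule.linearMap_qext _ (LinearMap.ext fun x => ?_)
    exact (Submodule.Quotient.eq _).2 (mem_zSubOneId.2 ⟨x, rfl⟩))
  exact (Submodule.Quotient.mk_eq_zero _).1 (key.elim _ _)

/-- The central variable is nilpotent. -/
lemma exists_z_pow_eq_zero (hD : Q.IsDynkin) (hv : IsRegularParam k Q v) :
    ∃ l : ℕ, (taut v).z ^ l = 0 := by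
  obtain ⟨y, hy⟩ := mem_zSubOneId.1 (one_mem_zSubOneId hD hv)
  have h1 (n : ℤ) : gr n y = (taut v).z * gr (n - 2) y - if n = 0 then 1 else 0 := by
    have := congrArg (gr n) hy
    rw [map_sub, gr_z, Wt.comp_one] at this
    rw [← this]; abel
  have h2 (l : ℕ) : gr (2 * l) y + (taut v).z ^ l = 0 := by
    induction l with
    | zero =>
      rw [h1, Wt.comp_of_neg _ (by simp)]; simp
    | succ l ih =>
      rw [h1, if_neg (by omega), show (2 * ((l + 1 : ℕ) : ℤ) - 2) = 2 * l by push_cast; ring,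
        pow_succ', sub_zero, ← mul_add, ih, mul_zero]
  obtain ⟨s, hs⟩ := (Wt.std Q).exists_sum_comp y
  obtain ⟨l, hl⟩ := Infinite.exists_notMem_finset (s.preimage (fun l : ℕ => 2 * (l : ℤ))
    (fun a _ b _ h => by simpa using h))
  refine ⟨l, ?_⟩
  have h3 := h2 l
  rw [← hs s subset_rfl, map_sum, Finset.sum_eq_zero, zero_add] at h3
  · exact h3
  intro m hm
  rw [Wt.comp_comp, if_neg]
  rintro rfl
  exact hl (Finset.mem_preimage.2 hm)

/-- The quiver Heisenberg algebra of a Dynkin quiver at a regular parameter is finite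
dimensional. -/
lemma finiteDimensional (hD : Q.IsDynkin) (hv : IsRegularParam k Q v) :
    FiniteDimensional k (QHAlg k Q v) := by
  obtain ⟨n, hn⟩ := exists_low (k := k) (v := v) hD
  obtain ⟨N, hN⟩ := exists_z_pow_eq_zero hD hv
  have key : ∀ i ≤ N, FiniteDimensional k
      (LinearMap.range (LinearMap.mulLeft k ((taut v).z ^ (N - i)))) := by
    intro i
    induction i with
    | zero =>
      intro _
      have : LinearMap.range (LinearMap.mulLeft k ((taut v).z ^ (N - 0))) = ⊥ := by
        rw [Nat.sub_zero, hN]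
        simp
      rw [this]
      infer_instance
    | succ i ih =>
      intro hi
      have := ih (by omega)
      refine Submodule.finiteDimensional_of_le (S₂ :=
        (low k v n).map (LinearMap.mulLeft k ((taut v).z ^ (N - (i + 1)))) ⊔
        LinearMap.range (LinearMap.mulLeft k ((taut v).z ^ (N - i)))) ?_
      rintro _ ⟨x, rfl⟩
      obtain ⟨w, hw⟩ := hn x
      rw [LinearMap.mulLeft_apply] at hw
      refine Submodule.mem_sup.2 ⟨_, ⟨_, sum_mem_low n x, rfl⟩, _, ⟨w, rfl⟩, ?_⟩
      simp only [LinearMap.mulLeft_apply]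
      rw [show N - i = N - (i + 1) + 1 by omega, pow_succ, mul_assoc, hw, ← mul_add,
        add_sub_cancel]
  have := key N le_rfl
  refine Module.Finite.of_surjective
    (LinearMap.range (LinearMap.mulLeft k ((taut v).z ^ (N - N)))).subtype fun x => ?_
  exact ⟨⟨x, x, by simp⟩, rfl⟩

end Finiteness

end QuiverHeisenberg

namespace QuiverHeisenberg

open Polynomial

variable {k : Type} [Field k] {Q : FinQuiver} {v : Fin Q.r → k}

namespace Wt

variable (W : Wt Q) [FiniteDimensional k (QHAlg k Q v)]

variable (v) in
lemma exists_comp_eq_zero : ∃ N : ℕ, ∀ n : ℤ, N ≤ n → W.comp v n = 0 := by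
  classical
  choose s hs using W.exists_sum_comp (v := v)
  let b := Module.finBasis k (QHAlg k Q v)
  let t : Finset ℤ := Finset.univ.biUnion fun i => s (b i)
  obtain ⟨N, hN⟩ := t.exists_le
  refine ⟨N.toNat + 1, fun n hn => b.ext fun i => ?_⟩
  rw [← hs (b i) _ subset_rfl, map_sum, LinearMap.zero_apply]
  refine Finset.sum_eq_zero fun m hm => ?_
  rw [comp_comp, if_neg]
  rintro rfl
  have := hN n (Finset.mem_biUnion.2 ⟨i, Finset.mem_univ _, hm⟩)
  have := Int.self_le_toNat N
  push_cast at hn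
  omega

omit [FiniteDimensional k (QHAlg k Q v)] in
lemma hd_eq_zero {n : ℤ} (h : W.comp v n = 0) (i j : Fin Q.r) : W.hd v n i j = 0 := by
  have : W.corner v n i j = ⊥ := by
    refine (Submodule.eq_bot_iff _).2 fun x hx => ?_
    rw [← hx.1, h, LinearMap.zero_apply]
  rw [hd, this, finrank_bot]

omit [FiniteDimensional k (QHAlg k Q v)] in
lemma hd_of_neg {n : ℤ} (h : n < 0) (i j : Fin Q.r) : W.hd v n i j = 0 :=
  W.hd_eq_zero (LinearMap.ext fun x => W.comp_of_neg h x) i j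

lemma sd_le (n : ℤ) (i j : Fin Q.r) : W.sd v n i j ≤ W.hd v n i j :=
  Submodule.finrank_mono inf_le_left

lemma sd_of_neg {n : ℤ} (h : n < 0) (i j : Fin Q.r) : W.sd v n i j = 0 := by
  have := W.sd_le (v := v) n i j
  rw [W.hd_of_neg h] at this
  omega

variable (v) in
/-- A bound on the degrees. -/
noncomputable def bd : ℕ := (W.exists_comp_eq_zero v).choose

variable (v) in
/-- The matrix Hilbert polynomial. -/
noncomputable def hpoly : Matrix (Fin Q.r) (Fin Q.r) ℤ[X] := .of fun i j =>
  ∑ n ∈ Finset.range (W.bd v), monomial n (W.hd v n i j : ℤ)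

variable (v) in
/-- The matrix Hilbert polynomial of the socle. -/
noncomputable def spoly : Matrix (Fin Q.r) (Fin Q.r) ℤ[X] := .of fun i j =>
  ∑ n ∈ Finset.range (W.bd v), monomial n (W.sd v n i j : ℤ)

lemma hd_of_le {n : ℕ} (h : W.bd v ≤ n) (i j : Fin Q.r) : W.hd v n i j = 0 :=
  W.hd_eq_zero ((W.exists_comp_eq_zero v).choose_spec n (by exact_mod_cast h)) i j

lemma coeff_hpoly (n : ℕ) (i j : Fin Q.r) : (W.hpoly v i j).coeff n = W.hd v n i j := by
  simp only [hpoly, Matrix.of_apply, finsetSum_coeff, coeff_monomial, Finset.sum_ite_eq',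
    Finset.mem_range]
  split_ifs with h
  · rfl
  · rw [W.hd_of_le (by omega)]; rfl

lemma coeff_spoly (n : ℕ) (i j : Fin Q.r) : (W.spoly v i j).coeff n = W.sd v n i j := by
  simp only [spoly, Matrix.of_apply, finsetSum_coeff, coeff_monomial, Finset.sum_ite_eq',
    Finset.mem_range]
  split_ifs with h
  · rfl
  · have := W.sd_le (v := v) n i j
    rw [W.hd_of_le (by omega)] at this
    rw [Nat.le_zero.1 this]; rfl

lemma coeff_X_pow_mul_hpoly {a : ℤ} (ha : 0 ≤ a) (n : ℕ) (i j : Fin Q.r) :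
    (X ^ a.toNat * W.hpoly v i j).coeff n = (W.hd v (n - a) i j : ℤ) := by
  rw [coeff_X_pow_mul']
  split_ifs with h
  · rw [coeff_hpoly]; congr 2; omega
  · rw [W.hd_of_neg (by omega)]; rfl

lemma coeff_X_pow_mul_spoly {a : ℤ} (ha : 0 ≤ a) (n : ℕ) (i j : Fin Q.r) :
    (X ^ a.toNat * W.spoly v i j).coeff n = (W.sd v (n - a) i j : ℤ) := by
  rw [coeff_X_pow_mul']
  split_ifs with h
  · rw [coeff_spoly]; congr 2; omega
  · rw [W.sd_of_neg (by omega)]; rfl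

/-- The graded Cartan matrix. -/
noncomputable def cartan : Matrix (Fin Q.r) (Fin Q.r) ℤ[X] := .of fun i j =>
  (if i = j then 1 + X ^ W.c.toNat else 0) -
    ∑ b, if dsrc Q b = i ∧ dtgt Q b = j then X ^ (W.w b).toNat else 0

lemma cartan_mul_hpoly_apply (i j : Fin Q.r) : (W.cartan * W.hpoly v) i j =
    (1 + X ^ W.c.toNat) * W.hpoly v i j -
      ∑ b, if dsrc Q b = i then X ^ (W.w b).toNat * W.hpoly v (dtgt Q b) j else 0 := by
  simp only [Matrix.mul_apply, cartan, Matrix.of_apply, sub_mul, Finset.sum_sub_distrib, ite_mul,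
    zero_mul, Finset.sum_ite_eq, Finset.mem_univ, if_true, Finset.sum_mul]
  congr 1
  rw [Finset.sum_comm]
  refine Finset.sum_congr rfl fun b _ => ?_
  by_cases h : dsrc Q b = i <;> simp [h]

/-- The Euler characteristic formula for Hilbert polynomials. -/
lemma cartan_mul_hpoly : (1 - X ^ W.c.toNat : ℤ[X]) • (W.cartan * W.hpoly v) =
    1 - (X ^ (2 * W.c.toNat) : ℤ[X]) • W.spoly v := by
  ext1 i j
  have hc := W.c_nonneg
  have e1 : (X ^ (2 * W.c.toNat) : ℤ[X]) = X ^ (W.c + W.c).toNat := by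
    congr 1; omega
  have e2 (b) : (X ^ W.c.toNat * X ^ (W.w b).toNat : ℤ[X]) = X ^ (W.c + W.w b).toNat := by
    rw [← pow_add]; congr 1; have := W.w_nonneg b; omega
  have e3 : (1 - X ^ W.c.toNat) * (W.cartan * W.hpoly v) i j =
      W.hpoly v i j - X ^ (W.c + W.c).toNat * W.hpoly v i j -
      ((∑ b, if dsrc Q b = i then X ^ (W.w b).toNat * W.hpoly v (dtgt Q b) j else 0) -
       ∑ b, if dsrc Q b = i then X ^ (W.c + W.w b).toNat * W.hpoly v (dtgt Q b) j else 0) := by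
    rw [cartan_mul_hpoly_apply, mul_sub, sub_mul 1 _ (∑ b, _), one_mul, Finset.mul_sum, ← e1]
    congr 1
    · ring
    · congr 1
      refine Finset.sum_congr rfl fun b _ => ?_
      rw [mul_ite, mul_zero, ← mul_assoc, e2]
  rw [Matrix.smul_apply, Matrix.sub_apply, Matrix.smul_apply, smul_eq_mul, smul_eq_mul, e3, e1]
  ext n
  have h := W.euler exact_δ0 (v := v) (n - W.c - W.c) i j
  have e4 : ((n : ℤ) - W.c - W.c) + W.c + W.c = n := by ring
  have e5 (b) : ((n : ℤ) - W.c - W.c) + W.c + W.w b = n - W.w (bar b) := by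
    rw [← W.w_add_bar b]; ring
  have e6 (b) : ((n : ℤ) - W.c - W.c) + W.w b = n - (W.c + W.w (bar b)) := by
    have := W.w_add_bar b
    linarith
  simp only [e4, e5, e6] at h
  have s1 : ∑ b, (if dtgt Q b = i then W.hd v (n - W.w (bar b)) (dsrc Q b) j else 0) =
      ∑ b, if dsrc Q b = i then W.hd v (n - W.w b) (dtgt Q b) j else 0 := by
    rw [← sum_bar]; simp only [bar_bar, dtgt_bar, dsrc_bar]
  have s2 : ∑ b, (if dtgt Q b = i then W.hd v (n - (W.c + W.w (bar b))) (dsrc Q b) j else 0) =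
      ∑ b, if dsrc Q b = i then W.hd v (n - (W.c + W.w b)) (dtgt Q b) j else 0 := by
    rw [← sum_bar]; simp only [bar_bar, dtgt_bar, dsrc_bar]
  rw [s1, s2] at h
  have h1 : ∀ b,
      ((if dsrc Q b = i then X ^ (W.w b).toNat * W.hpoly v (dtgt Q b) j else 0).coeff n) =
      ((if dsrc Q b = i then W.hd v (n - W.w b) (dtgt Q b) j else 0 : ℕ) : ℤ) := fun b => by
    split_ifs
    · exact W.coeff_X_pow_mul_hpoly (W.w_nonneg b) _ _ _
    · simp
  have h2 : ∀ b, ((if dsrc Q b = i then X ^ (W.c + W.w b).toNat * W.hpoly v (dtgt Q b) j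
      else 0).coeff n) =
      ((if dsrc Q b = i then W.hd v (n - (W.c + W.w b)) (dtgt Q b) j else 0 : ℕ) : ℤ) :=
    fun b => by
    split_ifs
    · exact W.coeff_X_pow_mul_hpoly (add_nonneg hc (W.w_nonneg b)) _ _ _
    · simp
  have h3 : ((1 : Matrix (Fin Q.r) (Fin Q.r) ℤ[X]) i j).coeff n =
      ((if (n : ℤ) = 0 ∧ i = j then 1 else 0 : ℕ) : ℤ) := by
    by_cases hij : i = j
    · subst hij; simp [coeff_one]
    · simp [hij]
  simp only [coeff_sub, finsetSum_coeff, h1, h2, h3, coeff_hpoly,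
    W.coeff_X_pow_mul_hpoly (add_nonneg hc hc), W.coeff_X_pow_mul_spoly (add_nonneg hc hc)]
  rw [sub_sub] at h
  zify at h ⊢
  linarith

/-- The socle polynomials take the values of the identity matrix at `1`. -/
lemma eval_spoly (i j : Fin Q.r) : (W.spoly v i j).eval 1 = if i = j then 1 else 0 := by
  have h := congrArg (eval 1) (congrFun (congrFun (W.cartan_mul_hpoly (v := v)) i) j)
  rw [Matrix.smul_apply, Matrix.sub_apply, Matrix.smul_apply, smul_eq_mul, smul_eq_mul] at h
  have h1 : eval 1 ((1 : Matrix (Fin Q.r) (Fin Q.r) ℤ[X]) i j) = if i = j then 1 else 0 := by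
    rw [Matrix.one_apply]; split_ifs <;> simp
  simp only [eval_mul, eval_sub, eval_pow, eval_X, eval_one, one_pow, sub_self, zero_mul,
    one_mul, h1] at h
  linarith

lemma exists_spoly_eq : ∃ d : Fin Q.r → ℕ, W.spoly v = Matrix.diagonal fun i => X ^ d i := by
  have h0 (p : ℤ[X]) (hp : ∀ n, 0 ≤ p.coeff n) (h : p.eval 1 = 0) : p = 0 := by
    rw [eval_eq_sum, Polynomial.sum] at h
    simp only [one_pow, mul_one] at h
    ext n
    by_cases hn : n ∈ p.support
    · exact (Finset.sum_eq_zero_iff_of_nonneg fun n _ => hp n).1 h n hn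
    · simpa using hn
  have hnn (n : ℕ) (i j) : 0 ≤ (W.spoly v i j).coeff n := by rw [coeff_spoly]; positivity
  have key (i : Fin Q.r) : ∃ d, W.spoly v i i = X ^ d := by
    have h1 := W.eval_spoly (v := v) i i
    rw [if_pos rfl] at h1
    obtain ⟨d, hd⟩ : ∃ d, (W.spoly v i i).coeff d ≠ 0 := by
      by_contra! h
      have : W.spoly v i i = 0 := Polynomial.ext fun n => by simpa using h n
      rw [this] at h1
      simp at h1
    have hpos : 1 ≤ (W.spoly v i i).coeff d := by have := hnn d i i; omega
    have hsum : (W.spoly v i i).coeff d + ∑ n ∈ (W.spoly v i i).support.erase d,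
        (W.spoly v i i).coeff n = 1 := by
      rw [eval_eq_sum, Polynomial.sum] at h1
      simp only [one_pow, mul_one] at h1
      rw [← h1]
      exact Finset.add_sum_erase _ _ (mem_support_iff.2 hd)
    have hs := Finset.sum_nonneg (s := (W.spoly v i i).support.erase d) fun n _ => hnn n i i
    have hz : ∑ n ∈ (W.spoly v i i).support.erase d, (W.spoly v i i).coeff n = 0 := by omega
    refine ⟨d, Polynomial.ext fun n => ?_⟩
    rw [coeff_X_pow]
    split_ifs with h
    · rw [h]; omega
    · by_contra hn
      exact hn ((Finset.sum_eq_zero_iff_of_nonneg fun n _ => hnn n i i).1 hz n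
        (Finset.mem_erase.2 ⟨h, mem_support_iff.2 hn⟩))
  choose d hd using key
  refine ⟨d, Matrix.ext fun i j => ?_⟩
  by_cases h : i = j
  · subst h; rw [hd, Matrix.diagonal_apply_eq]
  · rw [Matrix.diagonal_apply_ne _ h]
    exact h0 _ (fun n => hnn n i j) (by rw [eval_spoly, if_neg h])

end Wt

end QuiverHeisenberg

namespace QuiverHeisenberg

open Polynomial

variable {k : Type} [Field k] {Q : FinQuiver} {v : Fin Q.r → k}

section Symmetry

open MulOpposite

lemma op_finsetSum {ι A : Type*} [AddCommMonoid A] (s : Finset ι) (f : ι → A) :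
    op (∑ i ∈ s, f i) = ∑ i ∈ s, op (f i) :=
  map_sum (opAddEquiv : A ≃+ Aᵐᵒᵖ) f s

variable (v) in
/-- The datum defining the anti-involution reversing arrows. -/
noncomputable def revDatum : Datum v (QHAlg k Q v)ᵐᵒᵖ where
  E i := op ((taut v).E i)
  a b := op ((taut v).a (bar b))
  z := op (taut v).z
  E_mul i j := by
    rw [← op_mul, (taut v).E_mul]
    by_cases h : i = j
    · subst h; simp
    · simp [h, Ne.symm h]
  E_sum := by rw [← op_one, ← (taut v).E_sum, op_finsetSum]
  E_a b := by
    rw [← op_mul, ← dtgt_bar, (taut v).a_E]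
  a_E b := by
    rw [← op_mul, ← dsrc_bar, (taut v).E_a]
  z_E i := by rw [← op_mul, ← op_mul, (taut v).z_E]
  z_a b := by rw [← op_mul, ← op_mul, (taut v).z_a]
  mesh := by
    have h := congrArg op (taut v).mesh
    rw [← Datum.V, op_mul] at h
    simp only [op_finsetSum, op_smul, ← op_mul, bar_bar] at h ⊢
    rw [h, op_mul]
    have : ∑ i, v i • op ((taut v).E i) = op (taut v).V := by
      simp [Datum.V]
    rw [this, ← op_mul, ← op_mul, z_central]

/-- The anti-involution reversing arrows. -/
noncomputable def rev (x : QHAlg k Q v) : QHAlg k Q v := unop ((revDatum v).lift x)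

lemma rev_mul (x y : QHAlg k Q v) : rev (x * y) = rev y * rev x := by
  simp [rev]

lemma rev_E (i : Fin Q.r) : rev ((taut v).E i) = (taut v).E i := by
  rw [rev, Datum.lift_E]; rfl

lemma rev_a (b : DArrow Q) : rev ((taut v).a b) = (taut v).a (bar b) := by
  rw [rev, Datum.lift_a]; rfl

lemma rev_z : rev (taut v).z = (taut v).z := by
  rw [rev, Datum.lift_z]; rfl

lemma rev_add (x y : QHAlg k Q v) : rev (x + y) = rev x + rev y := by simp [rev]
lemma rev_smul (c : k) (x : QHAlg k Q v) : rev (c • x) = c • rev x := by simp [rev]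
lemma rev_one : rev (1 : QHAlg k Q v) = 1 := by simp [rev]
lemma rev_zero : rev (0 : QHAlg k Q v) = 0 := by simp [rev]

lemma rev_rev (x : QHAlg k Q v) : rev (rev x) = x := by
  refine left_induction (p := fun x => rev (rev x) = x) (by simp only [rev_one])
    (by simp only [rev_zero])
    (fun x y hx hy => by rw [rev_add, rev_add, hx, hy])
    (fun c x hx => by rw [rev_smul, rev_smul, hx])
    (fun i x hx => ?_) (fun b x hx => ?_) (fun x hx => ?_) x
  · rw [rev_mul, rev_mul, hx, rev_E, rev_E]
  · rw [rev_mul, rev_mul, hx, rev_a, rev_a, bar_bar]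
  · rw [rev_mul, rev_mul, hx, rev_z, rev_z]

lemma rev_comp (n : ℤ) (x : QHAlg k Q v) :
    rev ((Wt.std Q).comp v n x) = (Wt.std Q).comp v n (rev x) := by
  revert n
  refine left_induction (p := fun x => ∀ n, rev ((Wt.std Q).comp v n x) =
    (Wt.std Q).comp v n (rev x)) (fun n => ?_) (fun n => ?_)
    (fun x y hx hy n => by rw [map_add, rev_add, rev_add, map_add, hx, hy])
    (fun c x hx n => by rw [map_smul, rev_smul, rev_smul, map_smul, hx])
    (fun i x hx n => ?_) (fun b x hx n => ?_) (fun x hx n => ?_) x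
  · rw [rev_one, Wt.comp_one]; split_ifs <;> simp [rev_one, rev_zero]
  · rw [rev_zero, map_zero, rev_zero]
  · rw [Wt.comp_E_mul, rev_mul, rev_mul, rev_E, Wt.comp_mul_E, hx]
  · have h := (Wt.std Q).comp_mul_gen (v := v) (agen (bar b)) (n - 1) (rev x)
    rw [show (n - 1) + (Wt.std Q).gen (agen (bar b)) = n by rw [Wt.gen_agen]; simp [Wt.std],
      ] at h
    rw [gr_a, rev_mul, rev_mul, rev_a, hx]
    exact h.symm
  · rw [gr_z, rev_mul, rev_mul, rev_z, hx, ← z_central, ← z_central, gr_z]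

/-- Reversal as a linear map. -/
noncomputable def revLin : QHAlg k Q v →ₗ[k] QHAlg k Q v where
  toFun := rev
  map_add' := rev_add
  map_smul' := rev_smul

variable [FiniteDimensional k (QHAlg k Q v)]

lemma hd_std_le (n : ℤ) (i j : Fin Q.r) : (Wt.std Q).hd v n i j ≤ (Wt.std Q).hd v n j i := by
  refine LinearMap.finrank_le_finrank_of_injective
    (f := revLin.restrict (p := (Wt.std Q).corner v n i j) (q := (Wt.std Q).corner v n j i)
      fun x hx => ⟨?_, ?_, ?_⟩) fun x y h => ?_
  · change (Wt.std Q).comp v n (rev x) = rev x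
    rw [← rev_comp, hx.1]
  · change _ * rev x = rev x
    rw [← rev_E, ← rev_mul, hx.2.2]
  · change rev x * _ = rev x
    rw [← rev_E, ← rev_mul, hx.2.1]
  · have : rev x.1 = rev y.1 := congrArg Subtype.val h
    refine Subtype.ext ?_
    rw [← rev_rev x.1, this, rev_rev]

lemma hpoly_std_symm (i j : Fin Q.r) : (Wt.std Q).hpoly v i j = (Wt.std Q).hpoly v j i :=
  Polynomial.ext fun n => by
    rw [Wt.coeff_hpoly, Wt.coeff_hpoly, (hd_std_le n i j).antisymm (hd_std_le n j i)]

lemma cartan_std_symm (i j : Fin Q.r) : (Wt.std Q).cartan i j = (Wt.std Q).cartan j i := by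
  simp only [Wt.cartan, Matrix.of_apply, eq_comm (a := i) (b := j)]
  congr 1
  rw [← sum_bar]
  simp [Wt.std, and_comm, -Fintype.sum_sum_type]

lemma cartan_std_ne_zero {i j : Fin Q.r} (hij : i ≠ j) (b : DArrow Q) (hi : dsrc Q b = i)
    (hj : dtgt Q b = j) : (Wt.std Q).cartan i j ≠ 0 := by
  intro h
  have h1 := congrArg (eval 1) h
  simp only [Wt.cartan, Matrix.of_apply, if_neg hij, zero_sub, eval_neg, eval_finsetSum,
    eval_zero, neg_eq_zero] at h1
  have h2 := (Finset.sum_eq_zero_iff_of_nonneg (fun b _ => by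
    split_ifs <;> simp)).1 h1 b (Finset.mem_univ _)
  rw [if_pos ⟨hi, hj⟩] at h2
  simp at h2

omit [FiniteDimensional k (QHAlg k Q v)] in
lemma diagonal_mul_comm_of_symm {ι : Type*} [Fintype ι] [DecidableEq ι]
    {M H : Matrix ι ι ℤ[X]} {p : ℤ[X]} {D : ι → ℤ[X]} (hM : M.transpose = M)
    (hH : H.transpose = H) (h : p • (M * H) = Matrix.diagonal D) (i j : ι) :
    D i * M i j = M i j * D j := by
  have h' := congrArg Matrix.transpose h
  rw [Matrix.transpose_smul, Matrix.transpose_mul, hM, hH, Matrix.diagonal_transpose] at h'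
  have hcomm : Matrix.diagonal D * M = M * Matrix.diagonal D := by
    conv_lhs => rw [← h]
    rw [← h', Matrix.smul_mul, Matrix.mul_smul, Matrix.mul_assoc]
  have h1 := congrFun (congrFun hcomm i) j
  rwa [Matrix.diagonal_mul, Matrix.mul_diagonal] at h1

omit [FiniteDimensional k (QHAlg k Q v)] in
lemma cartan_std_transpose : (Wt.std Q).cartan.transpose = (Wt.std Q).cartan := by
  ext1 i j
  rw [Matrix.transpose_apply]
  exact cartan_std_symm j i

lemma hpoly_std_transpose : ((Wt.std Q).hpoly v).transpose = (Wt.std Q).hpoly v := by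
  ext1 i j
  rw [Matrix.transpose_apply]
  exact hpoly_std_symm j i

lemma std_cartan_mul_hpoly {d : Fin Q.r → ℕ}
    (hd : (Wt.std Q).spoly v = Matrix.diagonal fun i => X ^ d i) :
    (1 - X ^ 2 : ℤ[X]) • ((Wt.std Q).cartan * (Wt.std Q).hpoly v) =
      Matrix.diagonal fun i => 1 - X ^ (4 + d i) := by
  have h := (Wt.std Q).cartan_mul_hpoly (v := v)
  rw [hd] at h
  refine h.trans ?_
  ext1 i j
  change (1 : Matrix (Fin Q.r) (Fin Q.r) ℤ[X]) i j -
    (X ^ (2 * 2) : ℤ[X]) • Matrix.diagonal (fun i => (X ^ d i : ℤ[X])) i j = _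
  by_cases hij : i = j
  · subst hij; simp [pow_add]
  · simp [hij]

lemma eq_of_std_cartan_mul_hpoly {d : Fin Q.r → ℕ}
    (h : (1 - X ^ 2 : ℤ[X]) • ((Wt.std Q).cartan * (Wt.std Q).hpoly v) =
      Matrix.diagonal fun i => 1 - X ^ (4 + d i)) (b : DArrow Q) :
    d (dsrc Q b) = d (dtgt Q b) := by
  by_cases hb : dsrc Q b = dtgt Q b
  · rw [hb]
  have h1 := diagonal_mul_comm_of_symm cartan_std_transpose hpoly_std_transpose h
    (dsrc Q b) (dtgt Q b)
  rw [mul_comm] at h1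
  have h2 := mul_left_cancel₀ (cartan_std_ne_zero hb b rfl rfl) h1
  have h4 := congrArg natDegree (sub_right_injective h2)
  rw [natDegree_X_pow, natDegree_X_pow] at h4
  omega

/-- The standard Hilbert polynomial of a connected quiver. -/
lemma exists_cartan_mul_hpoly_std (hQ : Q.Connected) : ∃ d : ℕ,
    (1 - X ^ 2 : ℤ[X]) • ((Wt.std Q).cartan * (Wt.std Q).hpoly v) =
      (1 - X ^ (4 + d) : ℤ[X]) • 1 := by
  obtain ⟨d, hd⟩ := (Wt.std Q).exists_spoly_eq (v := v)
  have h := std_cartan_mul_hpoly hd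
  have hall : ∀ i j, d i = d j := by
    intro i j
    induction hQ i j with
    | refl => rfl
    | tail _ hab ih =>
      obtain ⟨e, ⟨h1, h2⟩ | ⟨h1, h2⟩⟩ := hab
      · rw [ih, ← h1, ← h2]; exact eq_of_std_cartan_mul_hpoly h (.inl e)
      · rw [ih, ← h1, ← h2]; exact eq_of_std_cartan_mul_hpoly h (.inr e)
  rcases isEmpty_or_nonempty (Fin Q.r) with hr | ⟨⟨i⟩⟩
  · exact ⟨0, Matrix.ext fun i => hr.elim i⟩
  · refine ⟨d i, ?_⟩
    rw [h, Matrix.smul_one_eq_diagonal]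
    congr 1
    funext j
    rw [hall j i]

end Symmetry

section Orientation

/-- The grading counting reversed arrows. -/
def Wt.ori (Q : FinQuiver) : Wt Q :=
  ⟨Sum.elim (fun _ => 0) (fun _ => 1), 1, by rintro (b | b) <;> simp [bar],
    by rintro (b | b) <;> simp, by norm_num⟩

variable (W : Wt Q) [FiniteDimensional k (QHAlg k Q v)]

lemma Wt.sum_comp_eq (x : QHAlg k Q v) : ∑ n : Fin (W.bd v), W.comp v (n : ℕ) x = x := by
  refine W.ext_comp fun m => ?_
  rw [map_sum]
  simp only [comp_comp]
  rcases lt_or_ge m 0 with hm | hm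
  · rw [W.comp_of_neg hm x]
    exact Finset.sum_eq_zero fun n _ => by rw [if_neg (by omega)]
  lift m to ℕ using hm
  rcases lt_or_ge m (W.bd v) with hm | hm
  · rw [Finset.sum_eq_single ⟨m, hm⟩]
    · simp
    · intro n _ hn
      rw [if_neg]
      intro h
      exact hn (Fin.ext (by exact_mod_cast h.symm))
    · simp
  · have := (W.exists_comp_eq_zero v).choose_spec m (by exact_mod_cast hm)
    rw [this, LinearMap.zero_apply]
    exact Finset.sum_eq_zero fun n _ => by
      rw [if_neg]
      have := n.2
      omega

variable (v) in
/-- The Peirce corners. -/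
def peirce (i j : Fin Q.r) : Submodule k (QHAlg k Q v) where
  carrier := {x | (taut v).E i * x = x ∧ x * (taut v).E j = x}
  add_mem' := by
    rintro x y ⟨h2, h3⟩ ⟨h5, h6⟩
    exact ⟨by rw [mul_add, h2, h5], by rw [add_mul, h3, h6]⟩
  zero_mem' := by simp
  smul_mem' := by
    rintro c x ⟨h2, h3⟩
    exact ⟨by rw [mul_smul_comm, h2], by rw [smul_mul_assoc, h3]⟩

/-- A Peirce corner is the sum of its homogeneous components. -/
noncomputable def Wt.peirceEquiv (i j : Fin Q.r) :
    peirce v i j ≃ₗ[k] ((n : Fin (W.bd v)) → W.corner v (n : ℕ) i j) where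
  toFun x n := ⟨W.comp v (n : ℕ) x.1, by rw [comp_comp, if_pos rfl],
    by rw [← comp_E_mul, x.2.1], by rw [← comp_mul_E, x.2.2]⟩
  invFun f := ⟨∑ n, (f n).1, by
      rw [Finset.mul_sum]; exact Finset.sum_congr rfl fun n _ => (f n).2.2.1, by
      rw [Finset.sum_mul]; exact Finset.sum_congr rfl fun n _ => (f n).2.2.2⟩
  map_add' x y := funext fun n => Subtype.ext (map_add _ _ _)
  map_smul' c x := funext fun n => Subtype.ext (map_smul _ _ _)
  left_inv x := Subtype.ext (W.sum_comp_eq x.1)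
  right_inv f := funext fun n => Subtype.ext <| by
    change W.comp v _ (∑ m, (f m).1) = _
    rw [map_sum, Finset.sum_eq_single n]
    · exact (f n).2.1
    · intro m _ hm
      rw [← (f m).2.1, comp_comp, if_neg]
      intro h
      exact hm (Fin.ext (by exact_mod_cast h.symm))
    · simp

lemma Wt.eval_hpoly (i j : Fin Q.r) :
    (W.hpoly v i j).eval 1 = Module.finrank k (peirce v i j) := by
  have h : Module.finrank k (peirce v i j) = ∑ n : Fin (W.bd v), W.hd v (n : ℕ) i j := by
    rw [(W.peirceEquiv i j).finrank_eq]
    have (n : Fin (W.bd v)) : Module.Free k (W.corner v (n : ℕ) i j) :=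
      @Module.Free.of_divisionRing k _ _ (Module.addCommMonoidToAddCommGroup k) _
    exact Module.finrank_pi_fintype k
  rw [h]
  simp [hpoly, Matrix.of_apply, eval_finsetSum, Finset.sum_range]

lemma Wt.eval_cartan (i j : Fin Q.r) : (W.cartan i j).eval 1 =
    (if i = j then 2 else 0) - ∑ b, if dsrc Q b = i ∧ dtgt Q b = j then 1 else 0 := by
  simp only [cartan, Matrix.of_apply, eval_sub, eval_finsetSum]
  congr 1
  · split_ifs <;> norm_num
  · refine Finset.sum_congr rfl fun b _ => ?_
    split_ifs <;> simp

lemma Wt.eval_cartan_mul_hpoly (W W' : Wt Q) (i j : Fin Q.r) :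
    ((W.cartan * W.hpoly v) i j).eval 1 = ((W'.cartan * W'.hpoly v) i j).eval 1 := by
  simp [Matrix.mul_apply, eval_finsetSum, Wt.eval_hpoly, Wt.eval_cartan]

/-- The Hilbert polynomials of a connected quiver for the two gradings. -/
lemma exists_cartan_mul_hpoly (hQ : Q.Connected) : ∃ m : ℕ, 2 ≤ m ∧
    (1 - X ^ 2 : ℤ[X]) • ((Wt.std Q).cartan * (Wt.std Q).hpoly v) = (1 - X ^ (2 * m) : ℤ[X]) • 1 ∧
    (1 - X : ℤ[X]) • ((Wt.ori Q).cartan * (Wt.ori Q).hpoly v) = (1 - X ^ m : ℤ[X]) • 1 := by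
  obtain ⟨d, hd⟩ := exists_cartan_mul_hpoly_std (v := v) hQ
  obtain ⟨d', hd'⟩ := (Wt.ori Q).exists_spoly_eq (v := v)
  have h := (Wt.ori Q).cartan_mul_hpoly (v := v)
  have hc : (Wt.ori Q).c.toNat = 1 := rfl
  rw [hc, hd', pow_one] at h
  have h1 (i : Fin Q.r) : (((Wt.std Q).cartan * (Wt.std Q).hpoly v) i i).eval 1 * 2 = 4 + d := by
    have h2 := congrArg (fun p => eval 1 (derivative p)) (congrFun (congrFun hd i) i)
    simp [Matrix.smul_apply, derivative_pow] at h2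
    linarith
  have h3 (i : Fin Q.r) : (((Wt.ori Q).cartan * (Wt.ori Q).hpoly v) i i).eval 1 = 2 + d' i := by
    have h2 := congrArg (fun p => eval 1 (derivative p)) (congrFun (congrFun h i) i)
    simp [Matrix.smul_apply, derivative_pow] at h2
    linarith
  have h4 (i : Fin Q.r) : 4 + d = 2 * (2 + d' i) := by
    have := h1 i
    rw [Wt.eval_cartan_mul_hpoly (Wt.std Q) (Wt.ori Q), h3] at this
    zify
    linarith
  rcases isEmpty_or_nonempty (Fin Q.r) with hr | ⟨⟨i⟩⟩
  · exact ⟨2, le_rfl, Matrix.ext fun i => hr.elim i, Matrix.ext fun i => hr.elim i⟩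
  refine ⟨2 + d' i, by omega, by rw [hd, h4 i], ?_⟩
  rw [h]
  ext1 a b
  by_cases hab : a = b
  · subst hab
    have h5 : d' a = d' i := by have := h4 a; have := h4 i; omega
    simp [h5, pow_add]
  · simp [hab]

end Orientation

end QuiverHeisenberg

namespace QuiverHeisenberg

open Matrix

variable {Q : FinQuiver}

section RootSystem

variable (Q) in
/-- The matrix of the Euler form. -/
def eulerMatrix : Matrix (Fin Q.r) (Fin Q.r) ℤ := of fun i j =>
  (if i = j then 1 else 0) - ∑ e, if Q.src e = i ∧ Q.tgt e = j then 1 else 0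

/-- The arrow relation on vertices. -/
def Arr (Q : FinQuiver) (a b : Fin Q.r) : Prop := ∃ e : Q.Arrow, Q.src e = a ∧ Q.tgt e = b

lemma eulerMatrix_mulVec (x : Fin Q.r → ℤ) (i : Fin Q.r) :
    (eulerMatrix Q *ᵥ x) i = x i - ∑ e, if Q.src e = i then x (Q.tgt e) else 0 := by
  simp only [mulVec, dotProduct, eulerMatrix, of_apply, sub_mul, Finset.sum_sub_distrib,
    Finset.sum_mul]
  congr 1
  · simp
  · rw [Finset.sum_comm]
    refine Finset.sum_congr rfl fun e _ => ?_
    rw [Finset.sum_eq_single (Q.tgt e)]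
    · simp
    · intro j _ hj
      rw [if_neg (fun h => hj h.2.symm), zero_mul]
    · simp

lemma eulerMatrix_eq {a b : Fin Q.r} (h : ¬ Arr Q a b) :
    eulerMatrix Q a b = if a = b then 1 else 0 := by
  rw [eulerMatrix, of_apply, Finset.sum_eq_zero fun e _ => if_neg fun he => h ⟨e, he⟩, sub_zero]

lemma titsFormZ_eq (x : Fin Q.r → ℤ) : Q.titsFormZ x = x ⬝ᵥ (eulerMatrix Q *ᵥ x) := by
  simp only [dotProduct, eulerMatrix_mulVec, mul_sub, Finset.sum_sub_distrib,
    FinQuiver.titsFormZ, Finset.mul_sum]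
  congr 1
  · simp [sq]
  · rw [Finset.sum_comm]
    simp

lemma titsFormZ_pos (hD : Q.IsDynkin) {x : Fin Q.r → ℤ} (hx : x ≠ 0) : 0 < Q.titsFormZ x := by
  have h : (fun i => (x i : ℝ)) ≠ 0 := fun h => hx <| funext fun i => by
    simpa using congrFun h i
  have := hD _ h
  rw [FinQuiver.titsForm] at this
  rw [FinQuiver.titsFormZ]
  exact_mod_cast this

lemma titsFormZ_zero : Q.titsFormZ 0 = 0 := by simp [FinQuiver.titsFormZ]

lemma nonneg_or_nonpos_of_root (hD : Q.IsDynkin) {x : Fin Q.r → ℤ} (hx : Q.titsFormZ x = 1) :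
    0 ≤ x ∨ x ≤ 0 := by
  by_contra! h
  obtain ⟨h1, h2⟩ := h
  have hn : x⁻ ≠ 0 := fun h => h1 (negPart_eq_zero.1 h)
  have hp : x⁺ ≠ 0 := fun h => h2 (posPart_eq_zero.1 h)
  have h3 := titsFormZ_pos hD hn
  have h4 := titsFormZ_pos hD hp
  have hmul (i) : x⁺ i * x⁻ i = 0 := by
    rcases le_total 0 (x i) with h | h
    · simp [h]
    · simp [h]
  have hle : Q.titsFormZ x⁺ + Q.titsFormZ x⁻ ≤ Q.titsFormZ x := by
    have hx' (i) : x i = x⁺ i - x⁻ i := congrFun (posPart_sub_negPart x).symm i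
    have e1 : ∑ i, x i ^ 2 = ∑ i, x⁺ i ^ 2 + ∑ i, x⁻ i ^ 2 := by
      rw [← Finset.sum_add_distrib]
      refine Finset.sum_congr rfl fun i _ => ?_
      rw [hx' i]
      linear_combination -2 * hmul i
    have e2 : ∑ e, x (Q.src e) * x (Q.tgt e) ≤ ∑ e, x⁺ (Q.src e) * x⁺ (Q.tgt e) +
        ∑ e, x⁻ (Q.src e) * x⁻ (Q.tgt e) := by
      rw [← Finset.sum_add_distrib]
      refine Finset.sum_le_sum fun e _ => ?_
      rw [hx' (Q.src e), hx' (Q.tgt e)]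
      have hp (i) : 0 ≤ x⁺ i := posPart_nonneg (x i)
      have hn (i) : 0 ≤ x⁻ i := negPart_nonneg (x i)
      have := mul_nonneg (hp (Q.src e)) (hn (Q.tgt e))
      have := mul_nonneg (hn (Q.src e)) (hp (Q.tgt e))
      linarith
    simp only [FinQuiver.titsFormZ]
    linarith
  omega

/-- Gluing two adjacent vectors along a predecessor-closed set preserves the Tits form. -/
lemma titsFormZ_glue {x w : Fin Q.r → ℤ} (hxw : eulerMatrix Q *ᵥ x = (eulerMatrix Q)ᵀ *ᵥ w)
    {J : Set (Fin Q.r)} [DecidablePred (· ∈ J)] (hJ : ∀ a b, Arr Q a b → b ∈ J → a ∈ J) :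
    Q.titsFormZ (fun a => if a ∈ J then - w a else x a) = Q.titsFormZ x := by
  set E := eulerMatrix Q
  set d : Fin Q.r → ℤ := fun a => if a ∈ J then x a + w a else 0 with hd
  have hg : (fun a => if a ∈ J then - w a else x a) = x - d := by
    funext a
    simp only [hd, Pi.sub_apply]
    split_ifs <;> ring
  have h1 : d ⬝ᵥ (E *ᵥ d) = (x + w) ⬝ᵥ (E *ᵥ d) := by
    refine Finset.sum_congr rfl fun a _ => ?_
    by_cases ha : a ∈ J
    · simp [hd, ha]
    · have : (E *ᵥ d) a = 0 := by
        rw [mulVec, dotProduct]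
        refine Finset.sum_eq_zero fun b _ => ?_
        by_cases hb : b ∈ J
        · rw [show E a b = 0 by
            rw [show E = eulerMatrix Q from rfl, eulerMatrix_eq fun h => ha (hJ a b h hb), if_neg]
            rintro rfl
            exact ha hb, zero_mul]
        · simp [hd, hb]
      rw [this, mul_zero, mul_zero]
  have h2 : w ⬝ᵥ (E *ᵥ d) = d ⬝ᵥ (E *ᵥ x) := by
    rw [dotProduct_mulVec, ← mulVec_transpose, ← hxw, dotProduct_comm]
  rw [hg, titsFormZ_eq, titsFormZ_eq]
  change (x - d) ⬝ᵥ (E *ᵥ (x - d)) = x ⬝ᵥ (E *ᵥ x)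
  rw [mulVec_sub, dotProduct_sub, sub_dotProduct, sub_dotProduct, h1, add_dotProduct, h2]
  ring

lemma acyclic_wf (hA : Q.Acyclic) : WellFounded (Relation.TransGen (Arr Q)) :=
  haveI : Std.Irrefl (Relation.TransGen (Arr Q)) := ⟨hA⟩
  Finite.wellFounded_of_trans_of_irrefl _

lemma acyclic_wf_swap (hA : Q.Acyclic) :
    WellFounded (Function.swap (Relation.TransGen (Arr Q))) :=
  haveI : Std.Irrefl (Function.swap (Relation.TransGen (Arr Q))) := ⟨hA⟩
  Finite.wellFounded_of_trans_of_irrefl _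

/-- A positive root whose Coxeter translate is negative is a projective root. -/
lemma exists_eulerMatrix_mulVec_eq_single (hD : Q.IsDynkin) (hA : Q.Acyclic)
    {x w : Fin Q.r → ℤ} (hx : 0 ≤ x) (hw : 0 ≤ w) (hqx : Q.titsFormZ x = 1)
    (hxw : eulerMatrix Q *ᵥ x = (eulerMatrix Q)ᵀ *ᵥ w) :
    ∃ i, eulerMatrix Q *ᵥ x = Pi.single i 1 := by
  classical
  have key (J : Set (Fin Q.r)) (hJ : ∀ a b, Arr Q a b → b ∈ J → a ∈ J) :
      (∀ a ∈ J, w a = 0) ∨ ∀ a ∉ J, x a = 0 := by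
    have hg := (titsFormZ_glue hxw hJ).trans hqx
    rcases nonneg_or_nonpos_of_root hD hg with h | h
    · left
      intro a ha
      have h1 := h a
      have h2 := hw a
      simp only [if_pos ha, Pi.zero_apply] at h1 h2
      omega
    · right
      intro a ha
      have h1 := h a
      have h2 := hx a
      simp only [if_neg ha, Pi.zero_apply] at h1 h2
      omega
  have hw0 : {a | w a ≠ 0}.Nonempty := by
    by_contra! h
    have hw0 : w = 0 := funext fun a => by
      by_contra ha
      exact h.subset (show a ∈ {a | w a ≠ 0} from ha)
    rw [hw0, mulVec_zero] at hxw
    rw [titsFormZ_eq, hxw, dotProduct_zero] at hqx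
    exact zero_ne_one hqx
  obtain ⟨i, hi, hmin⟩ := (acyclic_wf hA).has_min _ hw0
  have hJ0 : ∀ a b, Arr Q a b → b ∈ {a | Relation.TransGen (Arr Q) a i} →
      a ∈ {a | Relation.TransGen (Arr Q) a i} := fun a b h hb => .head h hb
  have hoff : ∀ a, ¬ Relation.ReflTransGen (Arr Q) a i → x a = 0 := by
    rcases key {a | Relation.ReflTransGen (Arr Q) a i} (fun a b h hb => .head h hb) with h | h
    · exact absurd (h i .refl) hi
    · exact h
  have hwJ0 : ∀ a, Relation.TransGen (Arr Q) a i → w a = 0 := fun a ha => by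
    by_contra h
    exact hmin a h ha
  have hxJ0 : ∀ a, ¬ Relation.TransGen (Arr Q) a i → a ≠ i → x a = 0 := fun a ha hai =>
    hoff a fun h => by
      rcases Relation.reflTransGen_iff_eq_or_transGen.1 h with h | h
      · exact hai h.symm
      · exact ha h
  have hii : eulerMatrix Q i i = 1 := by
    rw [eulerMatrix_eq fun h => hA i (.single h), if_pos rfl]
  have hxi : x i = 1 := by
    have hg := (titsFormZ_glue hxw hJ0).trans hqx
    have hgi : (fun a => if a ∈ {a | Relation.TransGen (Arr Q) a i} then - w a else x a) =
        Pi.single i (x i) := by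
      funext a
      by_cases ha : Relation.TransGen (Arr Q) a i
      · have hai : a ≠ i := by
          rintro rfl
          exact hA a ha
        simp [ha, hwJ0 a ha, hai]
      · by_cases hai : a = i
        · subst hai
          simp [ha]
        · simp [ha, hxJ0 a ha hai, hai]
    rw [hgi, titsFormZ_eq, mulVec_single, single_dotProduct] at hg
    simp [hii] at hg
    have h0 := hx i
    simp only [Pi.zero_apply] at h0
    nlinarith
  refine ⟨i, funext fun a => ?_⟩
  by_cases ha : Relation.TransGen (Arr Q) a i
  · have hai : a ≠ i := by
      rintro rfl
      exact hA a ha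
    rw [hxw, Pi.single_eq_of_ne hai, mulVec, dotProduct]
    refine Finset.sum_eq_zero fun b _ => ?_
    by_cases hb : Relation.TransGen (Arr Q) b i
    · rw [hwJ0 b hb, mul_zero]
    · rw [transpose_apply, eulerMatrix_eq fun h => hb (hJ0 b a h ha), if_neg, zero_mul]
      rintro rfl
      exact hb ha
  · rw [mulVec, dotProduct, Finset.sum_eq_single i]
    · rw [hxi, mul_one, eulerMatrix_eq fun h => ha (.single h), Pi.single_apply]
    · intro b _ hbi
      by_cases hb : Relation.TransGen (Arr Q) b i
      · rw [eulerMatrix_eq fun h => ha (hJ0 a b h hb), if_neg, zero_mul]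
        rintro rfl
        exact ha hb
      · rw [hxJ0 b hb hbi, mul_zero]
    · simp

end RootSystem

end QuiverHeisenberg

namespace QuiverHeisenberg

open Matrix

variable {Q : FinQuiver}

variable (Q) in
/-- Hilbert functions of the orientation grading, abstractly. -/
structure HilbertFunction (m : ℕ) where
  H : ℕ → Matrix (Fin Q.r) (Fin Q.r) ℤ
  zero : eulerMatrix Q * H 0 = 1
  succ : ∀ n, eulerMatrix Q * H (n + 1) + (eulerMatrix Q)ᵀ * H n = if n + 1 < m then 1 else 0
  eventually_zero : ∃ N, ∀ n ≥ N, H n = 0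
  nonneg : ∀ n i j, 0 ≤ H n i j
  generated : ∀ n j, (∀ i, H n i j = 0) → ∀ n' ≥ n, ∀ i, H n' i j = 0

namespace HilbertFunction

variable {m : ℕ} (F : HilbertFunction Q m)

/-- The Coxeter matrix. -/
def cox : Matrix (Fin Q.r) (Fin Q.r) ℤ := - (F.H 0 * (eulerMatrix Q)ᵀ)

lemma zero' : F.H 0 * eulerMatrix Q = 1 := mul_eq_one_comm.1 F.zero

lemma euler_mul_cox : eulerMatrix Q * F.cox = - (eulerMatrix Q)ᵀ := by
  rw [cox, Matrix.mul_neg, ← Matrix.mul_assoc, F.zero, Matrix.one_mul]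

lemma cox_mul : F.cox * - ((F.H 0)ᵀ * eulerMatrix Q) = 1 := by
  rw [cox, neg_mul_neg, Matrix.mul_assoc, ← Matrix.mul_assoc _ (F.H 0)ᵀ, ← transpose_mul, F.zero',
    transpose_one, Matrix.one_mul, F.zero']

lemma cox_mul_left_cancel {A B : Matrix (Fin Q.r) (Fin Q.r) ℤ} (n : ℕ)
    (h : F.cox ^ n * A = F.cox ^ n * B) : A = B := by
  have hu : IsUnit (F.cox ^ n) := (IsUnit.of_mul_eq_one _ F.cox_mul).pow n
  exact hu.mul_left_cancel h

lemma succ_of_lt {n : ℕ} (hn : n + 1 < m) : F.H (n + 1) = F.H 0 + F.cox * F.H n := by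
  have h := congrArg (F.H 0 * ·) (F.succ n)
  simp only [if_pos hn, mul_add, ← Matrix.mul_assoc, F.zero', Matrix.mul_one, Matrix.one_mul] at h
  rw [cox, neg_mul, ← sub_eq_add_neg]
  exact eq_sub_of_add_eq h

lemma succ_of_le {n : ℕ} (hn : m ≤ n + 1) : F.H (n + 1) = F.cox * F.H n := by
  have h := congrArg (F.H 0 * ·) (F.succ n)
  simp only [if_neg hn.not_gt, mul_add, ← Matrix.mul_assoc, F.zero', Matrix.mul_zero,
    Matrix.one_mul] at h
  rw [cox, neg_mul, eq_neg_of_add_eq_zero_left h]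

lemma eq_zero {n : ℕ} (hn : m ≤ n + 1) : F.H n = 0 := by
  obtain ⟨N, hN⟩ := F.eventually_zero
  have h (l : ℕ) : F.H (n + l) = F.cox ^ l * F.H n := by
    induction l with
    | zero => simp
    | succ l ih => rw [← add_assoc, F.succ_of_le (by omega), ih, pow_succ', Matrix.mul_assoc]
  refine F.cox_mul_left_cancel N ?_
  rw [← h, hN _ (by omega), Matrix.mul_zero]

lemma eq_sum {n : ℕ} (hn : n < m) :
    F.H n = (∑ l ∈ Finset.range (n + 1), F.cox ^ l) * F.H 0 := by
  induction n with
  | zero => simp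
  | succ n ih =>
    rw [F.succ_of_lt hn, ih (by omega), Finset.sum_range_succ' _ (n + 1), ← Matrix.mul_assoc,
      Finset.mul_sum, Matrix.add_mul, pow_zero, Matrix.one_mul, add_comm]
    simp only [pow_succ']

lemma sum_cox (hm : 2 ≤ m) : ∑ l ∈ Finset.range m, F.cox ^ l = 0 := by
  have h := F.eq_sum (n := m - 1) (by omega)
  rw [F.eq_zero (by omega), Nat.sub_add_cancel (by omega)] at h
  have h' := congrArg (· * eulerMatrix Q) h
  simp only [Matrix.mul_assoc, F.zero', Matrix.mul_one, Matrix.zero_mul] at h'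
  exact h'.symm

lemma cox_pow (hm : 2 ≤ m) : F.cox ^ m = 1 := by
  have h := geom_sum_mul F.cox m
  rw [F.sum_cox hm, zero_mul] at h
  exact (sub_eq_zero.1 h.symm)

lemma titsFormZ_cox (x : Fin Q.r → ℤ) : Q.titsFormZ (F.cox *ᵥ x) = Q.titsFormZ x := by
  have h : eulerMatrix Q *ᵥ (F.cox *ᵥ x) = - ((eulerMatrix Q)ᵀ *ᵥ x) := by
    rw [mulVec_mulVec, euler_mul_cox, neg_mulVec]
  rw [titsFormZ_eq, titsFormZ_eq, h, dotProduct_neg, dotProduct_mulVec, vecMul_transpose, h,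
    neg_dotProduct, neg_neg, dotProduct_comm, mulVec_transpose, dotProduct_mulVec]
  exact dotProduct_comm _ _

lemma titsFormZ_cox_pow (n : ℕ) (x : Fin Q.r → ℤ) :
    Q.titsFormZ (F.cox ^ n *ᵥ x) = Q.titsFormZ x := by
  induction n with
  | zero => simp
  | succ n ih => rw [pow_succ', ← mulVec_mulVec, titsFormZ_cox, ih]

/-- The dimension vectors of the projectives. -/
def proj (i : Fin Q.r) : Fin Q.r → ℤ := F.H 0 *ᵥ Pi.single i 1

lemma euler_proj (i : Fin Q.r) : eulerMatrix Q *ᵥ F.proj i = Pi.single i 1 := by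
  rw [proj, mulVec_mulVec, F.zero, one_mulVec]

lemma eq_proj {x : Fin Q.r → ℤ} {i : Fin Q.r} (h : eulerMatrix Q *ᵥ x = Pi.single i 1) :
    x = F.proj i := by
  rw [proj, ← h, mulVec_mulVec, F.zero', one_mulVec]

lemma H_zero_apply (i j : Fin Q.r) : F.H 0 i j =
    (if i = j then 1 else 0) + ∑ e, if Q.src e = i then F.H 0 (Q.tgt e) j else 0 := by
  have h := congrFun (F.euler_proj j) i
  rw [eulerMatrix_mulVec, Pi.single_apply] at h
  simp only [proj, mulVec_single_one, col_apply] at h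
  linarith

lemma H_zero_ne (hA : Q.Acyclic) (i j : Fin Q.r) (h : F.H 0 j i ≠ 0) :
    Relation.ReflTransGen (Arr Q) j i := by
  revert h
  refine (acyclic_wf_swap hA).induction (C := fun j => F.H 0 j i ≠ 0 →
    Relation.ReflTransGen (Arr Q) j i) j fun j ih h => ?_
  rw [H_zero_apply] at h
  by_cases hj : j = i
  · rw [hj]
  rw [if_neg hj, zero_add] at h
  obtain ⟨e, -, he⟩ := Finset.exists_ne_zero_of_sum_ne_zero h
  have hs : Q.src e = j := by
    by_contra hs
    exact he (if_neg hs)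
  rw [if_pos hs] at he
  exact .head ⟨e, hs, rfl⟩ (ih _ (.single ⟨e, hs, rfl⟩) he)

lemma titsFormZ_proj (hA : Q.Acyclic) (i : Fin Q.r) : Q.titsFormZ (F.proj i) = 1 := by
  rw [titsFormZ_eq, euler_proj, dotProduct_single, mul_one, proj, mulVec_single_one, col_apply,
    H_zero_apply, if_pos rfl, Finset.sum_eq_zero, add_zero]
  intro e _
  split_ifs with hs
  · by_contra h
    exact hA i (Relation.TransGen.head' ⟨e, hs, rfl⟩ (F.H_zero_ne hA _ _ h))
  · rfl

lemma exists_eq_cox_pow_proj (hm : 2 ≤ m) (hD : Q.IsDynkin) (hA : Q.Acyclic) {x : Fin Q.r → ℤ}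
    (hx : Q.titsFormZ x = 1) : ∃ i, ∃ l < m, x = F.cox ^ l *ᵥ F.proj i := by
  set y : ℕ → Fin Q.r → ℤ := fun l => F.cox ^ l *ᵥ x with hy
  have hq (l) : Q.titsFormZ (y l) = 1 := (F.titsFormZ_cox_pow l x).trans hx
  have hne (l) : y l ≠ 0 := fun h => by
    have := hq l
    rw [h, titsFormZ_zero] at this
    omega
  have hsum (n : ℕ) : ∑ l ∈ Finset.range m, y (n + l) = 0 := by
    simp only [hy, pow_add, ← mulVec_mulVec]
    rw [← mulVec_sum, ← sum_mulVec, F.sum_cox hm, zero_mulVec, mulVec_zero]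
  have hneg : ∃ l, y l ≤ 0 := by
    by_contra! h
    have h0 : ∀ l, 0 ≤ y l := fun l => (nonneg_or_nonpos_of_root hD (hq l)).resolve_right (h l)
    have := (Finset.sum_eq_zero_iff_of_nonneg fun l _ => h0 (0 + l)).1 (hsum 0) 0
      (Finset.mem_range.2 (by omega))
    exact hne _ this
  obtain ⟨l, hl⟩ := hneg
  have hpos : ∃ t, 0 ≤ y (l + t) := by
    by_contra! h
    have h0 : ∀ t, y (l + t) ≤ 0 := fun t =>
      (nonneg_or_nonpos_of_root hD (hq _)).resolve_left (h t)
    have := (Finset.sum_eq_zero_iff_of_nonpos fun t _ => h0 t).1 (hsum l) 0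
      (Finset.mem_range.2 (by omega))
    exact hne _ this
  classical
  have ht0 : Nat.find hpos ≠ 0 := by
    intro h
    have := Nat.find_spec hpos
    rw [h] at this
    exact hne l (le_antisymm hl this)
  obtain ⟨t, ht⟩ := Nat.exists_eq_succ_of_ne_zero ht0
  have hp : 0 ≤ y (l + t + 1) := by
    have := Nat.find_spec hpos
    rwa [ht] at this
  have hn : y (l + t) ≤ 0 := (nonneg_or_nonpos_of_root hD (hq _)).resolve_left
    (Nat.find_min hpos (by omega))
  set s := l + t + 1
  obtain ⟨i, hi⟩ := exists_eulerMatrix_mulVec_eq_single hD hA hp (w := - y (l + t))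
    (by simpa using hn) (hq _) (by
      rw [hy]
      simp only [s, pow_succ', ← mulVec_mulVec]
      rw [mulVec_mulVec, euler_mul_cox, neg_mulVec, mulVec_neg])
  have hi := F.eq_proj hi
  refine ⟨i, (m * s - s) % m, Nat.mod_lt _ (by omega), ?_⟩
  rw [← pow_eq_pow_mod _ (F.cox_pow hm), ← hi]
  change x = _ *ᵥ (F.cox ^ s *ᵥ x)
  rw [mulVec_mulVec, ← pow_add, Nat.sub_add_cancel (Nat.le_mul_of_pos_left _ (by omega)), pow_mul,
    F.cox_pow hm, one_pow, one_mulVec]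

lemma euler_symm {n : ℕ} (hn : n + 1 < m) {i j : Fin Q.r}
    (h : F.proj j = F.cox ^ (n + 1) *ᵥ F.proj i) :
    (eulerMatrix Q + (eulerMatrix Q)ᵀ) *ᵥ (F.H n *ᵥ Pi.single i 1) =
      Pi.single i 1 - Pi.single j 1 := by
  have h1 := F.succ n
  have h2 : F.H (n + 1) = F.H n + F.cox ^ (n + 1) * F.H 0 := by
    rw [F.eq_sum hn, F.eq_sum (by omega : n < m), Finset.sum_range_succ, Matrix.add_mul]
  rw [if_pos hn, h2] at h1
  have h3 := congrArg (· *ᵥ (Pi.single i 1 : Fin Q.r → ℤ)) h1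
  simp only [mul_add, add_mulVec, one_mulVec, ← mulVec_mulVec] at h3
  rw [← proj, ← h, euler_proj] at h3
  rw [add_mulVec]
  exact eq_sub_of_add_eq ((add_right_comm _ _ _).trans h3)

lemma proj_ne (hm : 2 ≤ m) (hD : Q.IsDynkin) {n : ℕ} (hn : n + 1 < m) (i j : Fin Q.r) :
    F.proj j ≠ F.cox ^ (n + 1) *ᵥ F.proj i := by
  intro h
  have h' : F.proj i = F.cox ^ ((m - n - 2) + 1) *ᵥ F.proj j := by
    rw [h, mulVec_mulVec, ← pow_add, show m - n - 2 + 1 + (n + 1) = m by omega, F.cox_pow hm,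
      one_mulVec]
  have e1 := F.euler_symm hn h
  have e2 := F.euler_symm (by omega) h'
  set y := F.H n *ᵥ Pi.single i 1 with hy
  set y' := F.H (m - n - 2) *ᵥ Pi.single j 1 with hy'
  have e3 : (eulerMatrix Q + (eulerMatrix Q)ᵀ) *ᵥ (y + y') = 0 := by
    rw [mulVec_add, e1, e2]
    abel
  have e4 : y + y' = 0 := by
    by_contra hne
    have hp := titsFormZ_pos hD hne
    have e5 := congrArg ((y + y') ⬝ᵥ ·) e3
    simp only [dotProduct_zero] at e5
    rw [add_mulVec, dotProduct_add, mulVec_transpose, dotProduct_comm _ (_ ᵥ* _),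
      ← dotProduct_mulVec, ← titsFormZ_eq] at e5
    omega
  have hyn : 0 ≤ y := fun a => by simp [hy, F.nonneg]
  have hyn' : 0 ≤ y' := fun a => by simp [hy', F.nonneg]
  have hy0 : y = 0 := by
    funext a
    have h1 := hyn a
    have h2 := hyn' a
    have h3 := congrFun e4 a
    simp only [Pi.zero_apply, Pi.add_apply] at h1 h2 h3 ⊢
    omega
  have h0 := F.generated n i (fun a => by simpa [hy] using congrFun hy0 a) (m - 2) (by omega)
  have h1 := F.succ (m - 2)
  rw [show m - 2 + 1 = m - 1 by omega, F.eq_zero (n := m - 1) (by omega), Matrix.mul_zero, zero_add,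
    if_pos (by omega)] at h1
  have h2 := congrFun (congrFun h1 i) i
  rw [Matrix.mul_apply, Finset.sum_eq_zero fun a _ => by rw [h0 a, mul_zero], one_apply_eq] at h2
  exact zero_ne_one h2

lemma cox_pow_proj_injective_aux (hm : 2 ≤ m) (hD : Q.IsDynkin) {i j : Fin Q.r} {l l' : ℕ}
    (hl' : l' < m) (hle : l ≤ l') (h : F.cox ^ l *ᵥ F.proj j = F.cox ^ l' *ᵥ F.proj i) :
    i = j ∧ l = l' := by
  obtain ⟨n, rfl⟩ := Nat.exists_eq_add_of_le hle
  rw [pow_add, ← mulVec_mulVec] at h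
  have hu : IsUnit (F.cox ^ l) := (IsUnit.of_mul_eq_one _ F.cox_mul).pow l
  have h := mulVec_injective_of_isUnit hu h
  rcases n with - | n
  · rw [pow_zero, one_mulVec] at h
    have := congrArg (eulerMatrix Q *ᵥ ·) h
    simp only [euler_proj] at this
    exact ⟨by simpa [Pi.single_apply] using congrFun this i, rfl⟩
  · exact absurd h (F.proj_ne hm hD (by omega) i j)

include F in
lemma ncard_roots (hm : 2 ≤ m) (hD : Q.IsDynkin) (hA : Q.Acyclic) :
    {x : Fin Q.r → ℤ | Q.titsFormZ x = 1}.ncard = Q.r * m := by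
  have h : {x : Fin Q.r → ℤ | Q.titsFormZ x = 1} =
      Set.range fun p : Fin Q.r × Fin m => F.cox ^ (p.2 : ℕ) *ᵥ F.proj p.1 := by
    ext x
    constructor
    · intro hx
      obtain ⟨i, l, hl, rfl⟩ := F.exists_eq_cox_pow_proj hm hD hA hx
      exact ⟨(i, ⟨l, hl⟩), rfl⟩
    · rintro ⟨p, rfl⟩
      exact (F.titsFormZ_cox_pow _ _).trans (F.titsFormZ_proj hA _)
  rw [h, ← Nat.card_coe_set_eq, Nat.card_range_of_injective]
  · simp
  · rintro ⟨i, l⟩ ⟨j, l'⟩ h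
    rcases le_total (l : ℕ) l' with hll | hll
    · obtain ⟨h1, h2⟩ := F.cox_pow_proj_injective_aux hm hD l'.2 hll h
      exact Prod.ext h1.symm (Fin.ext h2)
    · obtain ⟨h1, h2⟩ := F.cox_pow_proj_injective_aux hm hD l.2 hll h.symm
      exact Prod.ext h1 (Fin.ext h2.symm)

end HilbertFunction

end QuiverHeisenberg

namespace QuiverHeisenberg

open Polynomial

variable {k : Type} [Field k] {Q : FinQuiver} {v : Fin Q.r → k}

section Generated

variable [FiniteDimensional k (QHAlg k Q v)]

lemma Wt.eq_zero_of_hd_eq_zero (W : Wt Q) {n : ℤ} {j : Fin Q.r} (h : ∀ i, W.hd v n i j = 0)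
    {x : QHAlg k Q v} (hx : W.comp v n x = x) (hxj : x * (taut v).E j = x) : x = 0 := by
  have h0 (i) : (taut v).E i * x = 0 := by
    have hmem : (taut v).E i * x ∈ W.corner v n i j :=
      ⟨by rw [comp_E_mul, hx], by rw [← mul_assoc, (taut v).E_mul, if_pos rfl],
        by rw [mul_assoc, hxj]⟩
    have hb : W.corner v n i j = ⊥ := Submodule.finrank_eq_zero.1 (h i)
    rwa [hb, Submodule.mem_bot] at hmem
  rw [← one_mul x, ← (taut v).E_sum, Finset.sum_mul, Finset.sum_eq_zero fun i _ => h0 i]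

lemma Wt.ori_gen_le (g : QHGen Q) : (Wt.ori Q).gen g ≤ 1 := by
  cases g <;> simp [Wt.gen, Wt.ori]

lemma hd_ori_eq_zero {n : ℕ} {j : Fin Q.r} (h : ∀ i, (Wt.ori Q).hd v n i j = 0) {n' : ℕ}
    (hn : n ≤ n') (i : Fin Q.r) : (Wt.ori Q).hd v n' i j = 0 := by
  have key (l : List (QHGen Q)) (hl : (n : ℤ) ≤ (l.map (Wt.ori Q).gen).sum) :
      word k v l * (taut v).E j = 0 := by
    have heq (l : List (QHGen Q)) (hl : (l.map (Wt.ori Q).gen).sum = n) :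
        word k v l * (taut v).E j = 0 := by
      refine (Wt.ori Q).eq_zero_of_hd_eq_zero h ?_ ?_
      · rw [Wt.comp_mul_E, Wt.comp_word, if_pos hl]
      · rw [mul_assoc, (taut v).E_mul, if_pos rfl]
    induction l with
    | nil => exact heq _ (by simp at hl ⊢; omega)
    | cons g l ih =>
      rcases le_or_gt (n : ℤ) (l.map (Wt.ori Q).gen).sum with hl' | hl'
      · rw [word_cons, mul_assoc, ih hl', mul_zero]
      · refine heq _ ?_
        have := Wt.ori_gen_le g
        rw [List.map_cons, List.sum_cons] at hl ⊢
        omega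
  have hcomp (x : QHAlg k Q v) : (Wt.ori Q).comp v n' x * (taut v).E j = 0 := by
    refine word_induction (p := fun x => (Wt.ori Q).comp v n' x * (taut v).E j = 0)
      (fun l => ?_) (by rw [map_zero, zero_mul]) (fun x y hx hy => by rw [map_add, add_mul, hx, hy,
        add_zero]) (fun c x hx => by rw [map_smul, smul_mul_assoc, hx, smul_zero]) x
    rw [Wt.comp_word]
    split_ifs with hl
    · exact key l (by rw [hl]; exact_mod_cast hn)
    · rw [zero_mul]
  have hb : (Wt.ori Q).corner v n' i j = ⊥ := by
    refine (Submodule.eq_bot_iff _).2 fun x hx => ?_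
    rw [← hx.2.2, ← hx.1, hcomp]
  rw [Wt.hd, hb, finrank_bot]

end Generated

lemma cartan_ori (i j : Fin Q.r) : (Wt.ori Q).cartan i j =
    C (eulerMatrix Q i j) + X * C (eulerMatrix Q j i) := by
  simp only [Wt.cartan, Matrix.of_apply, eulerMatrix, C_sub, map_sum, mul_sub, Finset.mul_sum,
    Fintype.sum_sum_type]
  have h1 : ∑ e : Q.Arrow, (if dsrc Q (.inl e) = i ∧ dtgt Q (.inl e) = j then
      (X : ℤ[X]) ^ ((Wt.ori Q).w (.inl e)).toNat else 0) =
      ∑ e, C (if Q.src e = i ∧ Q.tgt e = j then 1 else 0) :=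
    Finset.sum_congr rfl fun e _ => by
      change (if Q.src e = i ∧ Q.tgt e = j then (X : ℤ[X]) ^ (0 : ℤ).toNat else 0) = _
      split_ifs <;> simp
  have h2 : ∑ e : Q.Arrow, (if dsrc Q (.inr e) = i ∧ dtgt Q (.inr e) = j then
      (X : ℤ[X]) ^ ((Wt.ori Q).w (.inr e)).toNat else 0) =
      ∑ e, X * C (if Q.src e = j ∧ Q.tgt e = i then 1 else 0) :=
    Finset.sum_congr rfl fun e _ => by
      change (if Q.tgt e = i ∧ Q.src e = j then (X : ℤ[X]) ^ (1 : ℤ).toNat else 0) = _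
      simp only [and_comm (a := Q.tgt e = i)]
      split_ifs <;> simp
  have h3 : (if i = j then (1 : ℤ[X]) + X ^ (Wt.ori Q).c.toNat else 0) =
      C (if i = j then 1 else 0) + X * C (if j = i then 1 else 0) := by
    change (if i = j then (1 : ℤ[X]) + X ^ (1 : ℤ).toNat else 0) = _
    simp only [eq_comm (a := j)]
    split_ifs <;> simp
  rw [h1, h2, h3]
  ring

variable [FiniteDimensional k (QHAlg k Q v)]

/-- The Hilbert function of the orientation grading. -/
noncomputable def oriHilbertFunction {m : ℕ} (hm : 2 ≤ m)
    (h : (1 - X : ℤ[X]) • ((Wt.ori Q).cartan * (Wt.ori Q).hpoly v) = (1 - X ^ m : ℤ[X]) • 1) :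
    HilbertFunction Q m := by
  have hsum (i j : Fin Q.r) : ((Wt.ori Q).cartan * (Wt.ori Q).hpoly v) i j =
      (∑ l ∈ Finset.range m, X ^ l) * C (if i = j then 1 else 0) := by
    have h1 := congrFun (congrFun h i) j
    rw [Matrix.smul_apply, Matrix.smul_apply, smul_eq_mul, smul_eq_mul] at h1
    have hne : (1 - X : ℤ[X]) ≠ 0 := fun h0 => by
      have := congrArg (eval 0) h0
      simp at this
    refine mul_left_cancel₀ hne (h1.trans ?_)
    have h2 := geom_sum_mul (X : ℤ[X]) m
    have h3 : (1 : Matrix (Fin Q.r) (Fin Q.r) ℤ[X]) i j = C (if i = j then 1 else 0) := by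
      rw [Matrix.one_apply]
      split_ifs <;> simp
    rw [h3]
    linear_combination (C (if i = j then 1 else 0)) * h2
  have hcoeff (n : ℕ) (i j : Fin Q.r) : (((Wt.ori Q).cartan * (Wt.ori Q).hpoly v) i j).coeff n =
      if n < m then (1 : Matrix (Fin Q.r) (Fin Q.r) ℤ) i j else 0 := by
    rw [hsum, coeff_mul_C, finsetSum_coeff, Matrix.one_apply]
    simp only [coeff_X_pow, Finset.sum_ite_eq, Finset.mem_range]
    split_ifs <;> simp
  refine ⟨fun n => .of fun i j => ((Wt.ori Q).hd v n i j : ℤ), ?_, fun n => ?_, ?_, ?_, ?_⟩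
  · ext1 i j
    have h1 := hcoeff 0 i j
    rw [if_pos (by omega)] at h1
    rw [← h1, Matrix.mul_apply, Matrix.mul_apply, finsetSum_coeff]
    refine Finset.sum_congr rfl fun l _ => ?_
    rw [cartan_ori, add_mul, mul_assoc, coeff_add, coeff_C_mul, coeff_X_mul_zero, add_zero,
      Wt.coeff_hpoly, Matrix.of_apply]
  · ext1 i j
    have h1 := hcoeff (n + 1) i j
    rw [show (if n + 1 < m then (1 : Matrix (Fin Q.r) (Fin Q.r) ℤ) else 0) i j =
      if n + 1 < m then (1 : Matrix (Fin Q.r) (Fin Q.r) ℤ) i j else 0 by split_ifs <;> rfl, ← h1,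
      Matrix.add_apply, Matrix.mul_apply, Matrix.mul_apply, Matrix.mul_apply, finsetSum_coeff,
      ← Finset.sum_add_distrib]
    refine Finset.sum_congr rfl fun l _ => ?_
    rw [cartan_ori, add_mul, mul_assoc, coeff_add, coeff_C_mul, coeff_X_mul, coeff_C_mul,
      Wt.coeff_hpoly, Wt.coeff_hpoly, Matrix.of_apply, Matrix.of_apply, Matrix.transpose_apply]
  · refine ⟨(Wt.ori Q).bd v, fun n hn => ?_⟩
    ext1 i j
    rw [Matrix.of_apply, Wt.hd_of_le _ hn]
    rfl
  · intro n i j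
    rw [Matrix.of_apply]
    positivity
  · intro n j h0 n' hn i
    simp only [Matrix.of_apply, Nat.cast_eq_zero] at h0 ⊢
    exact hd_ori_eq_zero h0 hn i

end QuiverHeisenberg

namespace QuiverHeisenberg

variable {k : Type} [Field k] {Q : FinQuiver} {v : Fin Q.r → k}

lemma sum_gen_std (l : List (QHGen Q)) :
    (l.map (Wt.std Q).gen).sum = ((l.map (qhWt Q)).sum : ℕ) := by
  induction l with
  | nil => rfl
  | cons g l ih =>
    rw [List.map_cons, List.sum_cons, List.map_cons, List.sum_cons, ih, Nat.cast_add]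
    congr 1
    cases g <;> rfl

lemma mem_qhPiece {n : ℕ} {x : QHAlg k Q v} :
    x ∈ qhPiece k Q v n ↔ (Wt.std Q).comp v n x = x := by
  constructor
  · intro hx
    induction hx using Submodule.span_induction with
    | mem x h =>
      obtain ⟨l, hl, rfl⟩ := h
      change (Wt.std Q).comp v n (word k v l) = word k v l
      rw [Wt.comp_word, if_pos (by rw [sum_gen_std, hl])]
    | zero => exact map_zero _
    | add x y _ _ hx hy => rw [map_add, hx, hy]
    | smul c x _ hx => rw [map_smul, hx]
  · intro hx
    rw [← hx]
    refine word_induction (p := fun x => (Wt.std Q).comp v n x ∈ qhPiece k Q v n) (fun l => ?_)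
      (by rw [map_zero]; exact zero_mem _) (fun x y hx hy => by rw [map_add]; exact add_mem hx hy)
      (fun c x hx => by rw [map_smul]; exact Submodule.smul_mem _ _ hx) x
    rw [Wt.comp_word]
    split_ifs with h
    · exact Submodule.subset_span ⟨l, by rw [sum_gen_std] at h; exact_mod_cast h, rfl⟩
    · exact zero_mem _

lemma qhCorner_eq (n : ℕ) (i j : Fin Q.r) :
    qhCorner k Q v n i j = (Wt.std Q).corner v n i j := by
  ext y
  constructor
  · rintro ⟨x, hx, rfl⟩
    rw [SetLike.mem_coe, mem_qhPiece] at hx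
    change (taut v).E i * (x * (taut v).E j) ∈ _
    refine ⟨?_, ?_, ?_⟩
    · rw [Wt.comp_E_mul, Wt.comp_mul_E, hx]
    · rw [← mul_assoc, (taut v).E_mul, if_pos rfl]
    · rw [mul_assoc, mul_assoc, (taut v).E_mul, if_pos rfl]
  · intro hy
    refine ⟨y, mem_qhPiece.2 hy.1, ?_⟩
    change (taut v).E i * (y * (taut v).E j) = y
    rw [hy.2.2, hy.2.1]

/-- Integral polynomials as power series over a field. -/
noncomputable def toSeries (k : Type) [Field k] : Polynomial ℤ →+* PowerSeries k :=
  Polynomial.coeToPowerSeries.ringHom.comp (Polynomial.mapRingHom (Int.castRingHom k))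

lemma toSeries_X : toSeries k Polynomial.X = PowerSeries.X := by simp [toSeries]

lemma toSeries_cartan_std : (Wt.std Q).cartan.map (toSeries k) =
    1 - (PowerSeries.X : PowerSeries k) • (Q.doubleAdj.map (Nat.cast : ℕ → PowerSeries k))
      + (PowerSeries.X ^ 2 : PowerSeries k) •
        (1 : Matrix (Fin Q.r) (Fin Q.r) (PowerSeries k)) := by
  classical
  ext1 i j
  have h1 (b : DArrow Q) : ((Wt.std Q).w b).toNat = 1 := rfl
  have h2 : (Wt.std Q).c.toNat = 2 := rfl
  have h3 : ((Q.doubleAdj i j : ℕ) : PowerSeries k) =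
      (∑ e, if Q.src e = i ∧ Q.tgt e = j then 1 else 0) +
        ∑ e, if Q.tgt e = i ∧ Q.src e = j then 1 else 0 := by
    simp [FinQuiver.doubleAdj, FinQuiver.adjMatrix, Fintype.card_subtype, and_comm]
  have h4 : (∑ b : DArrow Q, if dsrc Q b = i ∧ dtgt Q b = j then
      (Polynomial.X : Polynomial ℤ) else 0) =
      (∑ e, if Q.src e = i ∧ Q.tgt e = j then Polynomial.X else 0) +
        ∑ e, if Q.tgt e = i ∧ Q.src e = j then Polynomial.X else 0 :=
    Fintype.sum_sum_type _
  simp only [Matrix.map_apply, Wt.cartan, Matrix.of_apply, h1, h2, pow_one, Matrix.add_apply,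
    Matrix.sub_apply, Matrix.smul_apply, smul_eq_mul, h3, h4, map_sub, map_add, map_sum,
    Matrix.one_apply, apply_ite (toSeries k), map_zero, map_one, map_pow, toSeries_X, mul_add,
    Finset.mul_sum, mul_ite, mul_one, mul_zero]
  split_ifs <;> ring

variable [FiniteDimensional k (QHAlg k Q v)]

lemma qhHilb_eq : qhHilb k Q v = ((Wt.std Q).hpoly v).map (toSeries k) := by
  ext i j n
  rw [Matrix.map_apply, toSeries, RingHom.comp_apply, Polynomial.coe_mapRingHom,
    Polynomial.coeToPowerSeries.ringHom_apply, Polynomial.coeff_coe, Polynomial.coeff_map,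
    Wt.coeff_hpoly, qhHilb, Matrix.of_apply, PowerSeries.coeff_mk, qhCorner_eq, Wt.hd]
  simp

lemma hpoly_mul_cartan {m : ℕ} (h : (1 - Polynomial.X ^ 2 : Polynomial ℤ) •
      ((Wt.std Q).cartan * (Wt.std Q).hpoly v) = (1 - Polynomial.X ^ (2 * m) : Polynomial ℤ) • 1) :
    (1 - Polynomial.X ^ 2 : Polynomial ℤ) • ((Wt.std Q).hpoly v * (Wt.std Q).cartan) =
      (1 - Polynomial.X ^ (2 * m) : Polynomial ℤ) • 1 := by
  have h' := congrArg Matrix.transpose h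
  rwa [Matrix.transpose_smul, Matrix.transpose_mul, cartan_std_transpose, hpoly_std_transpose,
    Matrix.transpose_smul, Matrix.transpose_one] at h'

end QuiverHeisenberg

open QuiverHeisenberg

/-- **Hilbert series of the quiver Heisenberg algebra, Dynkin case**
(Etingof–Rains in characteristic zero; here in arbitrary characteristic).
For a connected finite acyclic Dynkin quiver `Q` with Coxeter number `h` and a
regular parameter `v`, the graded pieces of `ᵛΛ(Q)` are finite dimensional and
`h_{ᵛΛ}(t)·(1 - C t + t²·1)·(1 - t²) = (1 - t^{2h})·1` in the ring of `r × r`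
matrices over `k[[t]]`; equivalently
`h_{ᵛΛ}(t) = (1 - t^{2h})/((1 - C t + t²)(1 - t²))`. -/
theorem quiver_heisenberg_hilbert_series_dynkin
    (k : Type) [Field k] (Q : FinQuiver) (hr : 0 < Q.r)
    (hconn : Q.Connected) (hacyc : Q.Acyclic) (hdynkin : Q.IsDynkin)
    (h : ℕ) (hcox : Q.IsCoxeterNumber h)
    (v : Fin Q.r → k) (hreg : IsRegularParam k Q v) :
    (∀ (n : ℕ) (i j : Fin Q.r), FiniteDimensional k (qhCorner k Q v n i j)) ∧
    qhHilb k Q v *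
      (1 - (PowerSeries.X : PowerSeries k) • (Q.doubleAdj.map (Nat.cast : ℕ → PowerSeries k))
        + (PowerSeries.X ^ 2 : PowerSeries k) •
            (1 : Matrix (Fin Q.r) (Fin Q.r) (PowerSeries k))) *
      ((1 - PowerSeries.X ^ 2 : PowerSeries k) •
            (1 : Matrix (Fin Q.r) (Fin Q.r) (PowerSeries k))) =
      (1 - PowerSeries.X ^ (2 * h) : PowerSeries k) •
        (1 : Matrix (Fin Q.r) (Fin Q.r) (PowerSeries k)) := by
  have : FiniteDimensional k (QHAlg k Q v) := finiteDimensional hdynkin hreg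
  refine ⟨fun n i j => inferInstance, ?_⟩
  obtain ⟨m, hm, hstd, hori⟩ := exists_cartan_mul_hpoly (v := v) hconn
  have hmh : m = h := by
    have := (oriHilbertFunction hm hori).ncard_roots hm hdynkin hacyc
    exact Nat.eq_of_mul_eq_mul_left hr (this.symm.trans hcox)
  have hfin := congrArg (fun A => A.map (toSeries k)) (hpoly_mul_cartan hstd)
  rw [← toSeries_cartan_std, qhHilb_eq, Matrix.mul_smul, Matrix.mul_one]
  ext1 i j
  have := congrFun (congrFun hfin i) j
  have hmul : toSeries k (((Wt.std Q).hpoly v * (Wt.std Q).cartan) i j) = _ :=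
    congrFun (congrFun (Matrix.map_mul (f := toSeries k)) i) j
  simpa [hmul, toSeries_X, hmh, apply_ite (toSeries k), Matrix.one_apply] using this
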